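/- arXiv:1610.05406 — 3 statements merged into one kernel-verified Lean document; each statement's English description precedes it below -/
import Mathlib

section
/- Let D ≥ 2 be an integer and let G be a finite simple 2-degenerate graph satisfying: (A1) the maximum degree of G is at most D + 2, and (A2) for each t ∈ {1, 2}, every vertex v with d_G(v) = D + t is adjacent to at least t vertices of degree 1. Then χ'_s(G) ≤ 5D + 1. -/
open scoped Classical

namespace StrongEC

/-- Two edges of `G` conflict for strong edge-coloring: they are distinct and either share
an endpoint or are both adjacent to a common edge of `G`. -/
def Conflict {V : Type*} (G : SimpleGraph V) (e e' : Sym2 V) : Prop :=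
  e ≠ e' ∧ ((∃ v, v ∈ e ∧ v ∈ e') ∨
    ∃ f ∈ G.edgeSet, (∃ v, v ∈ e ∧ v ∈ f) ∧ (∃ w, w ∈ e' ∧ w ∈ f))

/-- `C` is a strong edge-coloring of `G` with `k` colors. -/
def IsStrongColoring {V : Type*} (G : SimpleGraph V) {k : ℕ} (C : Sym2 V → Fin k) : Prop :=
  ∀ e ∈ G.edgeSet, ∀ e' ∈ G.edgeSet, Conflict G e e' → C e ≠ C e'

/-- `G` admits a strong `k`-edge-coloring. -/
def HasStrongColoring {V : Type*} (G : SimpleGraph V) (k : ℕ) : Prop :=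
  ∃ C : Sym2 V → Fin k, IsStrongColoring G C

/-- The strong chromatic index of `G`: the least `k` such that `G` admits a strong
`k`-edge-coloring. -/
noncomputable def strongChromaticIndex {V : Type*} (G : SimpleGraph V) : ℕ :=
  sInf {k | HasStrongColoring G k}

/-- `G` is 2-degenerate: every induced subgraph on a nonempty vertex set has a vertex of
degree at most 2 in it. -/
def TwoDegenerate {V : Type*} (G : SimpleGraph V) : Prop :=
  ∀ A : Finset V, A.Nonempty → ∃ v ∈ A, (G.neighborSet v ∩ ↑A).ncard ≤ 2

/-!
Call a neighbor light if its degree is at most 2 and heavy otherwise. Pendant edges are not treated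
one by one: all pendant edges at a vertex `a` form a single slot, the loop at `a`, which demands
`m - deg a` colors, where `deg a` counts only the non-pendant edges. Conflicts between slots only
depend on the core `K`, the graph of non-pendant edges, whose degrees are at most `D` by (A1) and
(A2).

Induct on `K`. By 2-degeneracy some `v` has a light neighbor `u` and at most two heavy neighbors.
Deleting the edges at `u` raises the demand of the loop at the other neighbor `x` of `u`, if there
is one. In a coloring of the smaller graph, discard the colors of the edges from `v` to its light
neighbors and of the loop at `v`. Then at most two colors seen by `ux` are not excluded already by
the loop at `x`, while that loop has at least three colors, so one of them can be handed over to
`ux`. Finally recolor greedily the edges from `v` to its light neighbors, then the loop at `v`, and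
last the loops at the light neighbors of `v`.
-/

open Finset Function

section Multicoloring

variable {S α : Type*} {H H' : SimpleGraph S} {w w' : S → ℕ} {k : ℕ}

/-- `F` is a multicoloring of `H` with demand `w`: every vertex `e` receives a set of `w e` colors,
and adjacent vertices receive disjoint sets. -/
structure IsMulticoloring (H : SimpleGraph S) (w : S → ℕ) (F : S → Finset α) : Prop where
  card_eq : ∀ e, #(F e) = w e
  disjoint : ∀ ⦃e e'⦄, H.Adj e e' → Disjoint (F e) (F e')

/-- `H` has a multicoloring with demand `w` from a palette of `k` colors. -/
def Multicolorable (H : SimpleGraph S) (w : S → ℕ) (k : ℕ) : Prop :=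
  ∃ F : S → Finset (Fin k), IsMulticoloring H w F

theorem multicolorable_bot (hw : ∀ e, w e ≤ k) : Multicolorable ⊥ w k := by
  have hsub (e) : ∃ s : Finset (Fin k), #s = w e := by
    obtain ⟨s, -, hs⟩ := exists_subset_card_eq (s := (univ : Finset (Fin k))) (by simpa using hw e)
    exact ⟨s, hs⟩
  choose F hF using hsub
  exact ⟨F, hF, fun _ _ h => h.elim⟩

theorem Multicolorable.mono (h : Multicolorable H w k) (hw : ∀ e, w' e ≤ w e)
    (hH : ∀ e e', w' e ≠ 0 → w' e' ≠ 0 → H'.Adj e e' → H.Adj e e') : Multicolorable H' w' k := by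
  obtain ⟨F, hF⟩ := h
  choose F' hF'F hF' using fun e => exists_subset_card_eq ((hw e).trans_eq (hF.card_eq e).symm)
  refine ⟨F', hF', fun e e' hadj => ?_⟩
  by_cases he : w' e = 0
  · simp [card_eq_zero.1 ((hF' e).trans he)]
  by_cases he' : w' e' = 0
  · simp [card_eq_zero.1 ((hF' e').trans he')]
  exact (hF.disjoint (hH e e' he he' hadj)).mono (hF'F e) (hF'F e')

theorem Multicolorable.mono_demand (h : Multicolorable H w k) (hw : ∀ e, w' e ≤ w e) :
    Multicolorable H w' k :=
  h.mono hw fun _ _ _ _ => id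

theorem IsMulticoloring.update [DecidableEq S] {F : S → Finset α} (hF : IsMulticoloring H w F)
    {e : S} {s : Finset α} (hs : ∀ e', H.Adj e e' → Disjoint s (F e')) :
    IsMulticoloring H (update w e #s) (update F e s) where
  card_eq e' := by
    rcases eq_or_ne e' e with rfl | he
    · simp
    · simp [he, hF.card_eq]
  disjoint e₁ e₂ hadj := by
    rcases eq_or_ne e₁ e with rfl | h₁
    · simpa [hadj.ne'] using hs e₂ hadj
    rcases eq_or_ne e₂ e with rfl | h₂
    · simpa [h₁] using (hs e₁ hadj.symm).symm
    · simpa [h₁, h₂] using hF.disjoint hadj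

theorem IsMulticoloring.exists_coloring [DecidableEq S] {T : Type*} [Fintype T]
    {F : S → Finset α} (hF : IsMulticoloring H w F) {φ : T → S} (hφ : ∀ s, #{t | φ t = s} ≤ w s) :
    ∃ c : T → α, ∀ t t', t ≠ t' → φ t = φ t' ∨ H.Adj (φ t) (φ t') → c t ≠ c t' := by
  have hemb (s) : Nonempty ({t // φ t = s} ↪ F s) :=
    Embedding.nonempty_of_card_le (by simpa [Fintype.card_subtype, hF.card_eq] using hφ s)
  let g (s) : {t // φ t = s} ↪ F s := (hemb s).some
  let c (t) : α := g (φ t) ⟨t, rfl⟩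
  have hc {t s} (h : φ t = s) : c t = g s ⟨t, h⟩ := by subst h; rfl
  have hcF (t) : c t ∈ F (φ t) := (g (φ t) ⟨t, rfl⟩).2
  refine ⟨c, fun t t' hne hφt heq => ?_⟩
  rcases hφt with hφt | hadj
  · rw [hc hφt, hc rfl] at heq
    exact hne (congrArg Subtype.val ((g _).injective (Subtype.ext heq)))
  · exact Finset.disjoint_left.1 (hF.disjoint hadj) (hcF t) (heq ▸ hcF t')

variable [Fintype S]

theorem Multicolorable.update_of_sum_add_le [DecidableEq S] (h : Multicolorable H w k) {e : S}
    {n : ℕ} (hn : ∑ e' ∈ H.neighborFinset e, w e' + n ≤ k) : Multicolorable H (update w e n) k := by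
  obtain ⟨F, hF⟩ := h
  set seen := (H.neighborFinset e).biUnion F
  have hseen : #seen ≤ ∑ e' ∈ H.neighborFinset e, w e' :=
    card_biUnion_le.trans_eq (sum_congr rfl fun e' _ => hF.card_eq e')
  obtain ⟨s, hs, rfl⟩ : ∃ s ⊆ seenᶜ, #s = n :=
    exists_subset_card_eq (by rw [card_compl, Fintype.card_fin]; lia)
  refine ⟨_, hF.update fun e' he' => ?_⟩
  exact (subset_compl_iff_disjoint_right.1 hs).mono_right
    (subset_biUnion_of_mem F ((H.mem_neighborFinset e e').2 he'))

theorem Multicolorable.of_indicator_compl {T : Finset S}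
    (h : Multicolorable H ((T : Set S)ᶜ.indicator w) k)
    (hT : ∀ e ∈ T, ∑ e' ∈ H.neighborFinset e, w e' + w e ≤ k) : Multicolorable H w k := by
  induction T using Finset.induction_on with
  | empty => simpa using h
  | insert e T he ih =>
    refine ih ?_ fun e' he' => hT e' (mem_insert_of_mem he')
    have hle : ∑ e' ∈ H.neighborFinset e, ((insert e T : Finset S) : Set S)ᶜ.indicator w e' ≤
        ∑ e' ∈ H.neighborFinset e, w e' :=
      sum_le_sum fun e' _ => Set.indicator_le_self _ w e'
    refine (h.update_of_sum_add_le
      ((Nat.add_le_add_right hle _).trans (hT e (mem_insert_self e T)))).mono_demand fun e' => ?_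
    rcases eq_or_ne e' e with rfl | hne
    · simpa using Set.indicator_le_self _ w e'
    · simp [Set.indicator_apply, hne]

theorem Multicolorable.move_color [DecidableEq S] (h : Multicolorable H w k) {p q : S}
    (hlt : ∑ e ∈ H.neighborFinset q with e ≠ p ∧ ¬ H.Adj p e, w e < w p) :
    Multicolorable H (update (update w p (w p - 1)) q 1) k := by
  obtain ⟨F, hF⟩ := h
  set seen := (H.neighborFinset q).filter (fun e => e ≠ p ∧ ¬ H.Adj p e) |>.biUnion F
  have hcard : #seen < #(F p) := by
    rw [hF.card_eq]
    exact (card_biUnion_le.trans_eq (sum_congr rfl fun e _ => hF.card_eq e)).trans_lt hlt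
  obtain ⟨γ, hγp, hγ⟩ := exists_mem_notMem_of_card_lt_card hcard
  have hp := hF.update (e := p) (s := (F p).erase γ) fun e he =>
    (hF.disjoint he).mono_left (erase_subset _ _)
  have hpq := hp.update (e := q) (s := {γ}) fun e he => by
    rw [disjoint_singleton_left]
    rcases eq_or_ne e p with rfl | hep
    · simp
    rw [update_of_ne hep]
    by_cases hpe : H.Adj p e
    · exact Finset.disjoint_left.1 (hF.disjoint hpe) hγp
    · exact fun hγe => hγ (mem_biUnion.2 ⟨e, by simp [he, hep, hpe], hγe⟩)
  rw [card_erase_of_mem hγp, hF.card_eq, card_singleton] at hpq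
  exact ⟨_, hpq⟩

end Multicoloring

section Slots

variable {V : Type*}

/-- The conflict graph on slots. A slot is either an edge `s(a, b)`, or the loop `s(a, a)`, which
stands for all pendant edges at `a` together. Distinct slots conflict if some vertex of one equals
or is adjacent in `K` to some vertex of the other. -/
def slotGraph (K : SimpleGraph V) : SimpleGraph (Sym2 V) where
  Adj e e' := e ≠ e' ∧ ∃ a ∈ e, ∃ b ∈ e', a = b ∨ K.Adj a b
  symm := ⟨fun _ _ ⟨hne, a, ha, b, hb, hab⟩ => ⟨hne.symm, b, hb, a, ha, hab.imp Eq.symm .symm⟩⟩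
  loopless := ⟨fun _ h => h.1 rfl⟩

variable [Fintype V] {K : SimpleGraph V} {m : ℕ} {a b : V} {e : Sym2 V}

/-- The number of colors required by each slot when every vertex `a` is given `m - deg a` pendant
edges: one for an edge of `K`, and `m - deg a` for the loop at `a`. -/
noncomputable def slotWeight (K : SimpleGraph V) (m : ℕ) : Sym2 V → ℕ :=
  Sym2.lift ⟨fun a b => if a = b then m - K.degree a else if K.Adj a b then 1 else 0, fun a b => by
    rcases eq_or_ne a b with rfl | hab
    · rfl
    · simp [hab, hab.symm, K.adj_comm]⟩

theorem slotWeight_loop (K : SimpleGraph V) (m : ℕ) (a : V) :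
    slotWeight K m s(a, a) = m - K.degree a := by
  simp [slotWeight]

theorem slotWeight_of_ne (hab : a ≠ b) : slotWeight K m s(a, b) = if K.Adj a b then 1 else 0 := by
  simp [slotWeight, hab]

theorem slotWeight_of_adj (hab : K.Adj a b) : slotWeight K m s(a, b) = 1 := by
  rw [slotWeight_of_ne hab.ne, if_pos hab]

theorem slotWeight_of_not_adj (hab : a ≠ b) (hK : ¬ K.Adj a b) : slotWeight K m s(a, b) = 0 := by
  rw [slotWeight_of_ne hab, if_neg hK]

theorem sum_erase_slotWeight (K : SimpleGraph V) (m : ℕ) (a : V) :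
    ∑ b ∈ univ.erase a, slotWeight K m s(a, b) = K.degree a := by
  rw [sum_congr rfl fun b hb => slotWeight_of_ne (ne_of_mem_erase hb).symm, sum_boole,
    ← K.card_neighborFinset_eq_degree, Nat.cast_id]
  congr 1
  ext b
  simpa using fun h : K.Adj a b => h.ne'

theorem sum_slotWeight (ha : K.degree a ≤ m) : ∑ b, slotWeight K m s(a, b) = m := by
  rw [← sum_erase_add _ _ (mem_univ a), sum_erase_slotWeight, slotWeight_loop]
  lia

theorem sum_le_degree_of_loop_eq_zero {w : Sym2 V → ℕ} (hw : ∀ e, w e ≤ slotWeight K m e)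
    (ha : w s(a, a) = 0) : ∑ b, w s(a, b) ≤ K.degree a := by
  rw [← sum_erase_add _ _ (mem_univ a), ha, add_zero]
  exact (sum_le_sum fun b _ => hw _).trans_eq (sum_erase_slotWeight K m a)

/-- Slots of weight zero do not matter; every other neighbor of the slot `e` contains a vertex
of `M`. -/
theorem sum_neighborFinset_slotGraph_le {w : Sym2 V → ℕ} {M : Finset V}
    (hw : ∀ a b, a ≠ b → ¬ K.Adj a b → w s(a, b) = 0)
    (hloop : ∀ a ∈ e, s(a, a) ≠ e → w s(a, a) = 0)
    (hM : ∀ a ∈ e, ∀ c ∉ e, K.Adj a c → c ∈ M) :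
    ∑ e' ∈ (slotGraph K).neighborFinset e, w e' ≤ ∑ c ∈ M, ∑ d, w s(c, d) := by
  have hmeet : ∀ e', (slotGraph K).Adj e e' → w e' ≠ 0 → ∃ c ∈ M, c ∈ e' := by
    rintro e' ⟨hne, a, ha, b, hb, hab⟩ hwe'
    by_cases hbe : b ∈ e
    · obtain ⟨d, rfl⟩ := Sym2.mem_iff_exists.1 hb
      have hbd : b ≠ d := by
        rintro rfl
        exact hwe' (hloop b hbe hne.symm)
      have hde : d ∉ e := fun hde => hne ((Sym2.mem_and_mem_iff hbd).1 ⟨hbe, hde⟩)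
      have hadj : K.Adj b d := by_contra fun h => hwe' (hw b d hbd h)
      exact ⟨d, hM b hbe d hde hadj, Sym2.mem_mk_right b d⟩
    · exact ⟨b, hM a ha b hbe (hab.resolve_left fun h => hbe (h ▸ ha)), hb⟩
  calc ∑ e' ∈ (slotGraph K).neighborFinset e, w e'
      ≤ ∑ e' ∈ (M ×ˢ univ).image (fun p : V × V => s(p.1, p.2)), w e' := by
        refine sum_le_sum_of_ne_zero fun e' he' hwe' => ?_
        obtain ⟨c, hc, hce'⟩ := hmeet e' (((slotGraph K).mem_neighborFinset _ _).1 he') hwe'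
        obtain ⟨d, rfl⟩ := Sym2.mem_iff_exists.1 hce'
        exact mem_image.2 ⟨(c, d), by simpa using hc, rfl⟩
    _ ≤ ∑ p ∈ M ×ˢ univ, w s(p.1, p.2) := sum_image_le_of_nonneg fun _ _ => Nat.zero_le _
    _ = ∑ c ∈ M, ∑ d, w s(c, d) := sum_product _ _ _

end Slots

section Coloring

variable {V : Type*} [Fintype V] {K : SimpleGraph V} {D m k : ℕ} {u v x : V}

/-- The neighbors of `v` of degree at most 2. -/
noncomputable def lightNeighborFinset (K : SimpleGraph V) (v : V) : Finset V :=
  {u ∈ K.neighborFinset v | K.degree u ≤ 2}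

/-- The neighbors of `v` of degree at least 3. -/
noncomputable def heavyNeighborFinset (K : SimpleGraph V) (v : V) : Finset V :=
  {u ∈ K.neighborFinset v | ¬ K.degree u ≤ 2}

theorem mem_lightNeighborFinset :
    u ∈ lightNeighborFinset K v ↔ K.Adj v u ∧ K.degree u ≤ 2 := by
  simp [lightNeighborFinset]

theorem mem_heavyNeighborFinset :
    u ∈ heavyNeighborFinset K v ↔ K.Adj v u ∧ ¬ K.degree u ≤ 2 := by
  simp [heavyNeighborFinset]

/-- The loops at the light neighbors of `v`. -/
noncomputable def lightLoops (K : SimpleGraph V) (v : V) : Finset (Sym2 V) :=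
  (lightNeighborFinset K v).image Sym2.diag

/-- The edges from `v` to its light neighbors. -/
noncomputable def lightEdges (K : SimpleGraph V) (v : V) : Finset (Sym2 V) :=
  (lightNeighborFinset K v).image fun u => s(v, u)

theorem card_erase_neighborFinset_add_one (huv : K.Adj v u) :
    #((K.neighborFinset v).erase u) + 1 = K.degree v := by
  rw [← K.card_neighborFinset_eq_degree]
  exact card_erase_add_one ((K.mem_neighborFinset v u).2 huv)

theorem sum_sum_add_four_le {w : Sym2 V → ℕ} {A : Finset V} (hm : 2 ≤ m)
    (hdeg : ∀ a, K.degree a ≤ m) (hv : #(heavyNeighborFinset K v) ≤ 2)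
    (hw : ∀ e, w e ≤ slotWeight K m e) (hloop : ∀ b ∈ lightNeighborFinset K v, w s(b, b) = 0)
    (hA : A ⊆ K.neighborFinset v) : ∑ b ∈ A, ∑ c, w s(b, c) + 4 ≤ 2 * #A + 2 * m := by
  have hb (b) (hb : b ∈ A) :
      ∑ c, w s(b, c) ≤ 2 + if b ∈ heavyNeighborFinset K v then m - 2 else 0 := by
    have hvb : K.Adj v b := (K.mem_neighborFinset v b).1 (hA hb)
    by_cases hlight : K.degree b ≤ 2
    · have := sum_le_degree_of_loop_eq_zero hw
        (hloop b (mem_lightNeighborFinset.2 ⟨hvb, hlight⟩))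
      lia
    · rw [if_pos (mem_heavyNeighborFinset.2 ⟨hvb, hlight⟩), Nat.add_sub_cancel' hm]
      exact (sum_le_sum fun c _ => hw _).trans_eq (sum_slotWeight (hdeg b))
  have hheavy : #{b ∈ A | b ∈ heavyNeighborFinset K v} * (m - 2) ≤ 2 * (m - 2) :=
    Nat.mul_le_mul_right _ ((card_le_card fun b hb => (mem_filter.1 hb).2).trans hv)
  have hsum := sum_le_sum hb
  rw [sum_add_distrib, ← sum_filter, sum_const, sum_const, smul_eq_mul, smul_eq_mul] at hsum
  lia

theorem Multicolorable.of_lightLoops (hk : 3 * m ≤ k + 2) (hdeg : ∀ a, K.degree a ≤ m)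
    (h : Multicolorable (slotGraph K)
      ((lightLoops K v : Set (Sym2 V))ᶜ.indicator (slotWeight K m)) k) :
    Multicolorable (slotGraph K) (slotWeight K m) k := by
  refine h.of_indicator_compl fun e he => ?_
  obtain ⟨u, hu, rfl⟩ := mem_image.1 he
  have hle : ∑ e' ∈ (slotGraph K).neighborFinset s(u, u), slotWeight K m e' ≤
      ∑ c ∈ K.neighborFinset u, ∑ d, slotWeight K m s(c, d) :=
    sum_neighborFinset_slotGraph_le (fun _ _ => slotWeight_of_not_adj) (by simp) (by simp)
  rw [sum_congr rfl fun c _ => sum_slotWeight (hdeg c), sum_const, smul_eq_mul,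
    K.card_neighborFinset_eq_degree] at hle
  change ∑ e' ∈ (slotGraph K).neighborFinset s(u, u), slotWeight K m e' + slotWeight K m s(u, u) ≤ k
  rw [slotWeight_loop]
  have hu := (mem_lightNeighborFinset.1 hu).2
  have hum := hdeg u
  interval_cases K.degree u <;> lia

theorem Multicolorable.of_loop (hk : D + 3 * m ≤ k + 4) (hm : 2 ≤ m) (hD : D ≤ m)
    (hdeg : ∀ a, K.degree a ≤ D) (hv : #(heavyNeighborFinset K v) ≤ 2) {w : Sym2 V → ℕ}
    (hw : ∀ e, w e ≤ slotWeight K m e) (hloop : ∀ b ∈ lightNeighborFinset K v, w s(b, b) = 0)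
    (h : Multicolorable (slotGraph K) (({s(v, v)} : Set (Sym2 V))ᶜ.indicator w) k) :
    Multicolorable (slotGraph K) w k := by
  rw [← coe_singleton] at h
  refine h.of_indicator_compl fun e he => ?_
  obtain rfl := mem_singleton.1 he
  have hle : ∑ e' ∈ (slotGraph K).neighborFinset s(v, v), w e' ≤
      ∑ c ∈ K.neighborFinset v, ∑ d, w s(c, d) :=
    sum_neighborFinset_slotGraph_le
      (fun _ _ hab hK => Nat.eq_zero_of_le_zero ((hw _).trans_eq (slotWeight_of_not_adj hab hK)))
      (by simp) (by simp)
  have hsum := sum_sum_add_four_le hm (fun a => (hdeg a).trans hD) hv hw hloop subset_rfl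
  rw [K.card_neighborFinset_eq_degree] at hsum
  have hwv := hw s(v, v)
  rw [slotWeight_loop] at hwv
  have := hdeg v
  lia

theorem Multicolorable.of_lightEdges (hk : 2 * D + 3 * m ≤ k + 5) (hm : 2 ≤ m) (hD : D ≤ m)
    (hdeg : ∀ a, K.degree a ≤ D) (hv : #(heavyNeighborFinset K v) ≤ 2) {w : Sym2 V → ℕ}
    (hw : ∀ e, w e ≤ slotWeight K m e) (hloop : ∀ b ∈ lightNeighborFinset K v, w s(b, b) = 0)
    (hwv : w s(v, v) = 0)
    (h : Multicolorable (slotGraph K) ((lightEdges K v : Set (Sym2 V))ᶜ.indicator w) k) :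
    Multicolorable (slotGraph K) w k := by
  refine h.of_indicator_compl fun e he => ?_
  obtain ⟨u, hu, rfl⟩ := mem_image.1 he
  obtain ⟨hvu, hu2⟩ := mem_lightNeighborFinset.1 hu
  set A := (K.neighborFinset v).erase u
  set B := (K.neighborFinset u).erase v
  have hle : ∑ e' ∈ (slotGraph K).neighborFinset s(v, u), w e' ≤
      ∑ c ∈ A ∪ B, ∑ d, w s(c, d) := by
    refine sum_neighborFinset_slotGraph_le
      (fun _ _ hab hK => Nat.eq_zero_of_le_zero ((hw _).trans_eq (slotWeight_of_not_adj hab hK)))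
      ?_ ?_
    · simp [hwv, hloop u hu]
    · simp only [Sym2.mem_iff]
      rintro a (rfl | rfl) c hc hac <;> simp_all [A, B]
  have hunion : ∑ c ∈ A ∪ B, ∑ d, w s(c, d) ≤ ∑ c ∈ A, ∑ d, w s(c, d) + ∑ c ∈ B, ∑ d, w s(c, d) :=
    (Nat.le_add_right _ _).trans_eq sum_union_inter
  have hsumA := sum_sum_add_four_le hm (fun a => (hdeg a).trans hD) hv hw hloop
    (erase_subset u (K.neighborFinset v))
  have hsumB : ∑ c ∈ B, ∑ d, w s(c, d) ≤ #B * m := sum_le_card_nsmul _ _ _ fun c _ =>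
    (sum_le_sum fun d _ => hw _).trans_eq (sum_slotWeight ((hdeg c).trans hD))
  have hA := card_erase_neighborFinset_add_one hvu
  have hB := card_erase_neighborFinset_add_one hvu.symm
  have hBm : #B * m ≤ 1 * m := Nat.mul_le_mul_right m (by lia)
  have hwe := (hw s(v, u)).trans_eq (slotWeight_of_adj hvu)
  have := hdeg v
  lia

/-- The slots whose colors are discarded and chosen anew in the induction step. -/
noncomputable def recoloredSlots (K : SimpleGraph V) (v : V) : Finset (Sym2 V) :=
  lightEdges K v ∪ ({s(v, v)} ∪ lightLoops K v)

theorem Multicolorable.of_recoloredSlots (hD : 2 ≤ D) (hDm : D ≤ m) (hk : 2 * D + 3 * m ≤ k + 5)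
    (hdeg : ∀ a, K.degree a ≤ D) (hv : #(heavyNeighborFinset K v) ≤ 2)
    (h : Multicolorable (slotGraph K)
      ((recoloredSlots K v : Set (Sym2 V))ᶜ.indicator (slotWeight K m)) k) :
    Multicolorable (slotGraph K) (slotWeight K m) k := by
  simp only [recoloredSlots, coe_union, Set.compl_union, ← Set.indicator_indicator, coe_singleton]
    at h
  have hw (e) : (lightLoops K v : Set (Sym2 V))ᶜ.indicator (slotWeight K m) e ≤ slotWeight K m e :=
    Set.indicator_le_self _ _ e
  have hloop (b) (hb : b ∈ lightNeighborFinset K v) :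
      (lightLoops K v : Set (Sym2 V))ᶜ.indicator (slotWeight K m) s(b, b) = 0 :=
    Set.indicator_of_notMem (not_not.2 (mem_coe.2 (mem_image_of_mem Sym2.diag hb))) _
  apply Multicolorable.of_lightLoops (v := v) (by lia) fun a => (hdeg a).trans hDm
  apply Multicolorable.of_loop (v := v) (by lia) (by lia) hDm hdeg hv hw hloop
  refine h.of_lightEdges hk (by lia) hDm hdeg hv
    (fun e => (Set.indicator_le_self _ _ e).trans (hw e)) (fun b hb => ?_) (by simp)
  exact Nat.eq_zero_of_le_zero ((Set.indicator_le_self _ _ _).trans_eq (hloop b hb))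

theorem slotWeight_loop_anti {K' : SimpleGraph V} (hK : K' ≤ K) (a : V) :
    slotWeight K m s(a, a) ≤ slotWeight K' m s(a, a) := by
  rw [slotWeight_loop, slotWeight_loop]
  exact Nat.sub_le_sub_left (SimpleGraph.degree_le_of_le hK) m

theorem slotWeight_le_deleteIncidenceSet {e : Sym2 V} (he : u ∉ e) :
    slotWeight K m e ≤ slotWeight (K.deleteIncidenceSet u) m e := by
  induction e with | _ a b
  rcases eq_or_ne a b with rfl | hab
  · exact slotWeight_loop_anti (K.deleteIncidenceSet_le u) a
  · rw [slotWeight_of_ne hab, slotWeight_of_ne hab]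
    simp only [Sym2.mem_iff, not_or] at he
    simp [SimpleGraph.deleteIncidenceSet_adj, Ne.symm he.1, Ne.symm he.2]

theorem degree_deleteIncidenceSet_add_one (hux : K.Adj u x) :
    (K.deleteIncidenceSet u).degree x + 1 = K.degree x := by
  rw [← card_erase_neighborFinset_add_one hux.symm, ← SimpleGraph.card_neighborFinset_eq_degree]
  congr 2
  ext a
  simp only [SimpleGraph.mem_neighborFinset, SimpleGraph.deleteIncidenceSet_adj, mem_erase]
  grind [hux.ne']

theorem slotWeight_loop_deleteIncidenceSet (hux : K.Adj u x) :
    slotWeight (K.deleteIncidenceSet u) m s(x, x) = m + 1 - K.degree x := by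
  rw [slotWeight_loop, ← degree_deleteIncidenceSet_add_one hux, Nat.add_sub_add_right]
  congr!

/-- The slots that lose their colors when the coloring of `K.deleteIncidenceSet u` is turned into
one of `K`: those at `u`, and those at `v` other than the edges to heavy neighbors. -/
def discardedSlots (K : SimpleGraph V) (u v : V) : Set (Sym2 V) :=
  {e | u ∈ e ∨ ∃ b ∉ heavyNeighborFinset K v, e = s(v, b)}

theorem Multicolorable.of_deleteIncidenceSet
    (h : Multicolorable (slotGraph (K.deleteIncidenceSet u))
      (slotWeight (K.deleteIncidenceSet u) m) k) :
    Multicolorable (slotGraph K)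
      ((discardedSlots K u v)ᶜ.indicator (slotWeight (K.deleteIncidenceSet u) m)) k := by
  refine h.mono (fun e => Set.indicator_le_self _ _ e) fun e e' he he' hadj => ?_
  have hu {e : Sym2 V} (he : (discardedSlots K u v)ᶜ.indicator
      (slotWeight (K.deleteIncidenceSet u) m) e ≠ 0) : u ∉ e :=
    fun hue => Set.mem_of_indicator_ne_zero he (Or.inl hue)
  obtain ⟨hne, a, ha, b, hb, hab⟩ := hadj
  refine ⟨hne, a, ha, b, hb, hab.imp_right fun hK => ?_⟩
  exact SimpleGraph.deleteIncidenceSet_adj.2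
    ⟨hK, ne_of_mem_of_not_mem ha (hu he), ne_of_mem_of_not_mem hb (hu he')⟩

theorem indicator_recoloredSlots_le (hu : u ∈ lightNeighborFinset K v)
    (hux : ∀ y, K.Adj u y → y = v ∨ y = x) {e : Sym2 V} (he : e ≠ s(u, x)) :
    (recoloredSlots K v : Set (Sym2 V))ᶜ.indicator (slotWeight K m) e ≤
      (discardedSlots K u v)ᶜ.indicator (slotWeight (K.deleteIncidenceSet u) m) e := by
  by_cases hZ : e ∈ recoloredSlots K v
  · simp [hZ]
  rw [Set.indicator_of_mem (by simpa using hZ)]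
  simp only [recoloredSlots, lightEdges, lightLoops, mem_union, mem_image, mem_singleton,
    not_or, not_exists, not_and] at hZ
  obtain ⟨hZedge, hZv, hZloop⟩ := hZ
  by_cases hY : e ∈ discardedSlots K u v
  · refine (Nat.eq_zero_of_le_zero ?_).le.trans (Nat.zero_le _)
    rcases hY with hue | ⟨b, hb, rfl⟩
    · obtain ⟨b, rfl⟩ := Sym2.mem_iff_exists.1 hue
      refine (slotWeight_of_not_adj ?_ fun hub => ?_).le
      · rintro rfl
        exact hZloop u hu rfl
      · rcases hux b hub with rfl | rfl
        · exact hZedge u hu Sym2.eq_swap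
        · exact he rfl
    · refine (slotWeight_of_not_adj ?_ fun hvb => ?_).le
      · rintro rfl
        exact hZv rfl
      · rw [mem_heavyNeighborFinset, not_and_not_right] at hb
        exact hZedge b (mem_lightNeighborFinset.2 ⟨hvb, hb hvb⟩) rfl
  · rw [Set.indicator_of_mem hY]
    exact slotWeight_le_deleteIncidenceSet fun hue => hY (Or.inl hue)

theorem Multicolorable.of_deleteIncidenceSet_of_forall_adj_eq
    (hu : u ∈ lightNeighborFinset K v) (huv : ∀ y, K.Adj u y → y = v)
    (h : Multicolorable (slotGraph (K.deleteIncidenceSet u))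
      (slotWeight (K.deleteIncidenceSet u) m) k) :
    Multicolorable (slotGraph K)
      ((recoloredSlots K v : Set (Sym2 V))ᶜ.indicator (slotWeight K m)) k := by
  refine (h.of_deleteIncidenceSet (v := v)).mono_demand fun e => ?_
  by_cases he : e = s(u, v)
  · have : e ∈ recoloredSlots K v :=
      mem_union_left _ (mem_image.2 ⟨u, hu, he ▸ Sym2.eq_swap⟩)
    simp [this]
  · exact indicator_recoloredSlots_le hu (fun y hy => Or.inl (huv y hy)) he

/-- After the deletion, the edge `s(u, x)` is a pendant edge at `x`, so it can take over one of the
colors of the loop at `x`; only the edges from `v` to its heavy neighbors obstruct this. -/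
theorem sum_neighborFinset_slotGraph_lt (hDm : D + 2 ≤ m) (hdeg : K.degree x ≤ D)
    (hv : #(heavyNeighborFinset K v) ≤ 2) (hux : K.Adj u x)
    (huvx : ∀ y, K.Adj u y → y = v ∨ y = x) :
    ∑ e ∈ (slotGraph K).neighborFinset s(u, x) with
        e ≠ s(x, x) ∧ ¬ (slotGraph K).Adj s(x, x) e,
      (discardedSlots K u v)ᶜ.indicator (slotWeight (K.deleteIncidenceSet u) m) e <
    slotWeight (K.deleteIncidenceSet u) m s(x, x) := by
  set w := (discardedSlots K u v)ᶜ.indicator (slotWeight (K.deleteIncidenceSet u) m)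
  have hfree {e b} (hxe : e ≠ s(x, x) ∧ ¬ (slotGraph K).Adj s(x, x) e) (hb : b ∈ e) :
      ¬ (x = b ∨ K.Adj x b) := fun hxb =>
    hxe.2 ⟨hxe.1.symm, x, Sym2.mem_mk_left x x, b, hb, hxb⟩
  have hblock (e) (he : e ∈ (slotGraph K).neighborFinset s(u, x) ∧ e ≠ s(x, x) ∧
      ¬ (slotGraph K).Adj s(x, x) e) (hwe : w e ≠ 0) :
      e ∈ (heavyNeighborFinset K v).image fun c => s(v, c) := by
    obtain ⟨hadj, hxe⟩ := he
    obtain ⟨-, a, ha, b, hb, hab⟩ := ((slotGraph K).mem_neighborFinset _ _).1 hadj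
    have hY := Set.mem_of_indicator_ne_zero hwe
    have hbv : b = v := by
      rcases Sym2.mem_iff.1 ha with rfl | rfl
      · rcases hab with rfl | hab
        · exact absurd (Or.inl hb) hY
        · exact (huvx b hab).resolve_right fun h => hfree hxe hb (Or.inl h.symm)
      · exact absurd hab (hfree hxe hb)
    subst hbv
    obtain ⟨c, rfl⟩ := Sym2.mem_iff_exists.1 hb
    exact mem_image_of_mem _ (not_not.1 fun hc => hY (Or.inr ⟨c, hc, rfl⟩))
  have hw1 (e) (he : e ∈ (heavyNeighborFinset K v).image fun c => s(v, c)) : w e ≤ 1 := by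
    obtain ⟨c, hc, rfl⟩ := mem_image.1 he
    have hvc := (mem_heavyNeighborFinset.1 hc).1.ne
    refine (Set.indicator_le_self _ _ _).trans ?_
    rw [slotWeight_of_ne hvc]
    split_ifs <;> simp
  calc _ ≤ ∑ e ∈ (heavyNeighborFinset K v).image fun c => s(v, c), w e :=
        sum_le_sum_of_ne_zero fun e he => hblock e (mem_filter.1 he)
    _ ≤ #((heavyNeighborFinset K v).image fun c => s(v, c)) * 1 := sum_le_card_nsmul _ _ _ hw1
    _ ≤ 2 := by simpa using card_image_le.trans hv
    _ < _ := by rw [slotWeight_loop_deleteIncidenceSet hux]; lia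

theorem Multicolorable.of_deleteIncidenceSet_of_adj (hDm : D + 2 ≤ m) (hdeg : K.degree x ≤ D)
    (hv : #(heavyNeighborFinset K v) ≤ 2) (hu : u ∈ lightNeighborFinset K v) (hux : K.Adj u x)
    (hxv : x ≠ v) (huvx : ∀ y, K.Adj u y → y = v ∨ y = x)
    (h : Multicolorable (slotGraph (K.deleteIncidenceSet u))
      (slotWeight (K.deleteIncidenceSet u) m) k) :
    Multicolorable (slotGraph K)
      ((recoloredSlots K v : Set (Sym2 V))ᶜ.indicator (slotWeight K m)) k := by
  have hxx : s(x, x) ∈ (discardedSlots K u v)ᶜ := by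
    simp [discardedSlots, hux.ne, hxv]
  have hmove := (h.of_deleteIncidenceSet (v := v)).move_color (p := s(x, x)) (q := s(u, x)) <| by
    rw [Set.indicator_of_mem hxx]
    exact sum_neighborFinset_slotGraph_lt hDm hdeg hv hux huvx
  refine hmove.mono_demand fun e => ?_
  rcases eq_or_ne e s(u, x) with rfl | he
  · rw [update_self]
    exact (Set.indicator_le_self _ _ _).trans (slotWeight_of_adj hux).le
  rw [update_of_ne he]
  rcases eq_or_ne e s(x, x) with rfl | hex
  · rw [update_self, Set.indicator_of_mem hxx, slotWeight_loop_deleteIncidenceSet hux]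
    refine (Set.indicator_le_self _ _ _).trans ?_
    rw [slotWeight_loop]
    lia
  · rw [update_of_ne hex]
    exact indicator_recoloredSlots_le hu huvx he

theorem TwoDegenerate.mono {V : Type*} {K K' : SimpleGraph V} (h : TwoDegenerate K)
    (hK : K' ≤ K) : TwoDegenerate K' := fun A hA => by
  obtain ⟨v, hv, hcard⟩ := h A hA
  refine ⟨v, hv, (Set.ncard_le_ncard ?_ (A.finite_toSet.inter_of_right _)).trans hcard⟩
  exact Set.inter_subset_inter_left _ fun _ => @hK _ _

theorem TwoDegenerate.exists_card_heavyNeighborFinset_le (h : TwoDegenerate K) {a b : V}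
    (hab : K.Adj a b) :
    ∃ v, (lightNeighborFinset K v).Nonempty ∧ #(heavyNeighborFinset K v) ≤ 2 := by
  by_cases hA : (univ.filter fun v => ¬ K.degree v ≤ 2).Nonempty
  · obtain ⟨v, hv, hcard⟩ := h _ hA
    have hheavy : #(heavyNeighborFinset K v) ≤ 2 := by
      rw [← Set.ncard_coe_finset]
      convert hcard using 2
      ext u
      simp [heavyNeighborFinset]
    have hsplit := card_filter_add_card_filter_not (s := K.neighborFinset v) (K.degree · ≤ 2)
    rw [K.card_neighborFinset_eq_degree] at hsplit
    refine ⟨v, card_pos.1 ?_, hheavy⟩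
    rw [lightNeighborFinset]
    rw [heavyNeighborFinset] at hheavy
    have := (mem_filter.1 hv).2
    lia
  · simp only [not_nonempty_iff_eq_empty, filter_eq_empty_iff, mem_univ, not_not,
      true_imp_iff] at hA
    exact ⟨a, ⟨b, mem_lightNeighborFinset.2 ⟨hab, @hA b⟩⟩, by simp [heavyNeighborFinset, hA]⟩

theorem eq_or_eq_of_mem_lightNeighborFinset (hu : u ∈ lightNeighborFinset K v) (hux : K.Adj u x)
    (hxv : x ≠ v) {y : V} (huy : K.Adj u y) : y = v ∨ y = x := by
  obtain ⟨hvu, hu2⟩ := mem_lightNeighborFinset.1 hu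
  have hcard := card_erase_neighborFinset_add_one hvu.symm
  have hle : #((K.neighborFinset u).erase v) ≤ 1 := by lia
  refine or_iff_not_imp_left.2 fun hyv => ?_
  exact card_le_one.1 hle y (by simp [hyv, huy]) x (by simp [hxv, hux])

theorem multicolorable_slotGraph_bot (hm : m ≤ k) :
    Multicolorable (slotGraph (⊥ : SimpleGraph V)) (slotWeight ⊥ m) k := by
  have hloop {a b : V} (hab : slotWeight (⊥ : SimpleGraph V) m s(a, b) ≠ 0) : a = b :=
    by_contra fun h => hab (slotWeight_of_not_adj h id)
  refine (multicolorable_bot (w := fun _ => m) fun _ => hm).mono (fun e => ?_) ?_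
  · induction e with | _ a b
    by_cases hab : a = b
    · subst hab
      exact (slotWeight_loop _ m a).trans_le (Nat.sub_le _ _)
    · exact (slotWeight_of_not_adj hab id).trans_le (Nat.zero_le _)
  · rintro e e' he he' ⟨hne, a, ha, b, hb, hab⟩
    obtain ⟨c, rfl⟩ := Sym2.mem_iff_exists.1 ha
    obtain ⟨d, rfl⟩ := Sym2.mem_iff_exists.1 hb
    obtain rfl := hab.resolve_right id
    exact (hne (by rw [← hloop he, ← hloop he'])).elim

theorem TwoDegenerate.multicolorable_slotGraph (hD : 2 ≤ D) (hDm : D + 2 ≤ m)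
    (hk : 2 * D + 3 * m ≤ k + 5) (h2 : TwoDegenerate K) (hdeg : ∀ a, K.degree a ≤ D) :
    Multicolorable (slotGraph K) (slotWeight K m) k := by
  induction K using WellFoundedLT.induction with
  | ind K ih =>
  rcases eq_or_ne K ⊥ with rfl | hK
  · exact multicolorable_slotGraph_bot (by lia)
  obtain ⟨a, b, hab⟩ := SimpleGraph.ne_bot_iff_exists_adj.1 hK
  obtain ⟨v, ⟨u, hu⟩, hv⟩ := h2.exists_card_heavyNeighborFinset_le hab
  have hlt : K.deleteIncidenceSet u < K := by
    refine (K.deleteIncidenceSet_le u).lt_of_ne fun heq => ?_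
    have hvu := (mem_lightNeighborFinset.1 hu).1
    rw [← heq] at hvu
    exact (SimpleGraph.deleteIncidenceSet_adj.1 hvu).2.2 rfl
  have ih_of_lt {K'} (hlt : K' < K) : Multicolorable (slotGraph K') (slotWeight K' m) k :=
    ih K' hlt (h2.mono hlt.le) fun a => (SimpleGraph.degree_le_of_le hlt.le).trans (hdeg a)
  have hcol := ih_of_lt hlt
  apply Multicolorable.of_recoloredSlots (v := v) hD (by lia) hk hdeg hv
  by_cases huv : ∀ y, K.Adj u y → y = v
  · exact hcol.of_deleteIncidenceSet_of_forall_adj_eq hu huv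
  · push Not at huv
    obtain ⟨x, hux, hxv⟩ := huv
    exact hcol.of_deleteIncidenceSet_of_adj hDm (hdeg x) hv hu hux hxv fun y =>
      eq_or_eq_of_mem_lightNeighborFinset hu hux hxv

end Coloring

section Core

variable {V : Type*} [Fintype V] {G : SimpleGraph V} {m : ℕ}

/-- The core of `G`: the spanning subgraph of the edges that have no end of degree 1. -/
def core (G : SimpleGraph V) : SimpleGraph V where
  Adj a b := G.Adj a b ∧ G.degree a ≠ 1 ∧ G.degree b ≠ 1
  symm := ⟨fun _ _ h => ⟨h.1.symm, h.2.2, h.2.1⟩⟩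
  loopless := ⟨fun _ h => h.1.ne rfl⟩

theorem core_le (G : SimpleGraph V) : core G ≤ G :=
  fun _ _ h => h.1

theorem degree_core_add_card_filter_le (G : SimpleGraph V) (v : V) :
    (core G).degree v + #{u ∈ G.neighborFinset v | G.degree u = 1} ≤ G.degree v := by
  rw [← G.card_neighborFinset_eq_degree v, ← (core G).card_neighborFinset_eq_degree v,
    ← card_filter_add_card_filter_not (s := G.neighborFinset v) (G.degree · = 1), add_comm]
  refine Nat.add_le_add_left (card_le_card fun u hu => ?_) _
  obtain ⟨hvu, -, hu⟩ := ((core G).mem_neighborFinset v u).1 hu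
  exact mem_filter.2 ⟨(G.mem_neighborFinset v u).2 hvu, hu⟩

theorem degree_core_le {D n : ℕ} (hA1 : G.maxDegree ≤ D + n)
    (hA2 : ∀ t ∈ Icc 1 n, ∀ v : V, G.degree v = D + t →
      t ≤ #{u ∈ G.neighborFinset v | G.degree u = 1}) (v : V) : (core G).degree v ≤ D := by
  have hcore := degree_core_add_card_filter_le G v
  have hmax := (G.degree_le_maxDegree v).trans hA1
  by_cases hv : G.degree v ≤ D
  · lia
  · have := hA2 (G.degree v - D) (mem_Icc.2 (by lia)) v (by lia)
    lia

theorem degree_ne_one_of_mem_of_mem {e e' : Sym2 V} (he : e ∈ G.edgeSet) (he' : e' ∈ G.edgeSet)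
    (hne : e ≠ e') {a : V} (ha : a ∈ e) (ha' : a ∈ e') : G.degree a ≠ 1 := by
  obtain ⟨b, rfl⟩ := Sym2.mem_iff_exists.1 ha
  obtain ⟨c, rfl⟩ := Sym2.mem_iff_exists.1 ha'
  exact fun hdeg => hne <| congrArg _ <|
    (SimpleGraph.degree_eq_one_iff_existsUnique_adj.1 hdeg).unique he he'

theorem Conflict.exists_degree_ne_one {e e' : Sym2 V} (he : e ∈ G.edgeSet) (he' : e' ∈ G.edgeSet)
    (h : Conflict G e e') :
    ∃ a ∈ e, ∃ b ∈ e', G.degree a ≠ 1 ∧ G.degree b ≠ 1 ∧ (a = b ∨ G.Adj a b) := by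
  obtain ⟨hne, hconf⟩ := h
  by_cases hshare : ∃ a, a ∈ e ∧ a ∈ e'
  · obtain ⟨a, ha, ha'⟩ := hshare
    have hdeg := degree_ne_one_of_mem_of_mem he he' hne ha ha'
    exact ⟨a, ha, a, ha', hdeg, hdeg, Or.inl rfl⟩
  obtain ⟨f, hf, ⟨a, ha, haf⟩, b, hb, hbf⟩ := hconf.resolve_left hshare
  have hab : a ≠ b := fun hab => hshare ⟨a, ha, hab ▸ hb⟩
  have hfe : e ≠ f := fun hfe => hshare ⟨b, hfe ▸ hbf, hb⟩
  have hfe' : e' ≠ f := fun hfe' => hshare ⟨a, ha, hfe' ▸ haf⟩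
  refine ⟨a, ha, b, hb, degree_ne_one_of_mem_of_mem he hf hfe ha haf,
    degree_ne_one_of_mem_of_mem he' hf hfe' hb hbf, Or.inr ?_⟩
  rwa [(Sym2.mem_and_mem_iff hab).1 ⟨haf, hbf⟩] at hf

/-- The edge `e` of `G` takes its color from the slot `p` of the core: either `e` is an edge of the
core and `p = e`, or `e` is a pendant edge and `p` is the loop at its end other than the leaf. -/
inductive TakesColorFrom (G : SimpleGraph V) : Sym2 V → Sym2 V → Prop
  | edge {a b : V} (hab : (core G).Adj a b) : TakesColorFrom G s(a, b) s(a, b)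
  | pendant {a b : V} (hab : G.Adj a b) (hb : G.degree b = 1) : TakesColorFrom G s(a, b) s(a, a)

theorem exists_takesColorFrom {e : Sym2 V} (he : e ∈ G.edgeSet) : ∃ p, TakesColorFrom G e p := by
  induction e with | _ a b
  by_cases hb : G.degree b = 1
  · exact ⟨_, .pendant he hb⟩
  by_cases ha : G.degree a = 1
  · rw [Sym2.eq_swap]
    exact ⟨_, .pendant (SimpleGraph.Adj.symm he) ha⟩
  · exact ⟨_, .edge ⟨he, ha, hb⟩⟩

theorem TakesColorFrom.mem {e p : Sym2 V} (h : TakesColorFrom G e p) {a : V} (ha : a ∈ e)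
    (hdeg : G.degree a ≠ 1) : a ∈ p := by
  cases h with
  | edge => exact ha
  | pendant _ hb =>
    rcases Sym2.mem_iff.1 ha with rfl | rfl
    · exact Sym2.mem_mk_left a a
    · exact absurd hb hdeg

theorem TakesColorFrom.exists_of_loop {e : Sym2 V} {a : V} (h : TakesColorFrom G e s(a, a)) :
    ∃ b, G.Adj a b ∧ ¬ (core G).Adj a b ∧ e = s(a, b) := by
  generalize hp : s(a, a) = p at h
  cases h with
  | edge hbc =>
    rw [← SimpleGraph.mem_edgeSet, ← hp] at hbc
    exact ((core G).irrefl hbc).elim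
  | pendant hab hb =>
    obtain rfl := Sym2.diag_injective hp
    exact ⟨_, hab, fun hcore => hcore.2.2 hb, rfl⟩

theorem TakesColorFrom.eq_of_ne {e : Sym2 V} {a b : V} (hab : a ≠ b)
    (h : TakesColorFrom G e s(a, b)) : (core G).Adj a b ∧ e = s(a, b) := by
  generalize hp : s(a, b) = p at h
  cases h with
  | edge hcd =>
    refine ⟨?_, rfl⟩
    rwa [← SimpleGraph.mem_edgeSet, hp]
  | pendant => exact absurd (Sym2.mk_isDiag_iff.1 (hp ▸ Sym2.diag_isDiag _)) hab

theorem card_filter_takesColorFrom_le (hm : G.maxDegree ≤ m) {φ : G.edgeSet → Sym2 V}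
    (hφ : ∀ t : G.edgeSet, TakesColorFrom G t (φ t)) (p : Sym2 V) :
    #{t | φ t = p} ≤ slotWeight (core G) m p := by
  induction p with | _ a b
  rcases eq_or_ne a b with rfl | hab
  · have hsub : ({t | φ t = s(a, a)} : Finset G.edgeSet).map (Embedding.subtype _) ⊆
        (G.neighborFinset a \ (core G).neighborFinset a).image fun b => s(a, b) := by
      intro e he
      obtain ⟨t, ht, rfl⟩ := mem_map.1 he
      obtain ⟨b, hab, hcore, hb⟩ := ((mem_filter.1 ht).2 ▸ hφ t).exists_of_loop
      exact mem_image.2 ⟨b, by simp [hab, hcore], hb.symm⟩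
    have hle := (card_le_card hsub).trans card_image_le
    have hnbr : (core G).neighborFinset a ⊆ G.neighborFinset a := fun b => by
      simpa using @core_le V _ G a b
    rw [card_map, card_sdiff_of_subset hnbr, SimpleGraph.card_neighborFinset_eq_degree,
      SimpleGraph.card_neighborFinset_eq_degree] at hle
    rw [slotWeight_loop]
    exact hle.trans (Nat.sub_le_sub_right ((G.degree_le_maxDegree a).trans hm) _)
  · have heq (t) (ht : φ t = s(a, b)) : (core G).Adj a b ∧ (t : Sym2 V) = s(a, b) :=
      (ht ▸ hφ t).eq_of_ne hab
    rw [slotWeight_of_ne hab]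
    split_ifs with hcore
    · refine card_le_one.2 fun t ht t' ht' => Subtype.ext ?_
      rw [(heq t (mem_filter.1 ht).2).2, (heq t' (mem_filter.1 ht').2).2]
    · rw [Nat.le_zero, card_eq_zero, filter_eq_empty_iff]
      exact fun t _ ht => hcore (heq t ht).1

theorem Multicolorable.hasStrongColoring {k : ℕ} (hk : 0 < k) (hm : G.maxDegree ≤ m)
    (h : Multicolorable (slotGraph (core G)) (slotWeight (core G) m) k) :
    HasStrongColoring G k := by
  obtain ⟨F, hF⟩ := h
  choose φ hφ using fun t : G.edgeSet => exists_takesColorFrom t.2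
  obtain ⟨c, hc⟩ := hF.exists_coloring (card_filter_takesColorFrom_le hm hφ)
  refine ⟨extend Subtype.val c fun _ => ⟨0, hk⟩, fun e he e' he' hconf => ?_⟩
  obtain ⟨a, ha, b, hb, hda, hdb, hab⟩ := hconf.exists_degree_ne_one he he'
  lift e to G.edgeSet using he
  lift e' to G.edgeSet using he'
  rw [Subtype.val_injective.extend_apply, Subtype.val_injective.extend_apply]
  refine hc e e' (fun h => hconf.1 (congrArg _ h)) (or_iff_not_imp_left.2 fun hne => ?_)
  exact ⟨hne, a, (hφ e).mem ha hda, b, (hφ e').mem hb hdb, hab.imp_right fun h => ⟨h, hda, hdb⟩⟩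

end Core

theorem strong_chromatic_index_two_degenerate_aux_general {V : Type*} [Fintype V] {D n : ℕ}
    (hD : 2 ≤ D) (hn : 2 ≤ n) (G : SimpleGraph V) (h2 : TwoDegenerate G)
    (hA1 : G.maxDegree ≤ D + n)
    (hA2 : ∀ t ∈ Finset.Icc 1 n, ∀ v : V, G.degree v = D + t →
      t ≤ ((G.neighborFinset v).filter (fun u => G.degree u = 1)).card) :
    strongChromaticIndex G ≤ 5 * D + 3 * n - 5 := by
  have hcore := (h2.mono (core_le G)).multicolorable_slotGraph (m := D + n)
    (k := 5 * D + 3 * n - 5) hD (by lia) (by lia) (degree_core_le hA1 hA2)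
  exact Nat.sInf_le (hcore.hasStrongColoring (by lia) hA1)

/-- If `D ≥ 2` and the 2-degenerate graph `G` satisfies (A1) `Δ(G) ≤ D + 2` and
(A2) for `t ∈ {1, 2}` every vertex of degree `D + t` is adjacent to at least `t` vertices
of degree 1, then `χ'_s(G) ≤ 5D + 1`. -/
theorem strong_chromatic_index_two_degenerate_aux {V : Type*} [Fintype V] (D : ℕ)
    (hD : 2 ≤ D) (G : SimpleGraph V) (h2 : TwoDegenerate G)
    (hA1 : G.maxDegree ≤ D + 2)
    (hA2 : ∀ t ∈ Finset.Icc 1 2, ∀ v : V, G.degree v = D + t →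
      t ≤ ((G.neighborFinset v).filter (fun u => G.degree u = 1)).card) :
    strongChromaticIndex G ≤ 5 * D + 1 :=
  strong_chromatic_index_two_degenerate_aux_general hD le_rfl G h2 hA1 hA2

end StrongEC
end

section
/- Let Δ ≥ 7 be an integer and let G be a finite simple graph with no 3-regular subgraph. If the maximum degree of G is at most Δ and Mad(G) ≤ 3, then χ'_s(G) ≤ 3Δ. -/
open scoped Classical

namespace StrongEC

/-- The maximum average degree of a finite graph `G`: the supremum over nonempty vertex
subsets `A` of `2 * e(A) / |A|`, where `e(A)` is the number of edges of `G` inside `A`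
(this equals the maximum of `2|E(H)|/|V(H)|` over all subgraphs `H` with at least one
vertex). -/
noncomputable def mad {V : Type*} (G : SimpleGraph V) : ℝ :=
  sSup {x : ℝ | ∃ A : Finset V, A.Nonempty ∧
    x = 2 * ({e ∈ G.edgeSet | ∀ v ∈ e, v ∈ A}.ncard : ℝ) / (A.card : ℝ)}

/-- `G` has a 3-regular subgraph: a subgraph on a nonempty vertex set all of whose
vertices have degree exactly 3 in it. -/
def Has3RegularSubgraph {V : Type*} (G : SimpleGraph V) : Prop :=
  ∃ H : SimpleGraph V, H ≤ G ∧ H.support.Nonempty ∧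
    ∀ v ∈ H.support, (H.neighborSet v).ncard = 3

/-!
Take a counterexample with the fewest edges. A strong edge-coloring with `3 * Δ` colors is recorded
by the sets of colors seen at the vertices, each padded to `Δ` colors as if pendant edges had been
added: the palettes of adjacent vertices then share exactly the color of the edge between them, and
edges at the same vertex have distinct colors. To color a further edge or to pad a palette one needs
a color outside the palettes of neighboring vertices. Low vertices, those of degree at most `2`,
have small palettes while missing edges are being colored, and this leaves enough room to extend a
coloring of a proper subgraph greedily in many local configurations around low vertices and around
vertices of degree `3` with a low neighbor. For two paths leaving the same vertex through two low
vertices each, an edge joining their far ends is added to the smaller graph; it forces the palettes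
of these ends to share only the color of the added edge.

Give a vertex of degree `d` the charge `6 * d - 18`, so that the charges of the nonisolated vertices
have nonpositive sum. Every nonisolated low vertex receives exactly the `6` it lacks from the ends
of the path it lies on, and the excluded configurations leave all charges nonnegative, hence all
zero. The equality cases of these estimates leave no low vertices, so all nonisolated vertices have
degree `3` and span a `3`-regular subgraph.
-/

section Palette

open Finset SimpleGraph

variable {V α : Type*} {Δ : ℕ} {G G' H K : SimpleGraph V} {R R' : Set V}
  {M : V → Finset α} {p q : V} {c : α}

/-- A partial strong edge-coloring of `G`, recorded at the vertices: `M p` is the palette of `p`,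
and each edge of the subgraph `H` of colored edges gets the unique color shared by the palettes of
its ends. Palettes of vertices outside `R` have exactly `Δ` colors, as if pendant edges had been
added and colored until the degree is `Δ`; palettes of vertices in `R` are tight, that is, contain
only colors of edges of `H`. -/
structure IsPalette (Δ : ℕ) (G H : SimpleGraph V) (R : Set V) (M : V → Finset α) : Prop where
  le : H ≤ G
  existsUnique : ∀ ⦃p q⦄, H.Adj p q → ∃! c, c ∈ M p ∧ c ∈ M q
  adj_of_mem : ∀ ⦃p q c⦄, G.Adj p q → c ∈ M p → c ∈ M q → H.Adj p q
  eq_of_mem : ∀ ⦃p q r c⦄, H.Adj p q → H.Adj p r → c ∈ M p → c ∈ M q → c ∈ M r → q = r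
  card_of_notMem : ∀ ⦃p⦄, p ∉ R → #(M p) = Δ
  exists_adj : ∀ ⦃p c⦄, p ∈ R → c ∈ M p → ∃ q, H.Adj p q ∧ c ∈ M q

namespace IsPalette

theorem mono (h : IsPalette Δ G H R M) (hHK : H ≤ K) (hKG : K ≤ G) : IsPalette Δ K H R M :=
  { h with le := hHK, adj_of_mem := fun _ _ _ hpq => h.adj_of_mem (hKG hpq) }

theorem card_used [Fintype V] [DecidableEq α] (h : IsPalette Δ G H R M) (p : V) :
    #{c ∈ M p | ∃ q, H.Adj p q ∧ c ∈ M q} = H.degree p := by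
  have hused : {c ∈ M p | ∃ q, H.Adj p q ∧ c ∈ M q} =
      (H.neighborFinset p).biUnion fun q => M p ∩ M q := by
    ext c; simp; tauto
  have hone : ∀ q ∈ H.neighborFinset p, #(M p ∩ M q) = 1 := fun q hq => by
    obtain ⟨c, hc, huniq⟩ := h.existsUnique ((H.mem_neighborFinset p q).1 hq)
    exact card_eq_one.2 ⟨c, by ext d; grind⟩
  rw [hused, card_biUnion, sum_congr rfl hone]
  · simp
  · intro q hq r hr hqr
    rw [mem_coe, mem_neighborFinset] at hq hr
    exact Finset.disjoint_left.2 fun c hcq hcr => hqr <| h.eq_of_mem hq hr (mem_inter.1 hcq).1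
      (mem_inter.1 hcq).2 (mem_inter.1 hcr).2

theorem card_of_mem [Fintype V] (h : IsPalette Δ G H R M) (hp : p ∈ R) :
    #(M p) = H.degree p := by
  rw [← h.card_used p, filter_true_of_mem fun c hc => h.exists_adj hp hc]

theorem restrict (h : IsPalette Δ G' G' ∅ M) (hG' : H ≤ G') (hG : H ≤ G)
    (hsep : ∀ p q, G.Adj p q → ¬ H.Adj p q →
      (p ∈ R ∧ (G'.Adj p q ∨ ∀ r, ¬ H.Adj p r)) ∨ (q ∈ R ∧ (G'.Adj p q ∨ ∀ r, ¬ H.Adj q r))) :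
    IsPalette Δ G H R fun p => {c ∈ M p | p ∈ R → ∃ q, H.Adj p q ∧ c ∈ M q} where
  le := hG
  existsUnique p q hpq := by
    obtain ⟨c, ⟨hcp, hcq⟩, huniq⟩ := h.existsUnique (hG' hpq)
    exact ⟨c, ⟨mem_filter.2 ⟨hcp, fun _ => ⟨q, hpq, hcq⟩⟩,
      mem_filter.2 ⟨hcq, fun _ => ⟨p, hpq.symm, hcp⟩⟩⟩,
      fun d hd => huniq d ⟨(mem_filter.1 hd.1).1, (mem_filter.1 hd.2).1⟩⟩
  adj_of_mem p q c hpq hcp hcq := by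
    rw [mem_filter] at hcp hcq
    by_contra hnpq
    rcases hsep p q hpq hnpq with ⟨hp, hadj⟩ | ⟨hq, hadj⟩
    · obtain ⟨r, hpr, hcr⟩ := hcp.2 hp
      have hpq' := hadj.resolve_right fun hno => hno r hpr
      exact hnpq (h.eq_of_mem hpq' (hG' hpr) hcp.1 hcq.1 hcr ▸ hpr)
    · obtain ⟨r, hqr, hcr⟩ := hcq.2 hq
      have hpq' := hadj.resolve_right fun hno => hno r hqr
      exact hnpq (h.eq_of_mem hpq'.symm (hG' hqr) hcq.1 hcp.1 hcr ▸ hqr).symm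
  eq_of_mem p q r c hpq hpr hcp hcq hcr :=
    h.eq_of_mem (hG' hpq) (hG' hpr) (mem_filter.1 hcp).1 (mem_filter.1 hcq).1 (mem_filter.1 hcr).1
  card_of_notMem p hp := by
    rw [filter_true_of_mem fun c _ hp' => absurd hp' hp]
    exact h.card_of_notMem (Set.notMem_empty p)
  exists_adj p c hp hc := by
    obtain ⟨hcp, hex⟩ := mem_filter.1 hc
    obtain ⟨q, hpq, hcq⟩ := hex hp
    exact ⟨q, hpq, mem_filter.2 ⟨hcq, fun _ => ⟨p, hpq.symm, hcp⟩⟩⟩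

theorem sup_edge [DecidableEq α] (h : IsPalette Δ G H R M) (hpq : G.Adj p q) (hnpq : ¬ H.Adj p q)
    (hcp : p ∉ R → c ∈ M p) (hcq : q ∉ R → c ∈ M q)
    (hp : ∀ r, G.Adj p r → r ≠ q → c ∉ M r) (hq : ∀ r, G.Adj q r → r ≠ p → c ∉ M r) :
    IsPalette Δ G (H ⊔ edge p q) R fun r => if r = p ∨ r = q then insert c (M r) else M r := by
  have hne := hpq.ne
  have hadj : ∀ a b, (H ⊔ edge p q).Adj a b ↔ H.Adj a b ∨ (a = p ∧ b = q) ∨ (a = q ∧ b = p) := by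
    intro a b
    rw [sup_adj, edge_adj]
    grind
  have hmem : ∀ r d, d ∈ (if r = p ∨ r = q then insert c (M r) else M r) ↔
      d ∈ M r ∨ (d = c ∧ (r = p ∨ r = q)) := by grind
  have hfresh : ∀ a b, H.Adj a b → (a = p ∨ a = q) → c ∉ M b := by
    rintro a b hab (rfl | rfl)
    · exact hp b (h.le hab) fun hb => hnpq (hb ▸ hab)
    · exact hq b (h.le hab) fun hb => hnpq (hb ▸ hab).symm
  refine ⟨sup_le h.le ((edge_le_iff _).2 (Or.inr hpq)), fun a b hab => ?_,
    fun a b d hab ha hb => ?_, fun a b e d hab hae ha hb he => ?_, fun a ha => ?_,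
    fun a d ha hd => ?_⟩
  · simp only [hmem]
    rcases (hadj a b).1 hab with hab | hab
    · obtain ⟨d, hd, huniq⟩ := h.existsUnique hab
      exact ⟨d, by grind, by grind [hab.symm, hab.ne]⟩
    · exact ⟨c, by grind, by grind [h.adj_of_mem hpq]⟩
  · rw [hmem] at ha hb
    rw [hadj]
    grind [hab.symm, hab.ne, h.adj_of_mem hab]
  · rw [hmem] at ha hb he
    rw [hadj] at hab hae
    rcases hab with hab | hab <;> rcases hae with hae | hae
    · grind [h.eq_of_mem hab hae, hab.symm, hae.symm, hab.ne, hae.ne]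
    · grind [h.adj_of_mem hpq, hab.symm, hab.ne]
    · grind [h.adj_of_mem hpq, hae.symm, hae.ne]
    · grind
  · have := h.card_of_notMem ha
    grind
  · simp only [hmem, hadj] at hd ⊢
    grind [h.exists_adj]

theorem fill [Fintype V] [Fintype α] (h : IsPalette Δ G H R M) (hpR : p ∈ R)
    (hp : H.degree p ≤ Δ)
    (hsum : ∑ r ∈ G.neighborFinset p, #(M r) + Δ ≤ Fintype.card α + H.degree p) :
    ∃ M' : V → Finset α, IsPalette Δ G H (R \ {p}) M' := by
  set N := (G.neighborFinset p).biUnion M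
  have hsub : M p ⊆ N := fun c hc => by
    obtain ⟨q, hpq, hcq⟩ := h.exists_adj hpR hc
    exact mem_biUnion.2 ⟨q, (G.mem_neighborFinset p q).2 (h.le hpq), hcq⟩
  have hcard : Δ ≤ #(M p ∪ Nᶜ) := by
    rw [card_union_of_disjoint (disjoint_compl_right.mono_left hsub), card_compl, h.card_of_mem hpR]
    have : #N ≤ _ := card_biUnion_le
    omega
  obtain ⟨X, hMX, hXN, hX⟩ :=
    exists_subsuperset_card_eq subset_union_left (h.card_of_mem hpR ▸ hp) hcard
  have hnew : ∀ r c, G.Adj p r → c ∈ X → c ∈ M r → c ∈ M p := fun r c hpr hc hcr =>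
    (mem_union.1 (hXN hc)).resolve_right fun hc' => (mem_compl.1 hc')
      (mem_biUnion.2 ⟨r, (G.mem_neighborFinset p r).2 hpr, hcr⟩)
  have hmem : ∀ r d, d ∈ Function.update M p X r ↔ d ∈ M r ∨ (r = p ∧ d ∈ X) := by
    grind [Function.update_apply]
  refine ⟨Function.update M p X, h.le, fun a b hab => ?_, fun a b d hab ha hb => ?_,
    fun a b e d hab hae ha hb he => ?_, fun a ha => ?_, fun a d ha hd => ?_⟩
  · simp only [hmem]
    obtain ⟨d, hd, huniq⟩ := h.existsUnique hab
    exact ⟨d, by grind, by grind [(h.le hab).symm, h.le hab, hab.ne]⟩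
  · rw [hmem] at ha hb
    grind [hab.symm, hab.ne, h.adj_of_mem hab]
  · rw [hmem] at ha hb he
    grind [h.le hab, h.le hae, (h.le hab).symm, (h.le hae).symm, hab.ne, hae.ne,
      h.eq_of_mem hab hae]
  · have := h.card_of_notMem (p := a)
    grind [Function.update_apply]
  · obtain ⟨b, hab, hdb⟩ := h.exists_adj ha.1 (((hmem a d).1 hd).resolve_right fun hd => ha.2 hd.1)
    exact ⟨b, hab, (hmem b d).2 (Or.inl hdb)⟩

end IsPalette

end Palette

section VertexKinds

open Finset SimpleGraph

theorem sum_erase_add_le {ι : Type*} [DecidableEq ι] {s : Finset ι} {f g : ι → ℕ} {i : ι} {x : ℕ}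
    (hi : i ∈ s) (hfg : ∀ j ∈ s, j ≠ i → f j ≤ g j) (hx : x ≤ g i) :
    ∑ j ∈ s.erase i, f j + x ≤ ∑ j ∈ s, g j := by
  rw [← sum_erase_add s g hi]
  exact add_le_add (sum_le_sum fun j hj => hfg j (mem_of_mem_erase hj) (ne_of_mem_erase hj)) hx

variable {V : Type*} [Fintype V] {Δ : ℕ} {G : SimpleGraph V} {p q : V}

/-- The number of neighbors of degree at most `2`. Such vertices are called low, the others big. -/
noncomputable def lowDegree (G : SimpleGraph V) (p : V) : ℕ :=
  #{r ∈ G.neighborFinset p | G.degree r ≤ 2}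

/-- The number of neighbors of degree at least `3`. -/
noncomputable def bigDegree (G : SimpleGraph V) (p : V) : ℕ :=
  #{r ∈ G.neighborFinset p | 2 < G.degree r}

/-- A connector is a vertex of degree `3` with two big neighbors and one low neighbor. -/
def IsConnector (G : SimpleGraph V) (p : V) : Prop := G.degree p = 3 ∧ bigDegree G p = 2

/-- A pendant vertex is a vertex of degree `3` with one big neighbor and two low neighbors. -/
def IsPendant (G : SimpleGraph V) (p : V) : Prop := G.degree p = 3 ∧ bigDegree G p = 1

/-- The number of neighbors that are connectors. -/
noncomputable def connectorDegree (G : SimpleGraph V) (p : V) : ℕ :=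
  #{r ∈ G.neighborFinset p | IsConnector G r}

/-- The number of neighbors that are pendant vertices. -/
noncomputable def pendantDegree (G : SimpleGraph V) (p : V) : ℕ :=
  #{r ∈ G.neighborFinset p | IsPendant G r}

/-- The number of big neighbors that are neither connectors nor pendant vertices. -/
noncomputable def otherDegree (G : SimpleGraph V) (p : V) : ℕ :=
  #{r ∈ G.neighborFinset p | 2 < G.degree r ∧ ¬ IsConnector G r ∧ ¬ IsPendant G r}

/-- The function of a vertex taking prescribed values at low vertices, connectors, pendant vertices
and all other vertices. -/
noncomputable def byKind {A : Type*} (G : SimpleGraph V) (other connector pendant low : A) (r : V) :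
    A :=
  if G.degree r ≤ 2 then low else if IsConnector G r then connector
    else if IsPendant G r then pendant else other

/-- An upper bound for the total palette size in the neighborhood of `p` if low vertices and
connectors have tight palettes. -/
noncomputable def nbrWeight (Δ : ℕ) (G : SimpleGraph V) (p : V) : ℕ :=
  ∑ r ∈ G.neighborFinset p, byKind G Δ 3 Δ 2 r

/-- A soft vertex can have its palette enlarged to `Δ` colors when its low neighbors have tight
palettes, whatever the palettes of its big neighbors are. -/
def IsSoft (Δ : ℕ) (G : SimpleGraph V) (p : V) : Prop :=
  bigDegree G p * Δ + 2 * lowDegree G p ≤ 2 * Δ + G.degree p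

/-- Every missing edge from a loose vertex to a low vertex can be colored when both ends and all low
vertices have tight palettes. -/
def IsLoose (Δ : ℕ) (G : SimpleGraph V) (p : V) : Prop :=
  bigDegree G p * Δ + 2 * lowDegree G p < 2 * Δ + 2

/-- The roomy vertices are those to whose connectors the reductions below apply: their degree is
less than `Δ - 1` and their palette can be enlarged to `Δ` colors when low vertices and connectors
have tight palettes. -/
def IsRoomy (Δ : ℕ) (G : SimpleGraph V) (p : V) : Prop :=
  G.degree p + 2 ≤ Δ ∧ nbrWeight Δ G p ≤ 2 * Δ + 3

/-- A light vertex has so few neighbors that are neither low nor pendant that its palette can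
always be enlarged to `Δ` colors when it has no pendant neighbor. -/
def IsLight (G : SimpleGraph V) (p : V) : Prop :=
  (otherDegree G p = 1 ∧ connectorDegree G p ≤ 1) ∨
    (otherDegree G p = 0 ∧ connectorDegree G p ≤ 3)

/-- The set consisting of `S`, the low vertices and the connectors adjacent to `S`. -/
def relaxed (G : SimpleGraph V) (S : Set V) : Set V :=
  {r | G.degree r ≤ 2 ∨ r ∈ S ∨ (IsConnector G r ∧ ∃ s ∈ S, G.Adj s r)}

theorem sum_ite_degree_le_two {A : Type*} [CommSemiring A] (b l : A) (p : V) :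
    ∑ r ∈ G.neighborFinset p, (if G.degree r ≤ 2 then l else b) =
      bigDegree G p * b + lowDegree G p * l := by
  rw [sum_ite, sum_const, sum_const, nsmul_eq_mul, nsmul_eq_mul, add_comm, bigDegree, lowDegree]
  simp only [not_le]

theorem bigDegree_add_lowDegree (p : V) : bigDegree G p + lowDegree G p = G.degree p := by
  simpa using (sum_ite_degree_le_two (G := G) (A := ℕ) 1 1 p).symm

theorem IsConnector.lowDegree_eq (h : IsConnector G p) : lowDegree G p = 1 := by
  have := bigDegree_add_lowDegree (G := G) p
  have := h.1
  have := h.2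
  omega

theorem IsPendant.lowDegree_eq (h : IsPendant G p) : lowDegree G p = 2 := by
  have := bigDegree_add_lowDegree (G := G) p
  have := h.1
  have := h.2
  omega

theorem IsConnector.isSoft (h : IsConnector G p) : IsSoft Δ G p := by
  rw [IsSoft, h.1, h.2, h.lowDegree_eq]
  omega

theorem isLoose_of_degree_le_two (hΔ : 2 ≤ Δ) (hp : G.degree p ≤ 2) : IsLoose Δ G p := by
  have := bigDegree_add_lowDegree (G := G) p
  unfold IsLoose
  nlinarith

theorem isLoose_of_bigDegree_eq_one (hΔ : 7 ≤ Δ) (hb : bigDegree G p = 1) (hl : lowDegree G p ≤ 4) :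
    IsLoose Δ G p := by
  rw [IsLoose, hb]
  omega

theorem sum_byKind {A : Type*} [CommSemiring A] (o c k l : A) (p : V) :
    ∑ r ∈ G.neighborFinset p, byKind G o c k l r =
      otherDegree G p * o + connectorDegree G p * c + pendantDegree G p * k +
        lowDegree G p * l := by
  have hsplit : ∀ r, byKind G o c k l r =
      (if 2 < G.degree r ∧ ¬ IsConnector G r ∧ ¬ IsPendant G r then o else 0) +
      (if IsConnector G r then c else 0) + (if IsPendant G r then k else 0) +
      (if G.degree r ≤ 2 then l else 0) := fun r => by
    unfold byKind IsConnector IsPendant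
    split_ifs <;> first | omega | simp
  simp only [hsplit, sum_add_distrib, ← sum_filter, sum_const, nsmul_eq_mul]
  rfl

theorem bigDegree_eq (p : V) :
    bigDegree G p = otherDegree G p + connectorDegree G p + pendantDegree G p := by
  have hkind : byKind G 1 1 1 0 = fun r => if G.degree r ≤ 2 then 0 else 1 := by
    ext r
    simp [byKind]
  have := sum_byKind (G := G) (A := ℕ) 1 1 1 0 p
  rw [hkind, sum_ite_degree_le_two] at this
  simpa using this

theorem nbrWeight_eq (p : V) : nbrWeight Δ G p =
    (otherDegree G p + pendantDegree G p) * Δ + 3 * connectorDegree G p + 2 * lowDegree G p := by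
  rw [nbrWeight, sum_byKind]
  push_cast
  ring

end VertexKinds

section PaletteColorable

open Finset SimpleGraph

variable {V : Type*} [Fintype V] {Δ : ℕ} {G G' H K : SimpleGraph V} {R R' : Set V} {p q v : V}

/-- The graph `G` has a partial strong edge-coloring with `3 * Δ` colors and with `H` as the graph
of colored edges, in the sense of `IsPalette`. -/
def PaletteColorable (Δ : ℕ) (G H : SimpleGraph V) (R : Set V) : Prop :=
  ∃ M : V → Finset (Fin (3 * Δ)), IsPalette Δ G H R M

/-- The size of the palette of `p` in any partial coloring as in `IsPalette`. -/
noncomputable def paletteCard (Δ : ℕ) (H : SimpleGraph V) (R : Set V) (p : V) : ℕ :=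
  if p ∈ R then H.degree p else Δ

theorem IsPalette.card_eq {α : Type*} {M : V → Finset α} (h : IsPalette Δ G H R M) (p : V) :
    #(M p) = paletteCard Δ H R p := by
  rw [paletteCard]
  split_ifs with hp
  exacts [h.card_of_mem hp, h.card_of_notMem hp]

theorem paletteCard_le (hG : ∀ p, G.degree p ≤ Δ) (hHG : H ≤ G) (R : Set V) (p : V) :
    paletteCard Δ H R p ≤ Δ := by
  rw [paletteCard]
  split_ifs
  exacts [(degree_le_of_le hHG).trans (hG p), le_rfl]

theorem paletteCard_le_degree (hHG : H ≤ G) (hp : p ∈ R) : paletteCard Δ H R p ≤ G.degree p := by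
  rw [paletteCard, if_pos hp]
  exact degree_le_of_le hHG

theorem degree_lt_of_not_adj (hHG : H ≤ G) (hpq : G.Adj p q) (hn : ¬ H.Adj p q) :
    H.degree p < G.degree p := by
  refine card_lt_card ((Finset.ssubset_iff_of_subset fun r hr => ?_).2 ⟨q, ?_, ?_⟩)
  · rw [mem_neighborFinset] at hr ⊢
    exact hHG hr
  · rwa [mem_neighborFinset]
  · rwa [mem_neighborFinset]

theorem paletteCard_lt_degree (hHG : H ≤ G) (hp : p ∈ R) (hpq : G.Adj p q) (hn : ¬ H.Adj p q) :
    paletteCard Δ H R p < G.degree p := by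
  rw [paletteCard, if_pos hp]
  exact degree_lt_of_not_adj hHG hpq hn

theorem paletteCard_le_byKind (hG : ∀ p, G.degree p ≤ Δ) (hHG : H ≤ G)
    (hlow : ∀ r, G.degree r ≤ 2 → r ∈ R) (hconn : IsConnector G p → p ∈ R) {k : ℕ}
    (hpend : IsPendant G p → paletteCard Δ H R p ≤ k) :
    paletteCard Δ H R p ≤ byKind G Δ 3 k 2 p := by
  have hdeg : p ∈ R → paletteCard Δ H R p ≤ G.degree p := paletteCard_le_degree hHG
  unfold byKind
  split_ifs with h2 hc hk
  exacts [(hdeg (hlow p h2)).trans h2, (hdeg (hconn hc)).trans hc.1.le, hpend hk,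
    paletteCard_le hG hHG R p]

theorem paletteCard_le_ite (hG : ∀ p, G.degree p ≤ Δ) (hHG : H ≤ G)
    (hlow : ∀ r, G.degree r ≤ 2 → r ∈ R) (p : V) :
    paletteCard Δ H R p ≤ if G.degree p ≤ 2 then 2 else Δ := by
  split_ifs with h2
  exacts [(paletteCard_le_degree hHG (hlow p h2)).trans h2, paletteCard_le hG hHG R p]

theorem sum_neighborFinset_erase_le (hp : G.degree p ≤ 2) (hpq : G.Adj p q) {f : V → ℕ} {m : ℕ}
    (hf : ∀ r, f r ≤ m) : ∑ r ∈ (G.neighborFinset p).erase q, f r ≤ m := by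
  have hcard : #((G.neighborFinset p).erase q) ≤ 1 := by
    rw [card_erase_of_mem ((G.mem_neighborFinset p q).2 hpq), card_neighborFinset_eq_degree]
    omega
  calc _ ≤ #((G.neighborFinset p).erase q) * m := sum_le_card_nsmul _ _ _ fun r _ => hf r
    _ ≤ m := mul_le_of_le_one_left m.zero_le hcard

namespace PaletteColorable

omit [Fintype V] in
theorem le (h : PaletteColorable Δ G H R) : H ≤ G := h.elim fun _ hM => hM.le

theorem sup_edge (h : PaletteColorable Δ G H R) (hpq : G.Adj p q) (hn : ¬ H.Adj p q) (hq : q ∈ R)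
    (htight : p ∈ R → ∑ r ∈ (G.neighborFinset p).erase q, paletteCard Δ H R r +
      ∑ r ∈ (G.neighborFinset q).erase p, paletteCard Δ H R r < 3 * Δ)
    (hfull : p ∉ R → H.degree p + ∑ r ∈ (G.neighborFinset q).erase p, paletteCard Δ H R r < Δ) :
    PaletteColorable Δ G (H ⊔ edge p q) R := by
  obtain ⟨M, hM⟩ := h
  let B (a b : V) := ((G.neighborFinset a).erase b).biUnion M
  have hB : ∀ a b, #(B a b) ≤ ∑ r ∈ (G.neighborFinset a).erase b, paletteCard Δ H R r :=
    fun a b => card_biUnion_le.trans_eq (sum_congr rfl fun r _ => hM.card_eq r)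
  have hfresh : ∀ {a b c}, c ∉ B a b → ∀ r, G.Adj a r → r ≠ b → c ∉ M r := fun hc r har hrb hcr =>
    hc (mem_biUnion.2 ⟨r, mem_erase.2 ⟨hrb, (G.mem_neighborFinset _ _).2 har⟩, hcr⟩)
  by_cases hp : p ∈ R
  · obtain ⟨c, hc⟩ : ∃ c, c ∉ B p q ∪ B q p := by
      by_contra! hall
      have := card_union_le (B p q) (B q p)
      rw [eq_univ_of_forall hall, card_univ, Fintype.card_fin] at this
      have := htight hp
      have := hB p q
      have := hB q p
      omega
    rw [notMem_union] at hc
    exact ⟨_, hM.sup_edge hpq hn (absurd hp) (absurd hq) (hfresh hc.1) (hfresh hc.2)⟩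
  · have hused := hM.card_used p
    set U := {c ∈ M p | ∃ q, H.Adj p q ∧ c ∈ M q}
    obtain ⟨c, hcp, hc⟩ : ∃ c ∈ M p, c ∉ U ∪ B q p := by
      refine exists_mem_notMem_of_card_lt_card ?_
      have := card_union_le U (B q p)
      have := hfull hp
      have := hB q p
      have := hM.card_of_notMem hp
      omega
    rw [notMem_union] at hc
    refine ⟨_, hM.sup_edge hpq hn (fun _ => hcp) (absurd hq) (fun r hpr _ hcr => hc.1 ?_)
      (hfresh hc.2)⟩
    exact mem_filter.2 ⟨hcp, r, hM.adj_of_mem hpr hcp hcr, hcr⟩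

theorem fill (h : PaletteColorable Δ G H R) (hdeg : H.degree p ≤ Δ)
    (hsum : ∑ r ∈ G.neighborFinset p, paletteCard Δ H R r ≤ 2 * Δ + H.degree p) :
    PaletteColorable Δ G H (R \ {p}) := by
  by_cases hp : p ∈ R
  · obtain ⟨M, hM⟩ := h
    refine hM.fill hp hdeg ?_
    simp only [hM.card_eq, Fintype.card_fin]
    omega
  · rwa [Set.sdiff_singleton_eq_self hp]

theorem fill_finset (h : PaletteColorable Δ G H R) (A : Finset V) (hdeg : ∀ p ∈ A, H.degree p ≤ Δ)
    (hsum : ∀ p ∈ A, ∀ R', R \ A ⊆ R' → R' ⊆ R →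
      ∑ r ∈ G.neighborFinset p, paletteCard Δ H R' r ≤ 2 * Δ + H.degree p) :
    PaletteColorable Δ G H (R \ A) := by
  suffices ∀ B ⊆ A, PaletteColorable Δ G H (R \ B) from this A Subset.rfl
  intro B
  induction B using Finset.induction_on with
  | empty => simpa using h
  | insert p B _ ih =>
    intro hBA
    obtain ⟨hpA, hBA⟩ := insert_subset_iff.1 hBA
    rw [coe_insert, Set.insert_eq, Set.union_comm, ← Set.sdiff_sdiff]
    exact (ih hBA).fill (hdeg p hpA) <| hsum p hpA _
      (Set.sdiff_subset_sdiff_right (coe_subset.2 hBA)) Set.sdiff_subset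

theorem restore (h : PaletteColorable Δ G H R) (hG : ∀ p, G.degree p ≤ Δ)
    (hlow : ∀ r, G.degree r ≤ 2 → r ∈ R)
    (hmissing : ∀ p q, G.Adj p q → ¬ H.Adj p q →
      (p ∈ R ∧ IsLoose Δ G p ∧ G.degree q ≤ 2) ∨ (q ∈ R ∧ IsLoose Δ G q ∧ G.degree p ≤ 2)) :
    PaletteColorable Δ G G R := by
  induction H using WellFoundedGT.induction with | ind H ih =>
  have hHG : H ≤ G := h.elim fun _ hM => hM.le
  by_cases hall : G ≤ H
  · rwa [le_antisymm hHG hall] at h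
  · obtain ⟨u, v, huv, hnuv, hu, hloose, hv⟩ : ∃ u v, G.Adj u v ∧ ¬ H.Adj u v ∧ u ∈ R ∧
        IsLoose Δ G u ∧ G.degree v ≤ 2 := by
      simp only [le_iff_adj, not_forall] at hall
      obtain ⟨p, q, hpq, hn⟩ := hall
      rcases hmissing p q hpq hn with hp | hq
      exacts [⟨p, q, hpq, hn, hp⟩, ⟨q, p, hpq.symm, fun hqp => hn hqp.symm, hq⟩]
    refine ih (H ⊔ edge u v) (left_lt_sup.2 fun hle => hnuv (hle ?_))
      (h.sup_edge huv hnuv (hlow v hv) (fun _ => ?_) (absurd hu))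
      fun a b hab hn => hmissing a b hab fun hab' => hn (Or.inl hab')
    · exact (edge_adj u v u v).2 ⟨Or.inl ⟨rfl, rfl⟩, huv.ne⟩
    · have hsum_u := sum_erase_add_le (x := 2) ((G.mem_neighborFinset u v).2 huv)
        (fun r _ _ => paletteCard_le_ite hG hHG hlow r) (by rw [if_pos hv])
      rw [sum_ite_degree_le_two] at hsum_u
      have hsum_v := sum_neighborFinset_erase_le hv huv.symm (paletteCard_le hG hHG R)
      rw [IsLoose] at hloose
      push_cast at hsum_u
      omega

theorem complete (h : PaletteColorable Δ G H R) (hG : ∀ p, G.degree p ≤ Δ)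
    (hlow : ∀ r, G.degree r ≤ 2 → r ∈ R)
    (hmissing : ∀ p q, G.Adj p q → ¬ H.Adj p q →
      (p ∈ R ∧ IsLoose Δ G p ∧ G.degree q ≤ 2) ∨ (q ∈ R ∧ IsLoose Δ G q ∧ G.degree p ≤ 2))
    (hfill : ∀ p ∈ R, 2 < G.degree p → ¬ IsConnector G p → IsSoft Δ G p ∨
      ((∀ r, G.Adj p r → IsConnector G r → r ∈ R) ∧ nbrWeight Δ G p ≤ 2 * Δ + G.degree p)) :
    PaletteColorable Δ G G ∅ := by
  let A : Finset V := {p | p ∈ R ∧ 2 < G.degree p ∧ ¬ IsSoft Δ G p}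
  let B : Finset V := {p | p ∈ R ∧ 2 < G.degree p ∧ IsSoft Δ G p}
  have hA : PaletteColorable Δ G G (R \ A) := by
    refine (h.restore hG hlow hmissing).fill_finset A (fun p _ => hG p) fun p hp R' hR' _ => ?_
    obtain ⟨hpR, hp2, hsoft⟩ := (mem_filter.1 hp).2
    obtain ⟨hconn, hwt⟩ := (hfill p hpR hp2 fun hc => hsoft hc.isSoft).resolve_left hsoft
    refine (sum_le_sum fun r hr => paletteCard_le_byKind hG le_rfl
      (fun s hs => hR' ⟨hlow s hs, ?_⟩) (fun hr' => hR' ⟨hconn r ?_ hr', ?_⟩)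
      fun _ => paletteCard_le hG le_rfl R' r).trans hwt
    · simp [A, hs]
    · simpa using hr
    · simp [A, hr'.isSoft]
  have hB : PaletteColorable Δ G G ((R \ A) \ B) := by
    refine hA.fill_finset B (fun p _ => hG p) fun p hp R' hR' _ => ?_
    have hsoft := (mem_filter.1 hp).2.2.2
    refine (sum_le_sum fun r _ => paletteCard_le_ite hG le_rfl
      (fun s hs => hR' ⟨⟨hlow s hs, ?_⟩, ?_⟩) r).trans ?_
    · simp [A, hs]
    · simp [B, hs]
    · rwa [sum_ite_degree_le_two, Nat.cast_id, Nat.cast_id, mul_comm (lowDegree G p)]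
  have hlowsum : ∀ p, G.degree p ≤ 2 → ∀ R' : Set V,
      ∑ r ∈ G.neighborFinset p, paletteCard Δ G R' r ≤ 2 * Δ + G.degree p := fun p hp R' =>
    calc _ ≤ #(G.neighborFinset p) * Δ :=
          sum_le_card_nsmul _ _ _ fun r _ => paletteCard_le hG le_rfl R' r
      _ ≤ 2 * Δ := Nat.mul_le_mul_right Δ hp
      _ ≤ _ := Nat.le_add_right _ _
  have hempty : (((R \ A) \ B) \ ({p | G.degree p ≤ 2} : Finset V)) = ∅ := by
    ext p
    simp only [A, B, coe_filter, Set.mem_sdiff, Set.mem_ofPred_eq, Set.mem_empty_iff_false]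
    grind
  exact hempty ▸ hB.fill_finset _ (fun p _ => hG p) fun p hp R' _ _ =>
    hlowsum p (mem_filter.1 hp).2 R'

end PaletteColorable

end PaletteColorable

section StrongColoring

open SimpleGraph

variable {V : Type*} {Δ : ℕ} {G : SimpleGraph V}

theorem PaletteColorable.hasStrongColoring (hΔ : 0 < Δ) (h : PaletteColorable Δ G G ∅) :
    HasStrongColoring G (3 * Δ) := by
  obtain ⟨M, hM⟩ := h
  have hcolor : ∀ e : Sym2 V, ∃ c : Fin (3 * Δ), e ∈ G.edgeSet → ∀ v ∈ e, c ∈ M v := fun e => by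
    by_cases he : e ∈ G.edgeSet
    · induction e with | _ p q =>
      obtain ⟨c, hc, -⟩ := hM.existsUnique he
      exact ⟨c, fun _ v hv => by rcases Sym2.mem_iff.1 hv with rfl | rfl; exacts [hc.1, hc.2]⟩
    · exact ⟨⟨0, by omega⟩, fun he' => absurd he' he⟩
  choose C hC using hcolor
  have hmem : ∀ {v w}, G.Adj v w → C s(v, w) ∈ M v ∧ C s(v, w) ∈ M w := fun hvw =>
    ⟨hC _ hvw _ (Sym2.mem_mk_left _ _), hC _ hvw _ (Sym2.mem_mk_right _ _)⟩
  have hshare : ∀ v e e', e ∈ G.edgeSet → e' ∈ G.edgeSet → v ∈ e → v ∈ e' → C e = C e' →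
      e = e' := by
    rintro v e e' he he' ⟨p, rfl⟩ ⟨q, rfl⟩ hcc
    exact congrArg (fun r => s(v, r))
      (hM.eq_of_mem he he' (hmem he).1 (hmem he).2 (hcc ▸ (hmem he').2))
  refine ⟨C, fun e he e' he' ⟨hne, hconf⟩ hcc => hne ?_⟩
  rcases hconf with ⟨v, hv, hv'⟩ | ⟨f, hf, ⟨v, hv, hvf⟩, ⟨w, hw, hwf⟩⟩
  · exact hshare v e e' he he' hv hv' hcc
  · rcases eq_or_ne v w with rfl | hvw
    · exact hshare v e e' he he' hv hw hcc
    · obtain rfl : f = s(v, w) := (Sym2.mem_and_mem_iff hvw).1 ⟨hvf, hwf⟩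
      have hce : C e = C s(v, w) := (hM.existsUnique hf).unique
        ⟨hC e he v hv, hcc ▸ hC e' he' w hw⟩ (hmem hf)
      rw [hshare v e _ he hf hv hvf hce, hshare w e' _ he' hf hw hwf (hcc ▸ hce)]

end StrongColoring

section MinimalCounterexample

open Finset SimpleGraph

variable {V : Type*} [Fintype V] {Δ : ℕ} {G H : SimpleGraph V} {R : Set V} {p q u v w : V}

theorem sum_card_inter_comm (S T : Finset V) :
    ∑ a ∈ S, #(G.neighborFinset a ∩ T) = ∑ b ∈ T, #(G.neighborFinset b ∩ S) := by
  have hcount : ∀ a (U : Finset V),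
      #(G.neighborFinset a ∩ U) = ∑ b ∈ U, if G.Adj a b then 1 else 0 := fun a U => by
    rw [inter_comm, ← filter_mem_eq_inter, card_filter]
    simp only [mem_neighborFinset]
  simp only [hcount]
  rw [sum_comm]
  simp only [G.adj_comm]

theorem sum_card_inter_insert {T : Finset V} (hp : p ∉ T) :
    ∑ a ∈ insert p T, #(G.neighborFinset a ∩ insert p T) =
      ∑ a ∈ T, #(G.neighborFinset a ∩ T) + 2 * #(G.neighborFinset p ∩ T) := by
  rw [← sum_card_inter_comm, sum_insert hp, inter_insert_of_notMem (G.notMem_neighborFinset_self p),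
    sum_card_inter_comm, sum_insert hp]
  ring

theorem sum_card_inter_le_of_adj {S : Finset V} (hpq : G.Adj p q) (hp : G.degree p ≤ 2)
    (hq : G.degree q ≤ 2) (hpS : p ∈ S) (hqS : q ∈ S)
    (hsum : ∑ a ∈ (S.erase p).erase q, #(G.neighborFinset a ∩ (S.erase p).erase q) ≤
      3 * #((S.erase p).erase q)) :
    ∑ a ∈ S, #(G.neighborFinset a ∩ S) ≤ 3 * #S := by
  have hqS' : q ∈ S.erase p := mem_erase.2 ⟨hpq.ne', hqS⟩
  have hS := sum_card_inter_insert (G := G) (notMem_erase p S)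
  have hS' := sum_card_inter_insert (G := G) (notMem_erase q (S.erase p))
  rw [insert_erase hpS] at hS
  rw [insert_erase hqS'] at hS'
  have hcard := card_erase_add_one hpS
  have hcard' := card_erase_add_one hqS'
  have hp' : #(G.neighborFinset p ∩ S.erase p) ≤ 2 := (card_le_card inter_subset_left).trans hp
  have hq' : #(G.neighborFinset q ∩ (S.erase p).erase q) < 2 := by
    refine (card_lt_card
      ((Finset.ssubset_iff_of_subset inter_subset_left).2 ⟨p, ?_, ?_⟩)).trans_le hq
    · exact (G.mem_neighborFinset q p).2 hpq.symm
    · simp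
  omega

theorem Has3RegularSubgraph.of_degree_le_two (h : Has3RegularSubgraph G)
    (hGH : ∀ a b, G.Adj a b → H.Adj a b ∨ G.degree a ≤ 2) : Has3RegularSubgraph H := by
  obtain ⟨L, hL, hne, hcubic⟩ := h
  refine ⟨L, fun a b hab => (hGH a b (hL hab)).resolve_right fun ha => ?_, hne, hcubic⟩
  have hle : (L.neighborSet a).ncard ≤ G.degree a := by
    rw [degree, ← Set.ncard_coe_finset, coe_neighborFinset]
    exact Set.ncard_le_ncard fun d hd => hL hd
  have := hcubic a ⟨b, hab⟩
  omega

/-- The hypotheses of the theorem, with the bound on the maximum average degree stated as a bound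
on the degree sums of induced subgraphs. -/
structure Admissible (Δ : ℕ) (G : SimpleGraph V) : Prop where
  degree_le : ∀ p, G.degree p ≤ Δ
  sum_card_inter_le : ∀ S : Finset V, ∑ p ∈ S, #(G.neighborFinset p ∩ S) ≤ 3 * #S
  not_has3RegularSubgraph : ¬ Has3RegularSubgraph G

namespace Admissible

theorem mono (h : Admissible Δ G) (hHG : H ≤ G) : Admissible Δ H where
  degree_le p := (degree_le_of_le hHG).trans (h.degree_le p)
  sum_card_inter_le S := by
    refine (sum_le_sum fun p _ => card_le_card (inter_subset_inter_right fun q hq => ?_)).trans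
      (h.sum_card_inter_le S)
    rw [mem_neighborFinset] at hq ⊢
    exact hHG hq
  not_has3RegularSubgraph := fun ⟨K, hK, hcubic⟩ =>
    h.not_has3RegularSubgraph ⟨K, hK.trans hHG, hcubic⟩

theorem sup_edge (h : Admissible Δ H) (hΔ : 2 ≤ Δ) (hpq : p ≠ q) (hp : H.degree p ≤ 1)
    (hq : H.degree q ≤ 1) : Admissible Δ (H ⊔ edge p q) := by
  have hadj : ∀ a b, (H ⊔ edge p q).Adj a b ↔ H.Adj a b ∨ (a = p ∧ b = q) ∨ (a = q ∧ b = p) :=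
    fun a b => by rw [sup_adj, edge_adj]; grind
  generalize H ⊔ edge p q = K at hadj ⊢
  have hsub : ∀ a b, ¬ (a = p ∧ b = q) → ¬ (a = q ∧ b = p) →
      b ∈ K.neighborFinset a → b ∈ H.neighborFinset a := fun a b hpq hqp hb => by
    rw [mem_neighborFinset, hadj] at hb
    rw [mem_neighborFinset]
    tauto
  have hend : ∀ a, a = p ∨ a = q → K.degree a ≤ 2 := by
    rintro a (rfl | rfl)
    · exact (card_le_card fun b hb => mem_insert.2 (or_iff_not_imp_left.2 fun hbq =>
        hsub a b (by tauto) (by tauto) hb)).trans ((card_insert_le q _).trans (Nat.succ_le_succ hp))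
    · exact (card_le_card fun b hb => mem_insert.2 (or_iff_not_imp_left.2 fun hbp =>
        hsub a b (by tauto) (by tauto) hb)).trans ((card_insert_le p _).trans (Nat.succ_le_succ hq))
  have hsum : ∀ S : Finset V, p ∉ S ∨ q ∉ S → ∑ a ∈ S, #(K.neighborFinset a ∩ S) ≤ 3 * #S :=
    fun S hS => (sum_le_sum fun a ha => card_le_card fun b hb => mem_inter.2
      ⟨hsub a b (by grind) (by grind) (mem_inter.1 hb).1, (mem_inter.1 hb).2⟩).trans
      (h.sum_card_inter_le S)
  refine ⟨fun a => ?_, fun S => ?_, fun hcubic => h.not_has3RegularSubgraph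
    (hcubic.of_degree_le_two fun a b hab => ?_)⟩
  · by_cases ha : a = p ∨ a = q
    · exact (hend a ha).trans hΔ
    · exact (card_le_card fun b => hsub a b (by tauto) (by tauto)).trans (h.degree_le a)
  · by_cases hS : p ∉ S ∨ q ∉ S
    · exact hsum S hS
    · exact sum_card_inter_le_of_adj ((hadj p q).2 (by tauto)) (hend p (.inl rfl))
        (hend q (.inr rfl)) (by tauto) (by tauto) (hsum _ (by simp))
  · exact ((hadj a b).1 hab).imp_right fun hpq => hend a (hpq.imp And.left And.left)

end Admissible

/-- An admissible graph with the fewest edges among those whose palette coloring fails. -/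
structure IsMinimalCounterexample (Δ : ℕ) (G : SimpleGraph V) : Prop extends Admissible Δ G where
  seven_le : 7 ≤ Δ
  not_colorable : ¬ PaletteColorable Δ G G ∅
  colorable_of_lt : ∀ H : SimpleGraph V, Admissible Δ H → H.edgeSet.ncard < G.edgeSet.ncard →
    PaletteColorable Δ H H ∅

/-- The graph obtained from `G` by deleting all edges at vertices in `S` and all edges between `T`
and low vertices. -/
def trim (G : SimpleGraph V) (S T : Set V) : SimpleGraph V where
  Adj a b := G.Adj a b ∧ a ∉ S ∧ b ∉ S ∧ ¬ (a ∈ T ∧ G.degree b ≤ 2) ∧ ¬ (b ∈ T ∧ G.degree a ≤ 2)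
  symm := ⟨fun _ _ h => ⟨h.1.symm, h.2.2.1, h.2.1, h.2.2.2.2, h.2.2.2.1⟩⟩
  loopless := ⟨fun _ h => h.1.ne rfl⟩

theorem trim_le {S T : Set V} : trim G S T ≤ G := fun _ _ h => h.1

theorem not_trim_adj_iff {S T : Set V} (hpq : G.Adj p q) : ¬ (trim G S T).Adj p q ↔
    p ∈ S ∨ q ∈ S ∨ (p ∈ T ∧ G.degree q ≤ 2) ∨ (q ∈ T ∧ G.degree p ≤ 2) := by
  simp only [trim]
  tauto

theorem IsMinimalCounterexample.colorable_trim (h : IsMinimalCounterexample Δ G) {S : Set V}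
    (T : Set V) (hpS : p ∈ S) (hpq : G.Adj p q) (hSR : S ⊆ R) (hlow : ∀ r, G.degree r ≤ 2 → r ∈ R) :
    PaletteColorable Δ G (trim G S T) R := by
  have hlt : (trim G S ∅).edgeSet ⊂ G.edgeSet :=
    edgeSet_ssubset_edgeSet.2 (trim_le.lt_of_not_ge fun hle => (hle hpq).2.1 hpS)
  obtain ⟨M, hM⟩ := h.colorable_of_lt _ (h.toAdmissible.mono trim_le) (Set.ncard_lt_ncard hlt)
  refine ⟨_, hM.restrict (R := R) (H := trim G S T)
    (fun a b hab => ⟨hab.1, hab.2.1, hab.2.2.1, by simp, by simp⟩) trim_le fun a b hab hn => ?_⟩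
  rw [not_trim_adj_iff hab] at hn
  by_cases ha : a ∈ S
  · exact Or.inl ⟨hSR ha, Or.inr fun r har => har.2.1 ha⟩
  by_cases hb : b ∈ S
  · exact Or.inr ⟨hSR hb, Or.inr fun r hbr => hbr.2.1 hb⟩
  have hadj : (trim G S ∅).Adj a b := ⟨hab, ha, hb, by simp, by simp⟩
  rcases hn with hn | hn | ⟨-, hn⟩ | ⟨-, hn⟩
  exacts [absurd hn ha, absurd hn hb, Or.inr ⟨hlow b hn, Or.inl hadj⟩,
    Or.inl ⟨hlow a hn, Or.inl hadj⟩]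

end MinimalCounterexample

section Reductions

open Finset SimpleGraph

variable {V : Type*} [Fintype V] {Δ : ℕ} {G H : SimpleGraph V} {R S T : Set V} {p q r u v w x y : V}

theorem erase_neighborFinset_eq_singleton (hv : G.degree v ≤ 2) (hvu : G.Adj v u) (hvw : G.Adj v w)
    (huw : u ≠ w) : (G.neighborFinset v).erase w = {u} := by
  refine (eq_of_subset_of_card_le (singleton_subset_iff.2 ?_) ?_).symm
  · exact mem_erase.2 ⟨huw, (G.mem_neighborFinset v u).2 hvu⟩
  · rw [card_erase_of_mem ((G.mem_neighborFinset v w).2 hvw), card_singleton]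
    exact Nat.sub_le_of_le_add hv

theorem eq_or_eq_of_adj (hv : G.degree v ≤ 2) (hvu : G.Adj v u) (hvw : G.Adj v w) (huw : u ≠ w)
    (hvr : G.Adj v r) : r = u ∨ r = w := by
  by_contra! hr
  have : r ∈ (G.neighborFinset v).erase w := mem_erase.2 ⟨hr.2, (G.mem_neighborFinset v r).2 hvr⟩
  rw [erase_neighborFinset_eq_singleton hv hvu hvw huw, mem_singleton] at this
  exact hr.1 this

theorem degree_le_two_of_bigDegree_eq_one (hu : bigDegree G u = 1) (huy : G.Adj u y)
    (hy : 2 < G.degree y) (hur : G.Adj u r) (hr : r ≠ y) : G.degree r ≤ 2 := by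
  by_contra! hr2
  exact hr (card_le_one.1 hu.le r (by simpa using ⟨hur, hr2⟩) y (by simpa using ⟨huy, hy⟩))

theorem isSoft_of_bigDegree_le_one (hp : bigDegree G p ≤ 1) (hdeg : G.degree p ≤ Δ) :
    IsSoft Δ G p := by
  have := bigDegree_add_lowDegree (G := G) p
  unfold IsSoft
  nlinarith

theorem paletteCard_le_bigDegree (hHG : H ≤ G) (hp : p ∈ R)
    (hbig : ∀ r, H.Adj p r → 2 < G.degree r) : paletteCard Δ H R p ≤ bigDegree G p := by
  rw [paletteCard, if_pos hp]
  refine card_le_card fun r hr => ?_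
  rw [mem_neighborFinset] at hr
  exact mem_filter.2 ⟨(G.mem_neighborFinset p r).2 (hHG hr), hbig r hr⟩

theorem lt_degree_of_trim_adj (hu : u ∈ T) (hur : (trim G S T).Adj u r) : 2 < G.degree r :=
  not_le.1 fun hr => hur.2.2.2.1 ⟨hu, hr⟩

theorem sum_erase_paletteCard_le (hG : ∀ p, G.degree p ≤ Δ) (hHG : H ≤ G)
    (hlow : ∀ r, G.degree r ≤ 2 → r ∈ R) (hpv : G.Adj p v) (hv : G.degree v ≤ 2) :
    ∑ r ∈ (G.neighborFinset p).erase v, paletteCard Δ H R r + 2 ≤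
      bigDegree G p * Δ + 2 * lowDegree G p := by
  refine (sum_erase_add_le ((G.mem_neighborFinset p v).2 hpv)
    (fun r _ _ => paletteCard_le_ite hG hHG hlow r) (by rw [if_pos hv])).trans_eq ?_
  rw [sum_ite_degree_le_two, Nat.cast_id, Nat.cast_id, mul_comm 2]

theorem sum_erase_le_lowDegree (hHG : H ≤ G) (hlow : ∀ r, G.degree r ≤ 2 → r ∈ R)
    (hu : bigDegree G u = 1) (huy : G.Adj u y) (hy : 2 < G.degree y) (hn : ∀ r, ¬ H.Adj r u) :
    ∑ r ∈ (G.neighborFinset u).erase y, paletteCard Δ H R r ≤ lowDegree G u := by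
  have hsum := sum_ite_degree_le_two (G := G) (A := ℕ) 0 1 u
  rw [mul_zero, mul_one, zero_add, Nat.cast_id] at hsum
  rw [← hsum, ← Nat.add_zero (∑ r ∈ (G.neighborFinset u).erase y, _)]
  refine sum_erase_add_le ((G.mem_neighborFinset u y).2 huy) (fun r hr hry => ?_) (Nat.zero_le _)
  have hur := (G.mem_neighborFinset u r).1 hr
  have hr2 := degree_le_two_of_bigDegree_eq_one hu huy hy hur hry
  rw [if_pos hr2]
  exact Nat.le_of_lt_succ ((paletteCard_lt_degree hHG (hlow r hr2) hur.symm (hn r)).trans_le hr2)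

namespace IsMinimalCounterexample

theorem two_le_degree (h : IsMinimalCounterexample Δ G) (hvq : G.Adj v q) : 2 ≤ G.degree v := by
  by_contra! hv
  have hΔ := h.seven_le
  have hnbr : (G.neighborFinset v).erase q = ∅ := by
    rw [← card_eq_zero, card_erase_of_mem ((G.mem_neighborFinset v q).2 hvq)]
    exact Nat.sub_eq_zero_of_le (Nat.le_of_lt_succ hv)
  have honly : ∀ r, G.Adj v r → r = q := fun r hvr => by
    by_contra hr
    exact notMem_empty r (hnbr ▸ mem_erase.2 ⟨hr, (G.mem_neighborFinset v r).2 hvr⟩)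
  have hn : ¬ (trim G {v} ∅).Adj q v := fun hqv => hqv.2.2.1 rfl
  have hcol := (h.colorable_trim (R := {r | G.degree r ≤ 2}) ∅ (S := {v}) rfl hvq (by simp; omega)
    fun r hr => hr).sup_edge hvq.symm hn (show G.degree v ≤ 2 by omega) ?_ ?_
  · refine h.not_colorable (hcol.complete h.degree_le (fun r hr => hr) (fun a b hab hn => ?_)
      fun p hp hp2 => absurd hp (not_le_of_gt hp2))
    simp only [sup_adj, edge_adj, not_or, not_trim_adj_iff hab, Set.mem_singleton_iff,
      Set.mem_empty_iff_false, false_and, or_false] at hn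
    grind [hab.symm, hab.ne]
  · intro hq
    rw [hnbr, sum_empty, add_zero]
    exact (sum_neighborFinset_erase_le hq hvq.symm (paletteCard_le h.degree_le trim_le _)).trans_lt
      (by omega)
  · rw [hnbr, sum_empty, add_zero]
    exact fun _ => (degree_lt_of_not_adj trim_le hvq.symm hn).trans_le (h.degree_le q)

theorem bigDegree_pos (h : IsMinimalCounterexample Δ G) (hwq : G.Adj w q) : 0 < bigDegree G w := by
  by_contra! hw
  have hlow : ∀ r, G.Adj w r → G.degree r ≤ 2 := fun r hwr => by
    by_contra! hr
    exact (card_pos.2 ⟨r, by simpa using ⟨hwr, hr⟩⟩).not_ge hw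
  have hloose : IsLoose Δ G w := by
    have := bigDegree_add_lowDegree (G := G) w
    have := h.degree_le w
    rw [IsLoose, Nat.le_zero.1 hw]
    omega
  have hcol := h.colorable_trim (R := {r | G.degree r ≤ 2 ∨ r = w}) ∅ (S := {w}) rfl hwq
    (by simp) fun r hr => Or.inl hr
  refine h.not_colorable (hcol.complete h.degree_le (fun r hr => Or.inl hr) (fun a b hab hn => ?_)
    fun p hp hp2 _ => Or.inl ?_)
  · simp only [not_trim_adj_iff hab, Set.mem_singleton_iff, Set.mem_empty_iff_false, false_and,
      or_false] at hn
    rcases hn with rfl | rfl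
    exacts [.inl ⟨.inr rfl, hloose, hlow b hab⟩, .inr ⟨.inr rfl, hloose, hlow a hab.symm⟩]
  · obtain rfl := hp.resolve_left hp2.not_ge
    exact isSoft_of_bigDegree_le_one (hw.trans zero_le_one) (h.degree_le p)

theorem exists_adj_ne (h : IsMinimalCounterexample Δ G) (hvw : G.Adj v w) :
    ∃ u, G.Adj v u ∧ u ≠ w := by
  obtain ⟨u, hu, huw⟩ := exists_mem_ne (h.two_le_degree hvw) w
  exact ⟨u, (G.mem_neighborFinset v u).1 hu, huw⟩

theorem two_lt_degree_of_low_path (h : IsMinimalCounterexample Δ G) (hv : G.degree v ≤ 2)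
    (hvu : G.Adj v u) (hvw : G.Adj v w) (huw : u ≠ w) (hu : G.degree u ≤ 2) : 2 < G.degree w := by
  obtain ⟨q, hq⟩ := card_pos.1 (h.bigDegree_pos hvw)
  rw [mem_filter, mem_neighborFinset] at hq
  obtain rfl | rfl := eq_or_eq_of_adj hv hvu hvw huw hq.1
  exacts [absurd hq.2 hu.not_gt, hq.2]

theorem degree_eq_of_low_path (h : IsMinimalCounterexample Δ G) (hu : bigDegree G u = 1)
    (hul : lowDegree G u ≤ 4) (hv : G.degree v ≤ 2) (hvu : G.Adj v u) (hvw : G.Adj v w)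
    (huw : u ≠ w) : G.degree w = Δ := by
  refine (h.degree_le w).antisymm (not_lt.1 fun hw => ?_)
  have hΔ := h.seven_le
  set R : Set V := {r | G.degree r ≤ 2 ∨ r = u} with hR
  have hn : ¬ (trim G {v} {u}).Adj w v := fun hwv => hwv.2.2.1 rfl
  have hsum : ∑ r ∈ (G.neighborFinset v).erase w, paletteCard Δ (trim G {v} {u}) R r ≤ 1 := by
    rw [erase_neighborFinset_eq_singleton hv hvu hvw huw, sum_singleton, ← hu]
    exact paletteCard_le_bigDegree trim_le (.inr rfl) fun r => lt_degree_of_trim_adj rfl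
  have hcol := (h.colorable_trim (R := R) {u} (S := {v}) rfl hvu (by simp [R, hv])
    fun r hr => Or.inl hr).sup_edge hvw.symm hn (Or.inl hv) (fun hw => ?_) fun _ => ?_
  · refine h.not_colorable (hcol.complete h.degree_le (fun r hr => Or.inl hr) (fun a b hab hn => ?_)
      fun p hp hp2 _ => Or.inl ?_)
    · simp only [sup_adj, edge_adj, not_or, not_trim_adj_iff hab, Set.mem_singleton_iff] at hn
      have := isLoose_of_bigDegree_eq_one hΔ hu hul
      have := fun r => eq_or_eq_of_adj hv hvu hvw huw (r := r)
      grind [hab.symm, hab.ne]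
    · obtain rfl := hp.resolve_left hp2.not_ge
      exact isSoft_of_bigDegree_le_one hu.le (h.degree_le p)
  · have := sum_neighborFinset_erase_le (hw.resolve_right huw.symm) hvw.symm
      (paletteCard_le h.degree_le (H := trim G {v} {u}) trim_le R)
    omega
  · have := degree_lt_of_not_adj trim_le hvw.symm hn
    omega

theorem lt_degree_add_lowDegree (h : IsMinimalCounterexample Δ G) (hu : bigDegree G u = 1)
    (hul : lowDegree G u ≤ 4) (huy : G.Adj u y) (hy : 2 < G.degree y) :
    Δ < G.degree y + lowDegree G u := by
  by_contra! hle
  have hΔ := h.seven_le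
  set R : Set V := {r | G.degree r ≤ 2 ∨ r = u} with hR
  have hn : ∀ r, ¬ (trim G {u} ∅).Adj r u := fun r hru => hru.2.2.1 rfl
  have hsum := sum_erase_le_lowDegree (Δ := Δ) (R := R) (trim_le (T := ∅)) (fun r hr => .inl hr) hu
    huy hy hn
  have hyR : y ∉ R := fun hy' => hy'.elim hy.not_ge fun hyu => huy.ne hyu.symm
  have hcol := (h.colorable_trim (R := R) ∅ (S := {u}) rfl huy (by simp [R])
    fun r hr => Or.inl hr).sup_edge huy.symm (hn y) (Or.inr rfl) (absurd · hyR) fun _ => ?_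
  · refine h.not_colorable (hcol.complete h.degree_le (fun r hr => Or.inl hr) (fun a b hab hn => ?_)
      fun p hp hp2 _ => Or.inl ?_)
    · simp only [sup_adj, edge_adj, not_or, not_trim_adj_iff hab, Set.mem_singleton_iff,
        Set.mem_empty_iff_false, false_and, or_false] at hn
      have := isLoose_of_bigDegree_eq_one hΔ hu hul
      have := fun r => degree_le_two_of_bigDegree_eq_one hu huy hy (r := r)
      grind [hab.symm, hab.ne]
    · obtain rfl := hp.resolve_left hp2.not_ge
      exact isSoft_of_bigDegree_le_one hu.le (h.degree_le p)
  · have := degree_lt_of_not_adj trim_le huy.symm (hn y)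
    omega

theorem not_low_path_of_bigDegree_le_two (h : IsMinimalCounterexample Δ G) (hv : G.degree v ≤ 2)
    (hvu : G.Adj v u) (hvw : G.Adj v w) (huw : u ≠ w) (hub : bigDegree G u ≤ 2)
    (hul : lowDegree G u ≤ 2) (hwb : bigDegree G w ≤ 2) (hwl : lowDegree G w ≤ 2) : False := by
  have hΔ := h.seven_le
  set R : Set V := {r | G.degree r ≤ 2 ∨ r = u ∨ r = w} with hR
  have hn : ∀ r, ¬ (trim G {v} ∅).Adj r v := fun r hru => hru.2.2.1 rfl
  have hsum : ∀ {H a b}, H ≤ G → a ∈ R → G.Adj v a → G.Adj v b → a ≠ b → bigDegree G a ≤ 2 →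
      lowDegree G a ≤ 2 → bigDegree G b ≤ 2 → lowDegree G b ≤ 2 →
      ∑ r ∈ (G.neighborFinset b).erase v, paletteCard Δ H R r +
      ∑ r ∈ (G.neighborFinset v).erase b, paletteCard Δ H R r < 3 * Δ := by
    intro H a b hHG ha hva hvb hab hab2 hal hbb hbl
    rw [erase_neighborFinset_eq_singleton hv hva hvb hab, sum_singleton]
    have := paletteCard_le_degree (Δ := Δ) hHG ha
    have := sum_erase_paletteCard_le h.degree_le hHG (R := R) (fun r hr => Or.inl hr) hvb.symm hv
    have := bigDegree_add_lowDegree (G := G) a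
    nlinarith
  have hcol := (h.colorable_trim (R := R) ∅ (S := {v}) rfl hvu (by simp [R, hv])
    fun r hr => Or.inl hr).sup_edge hvw.symm (hn w) (Or.inl hv)
    (fun _ => hsum trim_le (by simp [R]) hvu hvw huw hub hul hwb hwl) (absurd (by simp [R]))
  have hcol' := hcol.sup_edge hvu.symm (by simp [hn, edge_adj, huw, hvu.ne']) (Or.inl hv)
    (fun _ => hsum hcol.le (by simp [R]) hvw hvu huw.symm hwb hwl hub hul)
    (absurd (by simp [R]))
  refine h.not_colorable (hcol'.complete h.degree_le (fun r hr => Or.inl hr) (fun a b hab hn => ?_)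
      fun p hp hp2 _ => Or.inl ?_)
  · simp only [sup_adj, edge_adj, not_or, not_trim_adj_iff hab, Set.mem_singleton_iff,
        Set.mem_empty_iff_false, false_and, or_false] at hn
    have := fun r => eq_or_eq_of_adj hv hvu hvw huw (r := r)
    grind [hab.symm, hab.ne]
  · have := bigDegree_add_lowDegree (G := G) p
    unfold IsSoft
    rcases hp.resolve_left hp2.not_ge with rfl | rfl <;> nlinarith

end IsMinimalCounterexample

end Reductions

section RelaxedReductions

open Finset SimpleGraph

variable {V : Type*} [Fintype V] {Δ : ℕ} {G H : SimpleGraph V} {R S T : Set V} {p q r u v w x y : V}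

theorem IsConnector.exists_neighborFinset_eq (h : IsConnector G u) (hux : G.Adj u x)
    (hx : 2 < G.degree x) (huv : G.Adj u v) (hv : G.degree v ≤ 2) :
    ∃ y, y ≠ x ∧ 2 < G.degree y ∧ G.neighborFinset u = {x, y, v} := by
  obtain ⟨y, hy, hyx⟩ := exists_mem_ne (h.2.symm ▸ one_lt_two : 1 < bigDegree G u) x
  rw [mem_filter] at hy
  refine ⟨y, hyx, hy.2, (eq_of_subset_of_card_le (fun r hr => ?_) ?_).symm⟩
  · rw [mem_neighborFinset] at hy ⊢
    rcases (by simpa using hr) with rfl | rfl | rfl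
    exacts [hux, hy.1, huv]
  · rw [card_neighborFinset_eq_degree, h.1]
    exact (card_eq_three.2 ⟨x, y, v, hyx.symm, by grind, by grind, rfl⟩).ge

theorem IsLight.nbrWeight_le (hw : IsLight G w) (hk : pendantDegree G w = 0)
    (hdeg : G.degree w ≤ Δ) : nbrWeight Δ G w ≤ 2 * Δ + G.degree w := by
  have hsum := bigDegree_add_lowDegree (G := G) w
  rw [bigDegree_eq, hk] at hsum
  rw [nbrWeight_eq, hk]
  rcases hw with ⟨ho, hc⟩ | ⟨ho, hc⟩ <;> rw [ho] at hsum ⊢ <;> omega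

theorem low_mem_relaxed (S : Set V) (r : V) (hr : G.degree r ≤ 2) : r ∈ relaxed G S := Or.inl hr

theorem mem_relaxed_of_mem (hp : p ∈ S) : p ∈ relaxed G S := Or.inr (Or.inl hp)

theorem IsConnector.mem_relaxed (h : IsConnector G r) (hp : p ∈ S) (hpr : G.Adj p r) :
    r ∈ relaxed G S := Or.inr (Or.inr ⟨h, p, hp, hpr⟩)

theorem sum_erase_add_le_nbrWeight (hG : ∀ p, G.degree p ≤ Δ) (hHG : H ≤ G) (hp : p ∈ S)
    (hpq : G.Adj p q) : ∑ r ∈ (G.neighborFinset p).erase q, paletteCard Δ H (relaxed G S) r +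
      byKind G Δ 3 Δ 2 q ≤ nbrWeight Δ G p := by
  refine sum_erase_add_le ((G.mem_neighborFinset p q).2 hpq) (fun r hr _ => ?_) le_rfl
  exact paletteCard_le_byKind hG hHG (low_mem_relaxed S)
    (fun hc => hc.mem_relaxed hp ((G.mem_neighborFinset p r).1 hr))
    fun _ => paletteCard_le hG hHG _ r

theorem byKind_of_degree_le_two (hv : G.degree v ≤ 2) {A : Type*} (o c k l : A) :
    byKind G o c k l v = l := if_pos hv

theorem byKind_of_isConnector (hu : IsConnector G u) {A : Type*} (o c k l : A) :
    byKind G o c k l u = c := by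
  rw [byKind, if_neg (by have := hu.1; omega), if_pos hu]

theorem byKind_of_isPendant (hu : IsPendant G u) {A : Type*} (o c k l : A) :
    byKind G o c k l u = k := by
  have hc : ¬ IsConnector G u := fun hc => by simp [IsConnector, hu.2] at hc
  rw [byKind, if_neg (by have := hu.1; omega), if_neg hc, if_pos hu]

theorem sum_erase_le_of_mem_relaxed (hG : ∀ p, G.degree p ≤ Δ) (hHG : H ≤ G)
    (hS : ∀ p ∈ S, nbrWeight Δ G p ≤ 2 * Δ + 3) (hw : w ∈ relaxed G S) (hwv : G.Adj w v)
    (hv : G.degree v ≤ 2) :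
    ∑ r ∈ (G.neighborFinset w).erase v, paletteCard Δ H (relaxed G S) r ≤ 2 * Δ + 1 := by
  rcases hw with hw | hw | ⟨hw, -⟩
  · have := sum_neighborFinset_erase_le hw hwv (paletteCard_le hG hHG (relaxed G S))
    omega
  · have := sum_erase_add_le_nbrWeight hG hHG hw hwv
    rw [byKind_of_degree_le_two hv] at this
    have := hS w hw
    omega
  · have := sum_erase_paletteCard_le hG hHG (low_mem_relaxed S) hwv hv
    rw [hw.2, hw.lowDegree_eq] at this
    omega

theorem PaletteColorable.complete_relaxed (h : PaletteColorable Δ G H (relaxed G S))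
    (hG : ∀ p, G.degree p ≤ Δ)
    (hmissing : ∀ p q, G.Adj p q → ¬ H.Adj p q →
      (p ∈ S ∧ IsLoose Δ G p ∧ G.degree q ≤ 2) ∨ (q ∈ S ∧ IsLoose Δ G q ∧ G.degree p ≤ 2))
    (hS : ∀ p ∈ S, 2 < G.degree p → IsSoft Δ G p ∨ nbrWeight Δ G p ≤ 2 * Δ + G.degree p) :
    PaletteColorable Δ G G ∅ := by
  refine h.complete hG (low_mem_relaxed S) (fun p q hpq hn => ?_) fun p hp hp2 hc => ?_
  · exact (hmissing p q hpq hn).imp (And.imp_left mem_relaxed_of_mem)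
      (And.imp_left mem_relaxed_of_mem)
  · have hpS : p ∈ S := (hp.resolve_left hp2.not_ge).resolve_right fun hp => hc hp.1
    exact (hS p hpS hp2).imp_right fun hwt => ⟨fun r hpr hr => hr.mem_relaxed hpS hpr, hwt⟩

namespace IsMinimalCounterexample

theorem le_degree_add_one_of_isRoomy (h : IsMinimalCounterexample Δ G) (hu : IsConnector G u)
    (hux : G.Adj u x) (hx2 : 2 < G.degree x) (hx : IsRoomy Δ G x) (hv : G.degree v ≤ 2)
    (hvu : G.Adj v u) (hvw : G.Adj v w) (huw : u ≠ w) : Δ ≤ G.degree w + 1 := by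
  by_contra! hw
  have hΔ := h.seven_le
  obtain ⟨y, hyx, hy2, hNu⟩ := hu.exists_neighborFinset_eq hux hx2 hvu.symm hv
  set R := relaxed G {x} with hR
  have hxR : x ∈ R := mem_relaxed_of_mem rfl
  have huR : u ∈ R := hu.mem_relaxed rfl hux.symm
  have hn : ∀ r, ¬ (trim G {v} ∅).Adj r v := fun r hru => hru.2.2.1 rfl
  have hload_u := paletteCard_lt_degree (Δ := Δ) (trim_le (S := {v}) (T := ∅)) huR hvu.symm (hn u)
  rw [hu.1] at hload_u
  have hcol := (h.colorable_trim (R := R) ∅ (S := {v}) rfl hvu (by simp [R, relaxed, hv])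
    (low_mem_relaxed _)).sup_edge hvw.symm (hn w) (low_mem_relaxed _ v hv) (fun hwR => ?_)
      fun _ => ?_
  · have hHG : trim G {v} ∅ ⊔ edge w v ≤ G := hcol.le
    have hcol' := hcol.sup_edge hvu.symm (by simp [hn, edge_adj, huw, hvu.ne'])
      (low_mem_relaxed _ v hv) (fun _ => ?_) (absurd huR)
    · refine h.not_colorable (hcol'.complete_relaxed h.degree_le (fun a b hab hn => ?_)
        fun p hp hp2 => Or.inr ?_)
      · simp only [sup_adj, edge_adj, not_or, not_trim_adj_iff hab, Set.mem_singleton_iff,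
          Set.mem_empty_iff_false, false_and, or_false] at hn
        have := fun r => eq_or_eq_of_adj hv hvu hvw huw (r := r)
        grind [hab.symm, hab.ne]
      · obtain rfl : p = x := hp
        exact hx.2.trans (Nat.add_le_add_left hp2 _)
    · rw [erase_neighborFinset_eq_singleton hv hvw hvu huw.symm, sum_singleton, hNu]
      have hxv : x ≠ v := by grind
      have hyv : y ≠ v := by grind
      have hvxy : ({x, y, v} : Finset V).erase v = {x, y} := by grind
      rw [hvxy, sum_pair hyx.symm]
      have := (paletteCard_le_degree (Δ := Δ) hHG hxR).trans (Nat.le_sub_of_add_le hx.1)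
      have := paletteCard_le h.degree_le hHG R y
      have := paletteCard_le h.degree_le hHG R w
      omega
  · rw [erase_neighborFinset_eq_singleton hv hvu hvw huw, sum_singleton]
    have := sum_erase_le_of_mem_relaxed h.degree_le (H := trim G {v} ∅) trim_le
      (by rintro p rfl; exact hx.2) hwR hvw.symm hv
    rw [← hR] at this
    omega
  · rw [erase_neighborFinset_eq_singleton hv hvu hvw huw, sum_singleton]
    have := degree_lt_of_not_adj trim_le hvw.symm (hn w)
    omega

end IsMinimalCounterexample

end RelaxedReductions

section ConnectorReductions

open Finset SimpleGraph

variable {V : Type*} [Fintype V] {Δ : ℕ} {G H : SimpleGraph V} {S T : Set V} {p q r u v w x y : V}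

theorem sum_connector_edge_lt (hG : ∀ p, G.degree p ≤ Δ) (hHG : H ≤ G) (hu : IsConnector G u)
    (hNu : G.neighborFinset u = {x, y, v}) (hxy : x ≠ y) (hyv : y ≠ v) (hxv : x ≠ v)
    (hxS : x ∈ S) (hyS : y ∈ S) (hx : IsRoomy Δ G x) (hy : IsRoomy Δ G y) (hv : G.degree v ≤ 2)
    (hn : ¬ H.Adj v u) :
    ∑ r ∈ (G.neighborFinset x).erase u, paletteCard Δ H (relaxed G S) r +
      ∑ r ∈ (G.neighborFinset u).erase x, paletteCard Δ H (relaxed G S) r < 3 * Δ := by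
  have hadj : ∀ r, G.Adj u r ↔ r = x ∨ r = y ∨ r = v := fun r => by
    rw [← mem_neighborFinset, hNu, mem_insert, mem_insert, mem_singleton]
  have hsum := sum_erase_add_le_nbrWeight hG hHG hxS ((hadj x).2 (.inl rfl)).symm
  rw [byKind_of_isConnector hu] at hsum
  have herase : ({x, y, v} : Finset V).erase x = {y, v} := by grind
  rw [hNu, herase, sum_pair hyv]
  have := paletteCard_le_degree (Δ := Δ) hHG (mem_relaxed_of_mem (G := G) hyS)
  have := paletteCard_lt_degree (Δ := Δ) hHG (low_mem_relaxed S v hv)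
    ((hadj v).2 (.inr (.inr rfl))).symm hn
  have := hx.2
  have := hy.1
  omega

theorem PaletteColorable.restore_connector (h : PaletteColorable Δ G H (relaxed G {x, y}))
    (hG : ∀ p, G.degree p ≤ Δ) (hu : IsConnector G u) (hNu : G.neighborFinset u = {x, y, v})
    (hxy : x ≠ y) (hxv : x ≠ v) (hyv : y ≠ v) (hx : IsRoomy Δ G x) (hy : IsRoomy Δ G y)
    (hv : G.degree v ≤ 2) (hvw : G.Adj v w) (huw : u ≠ w) (hn : ∀ r, ¬ H.Adj r u) :
    PaletteColorable Δ G (H ⊔ edge x u ⊔ edge y u ⊔ edge u v) (relaxed G {x, y}) := by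
  have hadj : ∀ r, G.Adj u r ↔ r = x ∨ r = y ∨ r = v := fun r => by
    rw [← mem_neighborFinset, hNu, mem_insert, mem_insert, mem_singleton]
  have hux := (hadj x).2 (.inl rfl)
  have huy := (hadj y).2 (.inr (.inl rfl))
  have huv := (hadj v).2 (.inr (.inr rfl))
  have hxS : x ∈ ({x, y} : Set V) := .inl rfl
  have hyS : y ∈ ({x, y} : Set V) := .inr rfl
  have hxR : x ∈ relaxed G {x, y} := mem_relaxed_of_mem hxS
  have hyR : y ∈ relaxed G {x, y} := mem_relaxed_of_mem hyS
  have huR : u ∈ relaxed G {x, y} := hu.mem_relaxed hxS hux.symm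
  have h₁ := h.sup_edge hux.symm (hn x) huR (fun _ => sum_connector_edge_lt hG h.le hu hNu
    hxy hyv hxv hxS hyS hx hy hv (hn v)) (absurd hxR)
  have hNu' : G.neighborFinset u = {y, x, v} := hNu.trans (Finset.insert_comm _ _ _)
  have h₂ := h₁.sup_edge huy.symm (by grind) huR (fun _ =>
    sum_connector_edge_lt hG h₁.le hu hNu' hxy.symm hxv hyv hyS hxS hy hx hv
      (by grind)) (absurd hyR)
  refine h₂.sup_edge huv (fun h => ?_) (low_mem_relaxed _ v hv) (fun _ => ?_) (absurd huR)
  · simp only [sup_adj, edge_adj, H.adj_comm u] at h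
    grind
  · rw [erase_neighborFinset_eq_singleton hv hvw huv.symm huw.symm, sum_singleton, hNu]
    have hvxy : ({x, y, v} : Finset V).erase v = {x, y} := by grind
    rw [hvxy, sum_pair hxy]
    have := paletteCard_le_degree (Δ := Δ) h₂.le hxR
    have := paletteCard_le_degree (Δ := Δ) h₂.le hyR
    have := hx.1
    have := hy.1
    have := paletteCard_le hG h₂.le (relaxed G {x, y}) w
    omega

namespace IsMinimalCounterexample

theorem not_isRoomy_of_isRoomy (h : IsMinimalCounterexample Δ G) (hu : IsConnector G u)
    (hux : G.Adj u x) (hx2 : 2 < G.degree x) (hx : IsRoomy Δ G x)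
    (huy : G.Adj u y) (hy2 : 2 < G.degree y) (hxy : x ≠ y) (hv : G.degree v ≤ 2)
    (hvu : G.Adj v u) (hvw : G.Adj v w) (huw : u ≠ w) : ¬ IsRoomy Δ G y := by
  intro hy
  have hΔ := h.seven_le
  have hNu : G.neighborFinset u = {x, y, v} := by
    obtain ⟨z, hzx, hz2, hNu⟩ := hu.exists_neighborFinset_eq hux hx2 hvu.symm hv
    rw [← mem_neighborFinset, hNu] at huy
    grind
  set R := relaxed G {x, y} with hR
  have hS : ∀ p ∈ ({x, y} : Set V), IsRoomy Δ G p := by rintro p (rfl | rfl); exacts [hx, hy]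
  have huR : u ∈ R := hu.mem_relaxed (.inl rfl) hux.symm
  have hvR : v ∈ R := low_mem_relaxed _ v hv
  have hn : ∀ a b, (trim G {v, u} ∅).Adj a b ↔ G.Adj a b ∧ a ≠ v ∧ a ≠ u ∧ b ≠ v ∧ b ≠ u := by
    intro a b
    simp [trim, and_assoc]
  have hload_u : paletteCard Δ (trim G {v, u} ∅) R u = 0 := by
    rw [paletteCard, if_pos huR, ← card_neighborFinset_eq_degree, card_eq_zero,
      eq_empty_iff_forall_notMem]
    exact fun r hr => ((hn u r).1 ((mem_neighborFinset _ _ _).1 hr)).2.2.1 rfl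
  have hcol := (h.colorable_trim (R := R) ∅ (S := {v, u}) (.inl rfl) hvu
    (by rintro p (rfl | rfl) <;> assumption) (low_mem_relaxed _)).sup_edge hvw.symm
    (by simp [hn]) hvR (fun hwR => ?_) fun _ => ?_
  · have hcol' := hcol.restore_connector h.degree_le hu hNu hxy (by grind) (by grind) hx hy hv hvw
      huw (by simp only [sup_adj, edge_adj, hn]; grind [hvu.ne])
    refine h.not_colorable (hcol'.complete_relaxed h.degree_le (fun a b hab hn' => ?_)
      fun p hp hp2 => Or.inr ((hS p hp).2.trans (Nat.add_le_add_left hp2 _)))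
    have := fun r => eq_or_eq_of_adj hv hvu hvw huw (r := r)
    have := fun r => (G.mem_neighborFinset u r).symm
    simp only [sup_adj, edge_adj, hn] at hn'
    grind [hab.symm, hab.ne]
  · rw [erase_neighborFinset_eq_singleton hv hvu hvw huw, sum_singleton, hload_u]
    have := sum_erase_le_of_mem_relaxed h.degree_le (H := trim G {v, u} ∅) trim_le
      (fun p hp => (hS p hp).2) hwR hvw.symm hv
    rw [← hR] at this
    omega
  · rw [erase_neighborFinset_eq_singleton hv hvu hvw huw, sum_singleton, hload_u]
    exact degree_lt_of_not_adj trim_le hvw.symm (by simp [hn]) |>.trans_le (h.degree_le w)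

end IsMinimalCounterexample

end ConnectorReductions

section LightReductions

open Finset SimpleGraph

variable {V : Type*} [Fintype V] {Δ : ℕ} {G H : SimpleGraph V} {S T : Set V} {p q r u v w x y : V}

theorem degree_eq_of_forall_adj (hHG : H ≤ G) (h : ∀ r, G.Adj p r → H.Adj p r) :
    H.degree p = G.degree p := by
  simp only [← card_neighborFinset_eq_degree]
  congr 1
  ext r
  simpa only [mem_neighborFinset] using ⟨fun hr => hHG hr, h r⟩

theorem sum_byKind_lt_of_isLight (hG : ∀ p, G.degree p ≤ Δ) (hΔ : 7 ≤ Δ) (hw : IsLight G w)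
    (hk : pendantDegree G w ≠ 0) : ∑ r ∈ G.neighborFinset w, byKind G Δ 3 1 2 r + 1 < 3 * Δ ∧
      ∑ r ∈ G.neighborFinset w, byKind G Δ 3 1 2 r ≤ 2 * Δ + G.degree w := by
  have hdeg := bigDegree_add_lowDegree (G := G) w
  have := hG w
  rw [bigDegree_eq] at hdeg
  rw [sum_byKind]
  simp only [Nat.cast_id]
  rcases hw with ⟨ho, hc⟩ | ⟨ho, hc⟩ <;> rw [ho] at hdeg ⊢ <;> omega

theorem PaletteColorable.complete_pendants {K : Set V}
    (h : PaletteColorable Δ G H ((relaxed G {w} ∪ K) \ {w})) (hG : ∀ p, G.degree p ≤ Δ)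
    (hΔ : 7 ≤ Δ) (hw2 : 2 < G.degree w) (hwK : w ∉ K) (hK : ∀ p ∈ K, IsPendant G p)
    (hmissing : ∀ p q, G.Adj p q → ¬ H.Adj p q →
      (p ∈ K ∧ G.degree q ≤ 2) ∨ (q ∈ K ∧ G.degree p ≤ 2)) : PaletteColorable Δ G G ∅ := by
  have hloose : ∀ p ∈ K, p ∈ (relaxed G {w} ∪ K) \ {w} ∧ IsLoose Δ G p := fun p hp =>
    ⟨⟨.inr hp, fun hpw => hwK (hpw ▸ hp)⟩,
      isLoose_of_bigDegree_eq_one hΔ (hK p hp).2 (by have := (hK p hp).lowDegree_eq; omega)⟩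
  refine h.complete hG (fun r hr => ⟨.inl (low_mem_relaxed _ r hr), by grind⟩)
    (fun a b hab hn => by grind) fun p hp hp2 hc => .inl ?_
  have hpK : p ∈ K := by
    rcases hp with ⟨(hp | hp | hp) | hp, hpw⟩
    exacts [absurd hp hp2.not_ge, absurd hp hpw, absurd hp.1 hc, hp]
  exact isSoft_of_bigDegree_le_one (hK p hpK).2.le (hG p)

namespace IsMinimalCounterexample

theorem not_low_path_of_isLight (h : IsMinimalCounterexample Δ G) (hw : IsLight G w)
    (hk : pendantDegree G w = 0) (hu : bigDegree G u = 1) (hul : lowDegree G u ≤ 4)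
    (hv : G.degree v ≤ 2) (hvu : G.Adj v u) (hvw : G.Adj v w) (huw : u ≠ w) : False := by
  have hΔ := h.seven_le
  have hwt := hw.nbrWeight_le hk (h.degree_le w)
  set R := relaxed G {w, u} with hR
  have huR : u ∈ R := mem_relaxed_of_mem (.inr rfl)
  have hwR : w ∈ R := mem_relaxed_of_mem (.inl rfl)
  have hn : ¬ (trim G {v} {u}).Adj w v := fun hwv => hwv.2.2.1 rfl
  have hcol := (h.colorable_trim (R := R) {u} (S := {v}) rfl hvu (by simp [R, relaxed, hv])
    (low_mem_relaxed _)).sup_edge hvw.symm hn (low_mem_relaxed _ v hv) (fun _ => ?_) (absurd hwR)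
  · refine h.not_colorable (hcol.complete_relaxed h.degree_le (fun a b hab hn => ?_) ?_)
    · simp only [sup_adj, edge_adj, not_or, not_trim_adj_iff hab, Set.mem_singleton_iff] at hn
      have := isLoose_of_bigDegree_eq_one hΔ hu hul
      have := fun r => eq_or_eq_of_adj hv hvu hvw huw (r := r)
      grind [hab.symm, hab.ne]
    · rintro p (rfl | rfl) -
      exacts [.inr hwt, .inl (isSoft_of_bigDegree_le_one hu.le (h.degree_le p))]
  · have hsum := sum_erase_add_le_nbrWeight h.degree_le (trim_le (S := {v}) (T := {u}))
      (S := {w, u}) (.inl rfl) hvw.symm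
    rw [byKind_of_degree_le_two hv, ← hR] at hsum
    rw [erase_neighborFinset_eq_singleton hv hvu hvw huw, sum_singleton]
    have := paletteCard_le_bigDegree (Δ := Δ) (H := trim G {v} {u}) trim_le huR
      fun r => lt_degree_of_trim_adj rfl
    have := h.degree_le w
    omega

theorem eq_of_isLight_of_low_path (h : IsMinimalCounterexample Δ G) (hw : IsLight G w)
    (hk : pendantDegree G w = 0) (hu : IsConnector G u)
    (hv : G.degree v ≤ 2) (hvu : G.Adj v u) (hvw : G.Adj v w) (huw : u ≠ w) :
    otherDegree G w = 1 ∧ connectorDegree G w = 1 ∧ G.degree w = Δ := by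
  by_contra hcon
  have hΔ := h.seven_le
  have hwt := hw.nbrWeight_le hk (h.degree_le w)
  have hwt' : nbrWeight Δ G w + 2 ≤ 3 * Δ := by
    have hsum := bigDegree_add_lowDegree (G := G) w
    have := h.degree_le w
    rw [bigDegree_eq, hk] at hsum
    rw [nbrWeight_eq, hk]
    rcases hw with ⟨ho, hc⟩ | ⟨ho, hc⟩ <;> rw [ho] at hsum hcon ⊢ <;> omega
  set R := relaxed G {w, u} with hR
  have huR : u ∈ R := mem_relaxed_of_mem (.inr rfl)
  have hwR : w ∈ R := mem_relaxed_of_mem (.inl rfl)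
  have hvR : v ∈ R := low_mem_relaxed _ v hv
  have hn : ∀ r, ¬ (trim G {v} ∅).Adj r v := fun r hrv => hrv.2.2.1 rfl
  have hcol := (h.colorable_trim (R := R) ∅ (S := {v}) rfl hvu (by simp [R, relaxed, hv])
    (low_mem_relaxed _)).sup_edge hvu.symm (hn u) hvR (fun _ => ?_) (absurd huR)
  · have hcol' := hcol.sup_edge hvw.symm (by simp [hn, edge_adj, huw.symm, hvw.ne']) hvR
      (fun _ => ?_) (absurd hwR)
    · refine h.not_colorable (hcol'.complete_relaxed h.degree_le (fun a b hab hn => ?_) ?_)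
      · simp only [sup_adj, edge_adj, not_or, not_trim_adj_iff hab, Set.mem_singleton_iff,
          Set.mem_empty_iff_false, false_and, or_false] at hn
        have := fun r => eq_or_eq_of_adj hv hvu hvw huw (r := r)
        grind [hab.symm, hab.ne]
      · rintro p (rfl | rfl) -
        exacts [.inr hwt, .inl hu.isSoft]
    · have hsum := sum_erase_add_le_nbrWeight h.degree_le hcol.le (S := {w, u}) (.inl rfl) hvw.symm
      rw [byKind_of_degree_le_two hv, ← hR] at hsum
      rw [erase_neighborFinset_eq_singleton hv hvu hvw huw, sum_singleton]
      have := paletteCard_le_degree (Δ := Δ) hcol.le huR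
      have := hu.1
      omega
  · have hsum := sum_erase_paletteCard_le h.degree_le (H := trim G {v} ∅) trim_le
      (low_mem_relaxed {w, u}) hvu.symm hv
    rw [hu.2, hu.lowDegree_eq, ← hR] at hsum
    rw [erase_neighborFinset_eq_singleton hv hvw hvu huw.symm, sum_singleton]
    have := paletteCard_lt_degree (Δ := Δ) (trim_le (S := {v}) (T := ∅)) hwR hvw.symm (hn w)
    have := h.degree_le w
    omega

theorem pendantDegree_eq_zero_of_isLight (h : IsMinimalCounterexample Δ G) (hw : IsLight G w)
    (hw2 : 2 < G.degree w) (hwp : ¬ IsPendant G w) : pendantDegree G w = 0 := by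
  by_contra hk
  have hΔ := h.seven_le
  obtain ⟨hlt, hle⟩ := sum_byKind_lt_of_isLight h.degree_le hΔ hw hk
  set K : Set V := {r | G.Adj w r ∧ IsPendant G r} with hK
  obtain ⟨k, hk⟩ := card_pos.1 (Nat.pos_of_ne_zero hk)
  obtain ⟨hwk, hkp⟩ : k ∈ K := by simpa [hK] using hk
  set R := relaxed G {w} ∪ K
  have hlow : ∀ r, G.degree r ≤ 2 → r ∈ R := fun r hr => .inl (low_mem_relaxed _ r hr)
  have hwR : w ∈ R := .inl (mem_relaxed_of_mem rfl)
  have hload : ∀ H : SimpleGraph V, H ≤ G → (∀ a ∈ K, ∀ b, H.Adj a b → 2 < G.degree b) →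
      ∀ r ∈ G.neighborFinset w, paletteCard Δ H R r ≤ byKind G Δ 3 1 2 r := by
    intro H hHG hH r hr
    rw [mem_neighborFinset] at hr
    exact paletteCard_le_byKind h.degree_le hHG hlow (fun hc => .inl (hc.mem_relaxed rfl hr))
      fun hp => (paletteCard_le_bigDegree hHG (.inr ⟨hr, hp⟩) (hH r ⟨hr, hp⟩)).trans_eq hp.2
  have hn : ∀ r, ¬ (trim G {k} K).Adj r k := fun r hrk => hrk.2.2.1 rfl
  have hcol := (h.colorable_trim (R := R) K (S := {k}) rfl hwk.symm
    (by rintro p rfl; exact .inr ⟨hwk, hkp⟩) hlow).sup_edge hwk (hn w) (.inr ⟨hwk, hkp⟩)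
    (fun _ => ?_) (absurd hwR)
  · have hbig : ∀ a ∈ K, ∀ b, (trim G {k} K ⊔ edge w k).Adj a b → 2 < G.degree b := by
      rintro a ha b (hab | hab)
      · exact lt_degree_of_trim_adj ha hab
      · grind
    have hadj : ∀ r, G.Adj w r → (trim G {k} K ⊔ edge w k).Adj w r := fun r hr => by
      rw [sup_adj, or_iff_not_imp_left, not_trim_adj_iff hr]
      grind
    have hfill := hcol.fill (p := w) ?_ ?_
    · refine h.not_colorable (hfill.complete_pendants h.degree_le hΔ hw2 (fun hw => hw.1.ne rfl)
        (fun p hp => hp.2) fun a b hab hn => ?_)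
      simp only [sup_adj, edge_adj, not_or, not_trim_adj_iff hab, Set.mem_singleton_iff] at hn
      have := fun r => degree_le_two_of_bigDegree_eq_one hkp.2 hwk.symm hw2 (r := r)
      grind [hab.symm, hab.ne]
    · exact (degree_eq_of_forall_adj hcol.le hadj).trans_le (h.degree_le w)
    · exact (sum_le_sum (hload _ hcol.le hbig)).trans
        (hle.trans_eq (by rw [degree_eq_of_forall_adj hcol.le hadj]))
  · have := sum_erase_le_lowDegree (Δ := Δ) (H := trim G {k} K) trim_le hlow hkp.2 hwk.symm hw2 hn
    have := sum_erase_add_le ((G.mem_neighborFinset w k).2 hwk)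
      (fun r hr _ => hload (trim G {k} K) trim_le (fun a ha b => lt_degree_of_trim_adj ha) r hr)
      (x := 1) (by simp [byKind, IsConnector, hkp, hkp.1, hkp.2])
    have := hkp.lowDegree_eq
    omega

end IsMinimalCounterexample

end LightReductions

section ThreadPairs

open Finset SimpleGraph

variable {V : Type*} [Fintype V] {Δ : ℕ} {G H : SimpleGraph V} {R : Set V} {u u' v v' w : V}

theorem exists_mem_ne_notMem {α : Type*} {F A B : Finset α} (hF : 1 < #F) (hA : #A ≤ 1)
    (hB : #B ≤ 1) (hAB : Disjoint A B) : ∃ a ∈ F, ∃ b ∈ F, a ≠ b ∧ a ∉ A ∧ b ∉ B := by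
  obtain ⟨a, ha, b, hb, hab⟩ := one_lt_card.1 hF
  rw [card_le_one] at hA hB
  rw [Finset.disjoint_left] at hAB
  grind

theorem IsPalette.colorable_sup_edge_sup_edge {M : V → Finset (Fin (3 * Δ))}
    (hM : IsPalette Δ G H R M) (hwR : w ∉ R) (hw : H.degree w + 1 < Δ) (hwv : G.Adj w v)
    (hwv' : G.Adj w v') (hvv' : v ≠ v') (hn : ¬ H.Adj w v) (hn' : ¬ H.Adj w v') (hv : v ∈ R)
    (hv' : v' ∈ R) (hvu : ∀ r, G.Adj v r → r ≠ w → r = u)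
    (hvu' : ∀ r, G.Adj v' r → r ≠ w → r = u') (hu : #(M u) ≤ 1) (hu' : #(M u') ≤ 1)
    (hdisj : Disjoint (M u) (M u')) : PaletteColorable Δ G (H ⊔ edge w v ⊔ edge w v') R := by
  have hfree : 1 < #{c ∈ M w | ¬ ∃ q, H.Adj w q ∧ c ∈ M q} := by
    have := card_filter_add_card_filter_not (s := M w) (fun c => ∃ q, H.Adj w q ∧ c ∈ M q)
    rw [hM.card_used, hM.card_of_notMem hwR] at this
    omega
  obtain ⟨c, hc, c', hc', hcc', hcu, hcu'⟩ := exists_mem_ne_notMem hfree hu hu' hdisj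
  rw [mem_filter] at hc hc'
  have hfresh : ∀ {d}, d ∈ M w → (¬ ∃ q, H.Adj w q ∧ d ∈ M q) → ∀ r, G.Adj w r → d ∉ M r :=
    fun hd hno r hwr hdr => hno ⟨r, hM.adj_of_mem hwr hd hdr, hdr⟩
  have hM' := hM.sup_edge (c := c) hwv hn (fun _ => hc.1) (absurd hv)
    (fun r hwr _ => hfresh hc.1 hc.2 r hwr) fun r hr hrw => hvu r hr hrw ▸ hcu
  refine ⟨_, hM'.sup_edge (c := c') hwv' (by grind) (fun _ => by grind) (absurd hv')
    (fun r hwr _ => ?_) fun r hr hrw => ?_⟩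
  · have := hfresh hc'.1 hc'.2 r hwr
    grind [hwr.ne]
  · have := hfresh hc'.1 hc'.2 v hwv
    grind [hvu' r hr hrw]

namespace IsMinimalCounterexample

theorem admissible_trim_sup_edge (h : IsMinimalCounterexample Δ G) (hvu : G.Adj v u)
    (hvu' : G.Adj v' u') (hu : G.degree u ≤ 2) (hu' : G.degree u' ≤ 2) (huu' : u ≠ u') :
    Admissible Δ (trim G {v, v'} ∅ ⊔ edge u u') := by
  have hdeg : ∀ {a b}, a ∈ ({v, v'} : Set V) → G.Adj a b → G.degree b ≤ 2 →
      (trim G {v, v'} ∅).degree b ≤ 1 := fun ha hab hb =>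
    Nat.le_of_lt_succ ((degree_lt_of_not_adj trim_le hab.symm fun hba => hba.2.2.1 ha).trans_le hb)
  exact (h.toAdmissible.mono trim_le).sup_edge (by have := h.seven_le; omega) huu'
    (hdeg (.inl rfl) hvu hu) (hdeg (.inr rfl) hvu' hu')

theorem ncard_edgeSet_trim_sup_edge_lt (hwv : G.Adj w v) (hwv' : G.Adj w v') (hvv' : v ≠ v') :
    (trim G {v, v'} ∅ ⊔ edge u u').edgeSet.ncard < G.edgeSet.ncard := by
  have hsub : (trim G {v, v'} ∅ ⊔ edge u u').edgeSet ⊆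
      insert s(u, u') (G.edgeSet \ {s(w, v), s(w, v')}) := by
    intro e he
    induction e with | h a b => ?_
    simp only [mem_edgeSet, sup_adj, edge_adj, trim] at he
    simp only [Set.mem_insert_iff, Set.mem_sdiff, Set.mem_singleton_iff, mem_edgeSet, Sym2.eq_iff]
    grind
  have hpair : ({s(w, v), s(w, v')} : Set (Sym2 V)).ncard = 2 :=
    Set.ncard_pair fun heq => hvv' (Sym2.congr_right.1 heq)
  have hdiff := Set.ncard_sdiff_add_ncard_of_subset (s := {s(w, v), s(w, v')}) (t := G.edgeSet)
    (Set.insert_subset hwv (Set.singleton_subset_iff.2 hwv'))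
  have := Set.ncard_le_ncard hsub
  have := Set.ncard_insert_le s(u, u') (G.edgeSet \ {s(w, v), s(w, v')})
  omega

theorem exists_isPalette_disjoint (h : IsMinimalCounterexample Δ G) (hvv' : v ≠ v')
    (hwv : G.Adj w v) (hwv' : G.Adj w v') (hv : G.degree v ≤ 2) (hv' : G.degree v' ≤ 2)
    (hvu : G.Adj v u) (hvu' : G.Adj v' u') (huw : u ≠ w) (huw' : u' ≠ w) (hu : G.degree u ≤ 2)
    (hu' : G.degree u' ≤ 2) : ∃ M : V → Finset (Fin (3 * Δ)),
      IsPalette Δ G (trim G {v, v'} ∅) {r | G.degree r ≤ 2} M ∧ Disjoint (M u) (M u') := by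
  have hnbr := fun r => eq_or_eq_of_adj hv hvu hwv.symm huw (r := r)
  by_cases hadj : G.Adj v v'
  · obtain ⟨M, hM⟩ := h.colorable_trim (R := {r | G.degree r ≤ 2}) ∅ (S := {v, v'}) (.inl rfl) hvu
      (by rintro r (rfl | rfl) <;> assumption) fun r hr => hr
    refine ⟨M, hM, Finset.disjoint_left.2 fun c hc => ?_⟩
    obtain ⟨q, hq, -⟩ := hM.exists_adj hu hc
    grind [hq.2.1, hwv'.ne]
  have huu' : u ≠ u' := by
    rintro rfl
    exact (h.two_lt_degree_of_low_path hu hvu.symm hvu'.symm hvv' hv).not_ge hv'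
  have hnuu' : ¬ G.Adj u u' := fun huu' =>
    (h.two_lt_degree_of_low_path hu hvu.symm huu' (by rintro rfl; exact hadj hvu'.symm) hv).not_ge
      hu'
  obtain ⟨M, hM⟩ := h.colorable_of_lt _ (h.admissible_trim_sup_edge hvu hvu' hu hu' huu')
    (ncard_edgeSet_trim_sup_edge_lt hwv hwv' hvv')
  have hM' := hM.restrict (G := G ⊔ edge u u') (R := {r | G.degree r ≤ 2}) (H := trim G {v, v'} ∅)
    le_sup_left (trim_le.trans le_sup_left) fun a b hab hn => by
      have hiso : ∀ s ∈ ({v, v'} : Set V), ∀ r, ¬ (trim G {v, v'} ∅).Adj s r :=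
        fun s hs r hsr => hsr.2.1 hs
      have hlow : ∀ s ∈ ({v, v'} : Set V), G.degree s ≤ 2 := by rintro s (rfl | rfl) <;> assumption
      rcases hab with hab | hab
      · rw [not_trim_adj_iff hab] at hn
        grind
      · grind
  exact ⟨_, hM'.mono trim_le le_sup_left, Finset.disjoint_left.2 fun c hc hc' =>
    hnuu' (trim_le (hM'.adj_of_mem (.inr ((edge_adj ..).2 ⟨.inl ⟨rfl, rfl⟩, huu'⟩)) hc hc'))⟩

theorem eq_of_low_path_of_low_path (h : IsMinimalCounterexample Δ G) (hwv : G.Adj w v)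
    (hwv' : G.Adj w v') (hv : G.degree v ≤ 2) (hv' : G.degree v' ≤ 2) (hvu : G.Adj v u)
    (hvu' : G.Adj v' u') (huw : u ≠ w) (huw' : u' ≠ w) (hu : G.degree u ≤ 2)
    (hu' : G.degree u' ≤ 2) : v = v' := by
  by_contra hvv'
  have hΔ := h.seven_le
  have hwR : w ∉ {r | G.degree r ≤ 2} :=
    (h.two_lt_degree_of_low_path hv hvu hwv.symm huw hu).not_ge
  obtain ⟨M, hM, hdisj⟩ :=
    h.exists_isPalette_disjoint hvv' hwv hwv' hv hv' hvu hvu' huw huw' hu hu'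
  have hn : ∀ a, ∀ b ∈ ({v, v'} : Set V), ¬ (trim G {v, v'} ∅).Adj a b :=
    fun a b hb hab => hab.2.2.1 hb
  have hw : (trim G {v, v'} ∅).degree w + 1 < G.degree w := by
    have hsub : (trim G {v, v'} ∅).neighborFinset w ⊆ ((G.neighborFinset w).erase v).erase v' :=
      fun r hr => by
        rw [mem_neighborFinset] at hr
        simp only [mem_erase, mem_neighborFinset]
        grind [trim_le hr]
    have hcard := card_le_card hsub
    have := card_erase_add_one ((G.mem_neighborFinset w v).2 hwv)
    have := card_erase_add_one (s := (G.neighborFinset w).erase v) (a := v')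
      (by simpa using ⟨Ne.symm hvv', hwv'⟩)
    have := card_neighborFinset_eq_degree (trim G {v, v'} ∅) w
    have := card_neighborFinset_eq_degree G w
    omega
  have hone : ∀ {a b}, a ∈ ({v, v'} : Set V) → G.Adj a b → G.degree b ≤ 2 → #(M b) ≤ 1 :=
    fun ha hab hb => by
      rw [hM.card_of_mem hb]
      have := degree_lt_of_not_adj trim_le hab.symm (hn _ _ ha)
      omega
  have hnbr := fun r => eq_or_eq_of_adj hv hvu hwv.symm huw (r := r)
  have hnbr' := fun r => eq_or_eq_of_adj hv' hvu' hwv'.symm huw' (r := r)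
  have hcol := hM.colorable_sup_edge_sup_edge hwR (hw.trans_le (h.degree_le w)) hwv hwv' hvv'
    (hn w v (.inl rfl)) (hn w v' (.inr rfl)) hv hv' (fun r hr => (hnbr r hr).resolve_right)
    (fun r hr => (hnbr' r hr).resolve_right) (hone (.inl rfl) hvu hu)
    (hone (.inr rfl) hvu' hu') hdisj
  refine h.not_colorable (hcol.complete h.degree_le (fun r hr => hr) (fun a b hab hn => ?_)
    fun p hp hp2 => absurd hp (not_le_of_gt hp2))
  simp only [sup_adj, edge_adj, not_or, not_trim_adj_iff hab, Set.mem_insert_iff,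
    Set.mem_singleton_iff, Set.mem_empty_iff_false, false_and, or_false] at hn
  have := fun r => isLoose_of_degree_le_two (Δ := Δ) (G := G) (p := r) (by omega)
  grind [hab.symm, hab.ne]

end IsMinimalCounterexample

end ThreadPairs

section Discharging

open Finset SimpleGraph

variable {V : Type*} [Fintype V] {Δ : ℕ} {G : SimpleGraph V} {p q u v w : V}

/-- The number of big neighbors that are not roomy. -/
noncomputable def crampedDegree (Δ : ℕ) (G : SimpleGraph V) (p : V) : ℕ :=
  #{r ∈ G.neighborFinset p | 2 < G.degree r ∧ ¬ IsRoomy Δ G r}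

/-- A tip is a vertex with exactly one big neighbor and at most three low neighbors. -/
def IsTip (G : SimpleGraph V) (p : V) : Prop := bigDegree G p = 1 ∧ lowDegree G p ≤ 3

/-- The charge that the end `p` of a path `p, v, u` with low interior vertex `v` sends to `v`. The
shares of the two ends add up to `6`, which is what a vertex of degree `2` lacks. -/
noncomputable def threadShare (Δ : ℕ) (G : SimpleGraph V) (p u : V) : ℤ :=
  if G.degree p ≤ 2 then 0 else if G.degree u ≤ 2 then 6
  else if IsTip G p then 2 else if IsTip G u then 4
  else if IsConnector G p then 2 * crampedDegree Δ G p
  else if IsConnector G u then 6 - 2 * crampedDegree Δ G u else 3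

/-- The charge that a vertex `p` sends to its neighbor `q` in the discharging procedure. -/
noncomputable def transfer (Δ : ℕ) (G : SimpleGraph V) (p q : V) : ℤ :=
  if G.degree p ≤ 2 then 0 else byKind G 0 (if IsRoomy Δ G p then 0 else 2) 4
    (∑ u ∈ (G.neighborFinset q).erase p, threadShare Δ G p u) q

/-- The final charge of a vertex whose initial charge is six times its excess over the average
degree `3`. -/
noncomputable def charge (Δ : ℕ) (G : SimpleGraph V) (p : V) : ℤ :=
  6 * G.degree p - 18 - ∑ q ∈ G.neighborFinset p, transfer Δ G p q +
    ∑ q ∈ G.neighborFinset p, transfer Δ G q p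

theorem transfer_of_degree_le_two (hp : G.degree p ≤ 2) : transfer Δ G p q = 0 := if_pos hp

theorem transfer_eq_threadShare (hv : G.degree v ≤ 2) (hvu : G.Adj v u) (hvw : G.Adj v w)
    (huw : u ≠ w) : transfer Δ G w v = threadShare Δ G w u := by
  by_cases hw : G.degree w ≤ 2
  · rw [transfer_of_degree_le_two hw, threadShare, if_pos hw]
  · rw [transfer, if_neg hw, byKind_of_degree_le_two hv,
      erase_neighborFinset_eq_singleton hv hvu hvw huw, sum_singleton]

theorem sum_transfer (hp : 2 < G.degree p) : ∑ q ∈ G.neighborFinset p, transfer Δ G p q =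
    connectorDegree G p * (if IsRoomy Δ G p then 0 else 2) + pendantDegree G p * 4 +
      ∑ q ∈ G.neighborFinset p with G.degree q ≤ 2, transfer Δ G p q := by
  set x : ℤ := if IsRoomy Δ G p then 0 else 2
  have hsplit : ∀ q, transfer Δ G p q =
      byKind G 0 x 4 0 q + if G.degree q ≤ 2 then transfer Δ G p q else 0 := fun q => by
    split_ifs with hq
    · rw [byKind_of_degree_le_two hq, zero_add]
    · rw [transfer, if_neg hp.not_ge, byKind, byKind, if_neg hq, if_neg hq, add_zero]
  rw [sum_congr rfl fun q _ => hsplit q, sum_add_distrib, sum_byKind, ← sum_filter]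
  ring

theorem sum_transfer_eq_zero (hp : 2 < G.degree p) (hc : ¬ IsConnector G p)
    (hk : ¬ IsPendant G p) : ∑ q ∈ G.neighborFinset p, transfer Δ G q p = 0 :=
  sum_eq_zero fun q _ => by
    rw [transfer, byKind, if_neg hp.not_ge, if_neg hc, if_neg hk, ite_self]

theorem IsPendant.sum_transfer (hp : IsPendant G p) :
    ∑ q ∈ G.neighborFinset p, transfer Δ G q p = 4 := by
  have hval : ∀ q, transfer Δ G q p = if G.degree q ≤ 2 then 0 else 4 := fun q => by
    rw [transfer, byKind_of_isPendant hp]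
  rw [sum_congr rfl fun q _ => hval q, sum_ite_degree_le_two, hp.2]
  norm_num

theorem IsConnector.sum_transfer (hp : IsConnector G p) :
    ∑ q ∈ G.neighborFinset p, transfer Δ G q p = 2 * crampedDegree Δ G p := by
  have hval : ∀ q, transfer Δ G q p =
      if 2 < G.degree q ∧ ¬ IsRoomy Δ G q then 2 else 0 := fun q => by
    rw [transfer, byKind_of_isConnector hp]
    grind
  rw [sum_congr rfl fun q _ => hval q, ← sum_filter, sum_const, nsmul_eq_mul, mul_comm]
  rfl

theorem charge_eq_of_four_le_degree (hw : 4 ≤ G.degree w) : charge Δ G w = 6 * G.degree w - 18 -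
    (connectorDegree G w * (if IsRoomy Δ G w then 0 else 2) + pendantDegree G w * 4 +
      ∑ v ∈ G.neighborFinset w with G.degree v ≤ 2, transfer Δ G w v) := by
  have hc : ¬ IsConnector G w := fun hc => by have := hc.1; omega
  have hk : ¬ IsPendant G w := fun hk => by have := hk.1; omega
  rw [charge, sum_transfer (by omega), sum_transfer_eq_zero (by omega) hc hk, add_zero]

theorem sum_charge_le (h : Admissible Δ G) :
    ∑ p with 0 < G.degree p, charge Δ G p ≤ 0 := by
  set S : Finset V := {p | 0 < G.degree p}
  have hadj : ∀ {p q}, G.Adj p q → q ∈ S := fun hpq =>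
    mem_filter.2 ⟨mem_univ _, (G.degree_pos_iff_exists_adj _).2 ⟨_, hpq.symm⟩⟩
  have hsum := h.sum_card_inter_le S
  have hinter : ∀ p, G.neighborFinset p ∩ S = G.neighborFinset p := fun p =>
    inter_eq_left.2 fun q hq => hadj ((G.mem_neighborFinset p q).1 hq)
  simp only [hinter, card_neighborFinset_eq_degree] at hsum
  have hswap : ∑ p ∈ S, ∑ q ∈ G.neighborFinset p, transfer Δ G q p =
      ∑ p ∈ S, ∑ q ∈ G.neighborFinset p, transfer Δ G p q := by
    refine sum_comm' fun p q => ?_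
    simp only [mem_neighborFinset]
    exact ⟨fun hpq => ⟨hpq.2.symm, hadj hpq.2⟩, fun hqp => ⟨hadj hqp.1, hqp.1.symm⟩⟩
  simp only [charge, sum_add_distrib, sum_sub_distrib, hswap, sub_add_cancel, ← mul_sum, sum_const,
    nsmul_eq_mul]
  have : ∑ p ∈ S, (G.degree p : ℤ) ≤ 3 * #S := mod_cast hsum
  linarith

end Discharging

section Threads

open Finset SimpleGraph

variable {V : Type*} [Fintype V] {Δ : ℕ} {G : SimpleGraph V} {p q u v v' w : V}

theorem lowDegree_pos (hwv : G.Adj w v) (hv : G.degree v ≤ 2) : 0 < lowDegree G w :=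
  card_pos.2 ⟨v, mem_filter.2 ⟨(G.mem_neighborFinset w v).2 hwv, hv⟩⟩

theorem IsTip.degree_le (hp : IsTip G p) : G.degree p ≤ 4 := by
  have := bigDegree_add_lowDegree (G := G) p
  have := hp.1
  have := hp.2
  omega

theorem IsConnector.not_isTip (hp : IsConnector G p) : ¬ IsTip G p := fun ht => by
  simp [IsTip, hp.2] at ht

theorem sum_low_le {f : V → ℤ} {t : ℤ} (hf : ∀ v, G.Adj w v → G.degree v ≤ 2 → f v ≤ t) :
    ∑ v ∈ G.neighborFinset w with G.degree v ≤ 2, f v ≤ lowDegree G w * t := by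
  refine (sum_le_card_nsmul _ f t fun v hv => ?_).trans_eq (nsmul_eq_mul _ t)
  rw [mem_filter, mem_neighborFinset] at hv
  exact hf v hv.1 hv.2

namespace IsMinimalCounterexample

theorem bigDegree_eq_one_of_adj_low (h : IsMinimalCounterexample Δ G) (hu : G.degree u ≤ 2)
    (hvu : G.Adj v u) (hv : G.degree v ≤ 2) : bigDegree G u = 1 ∧ lowDegree G u ≤ 1 := by
  have := h.bigDegree_pos hvu.symm
  have := bigDegree_add_lowDegree (G := G) u
  have := lowDegree_pos hvu.symm hv
  omega

theorem degree_eq_of_low_low_path (h : IsMinimalCounterexample Δ G) (hu : G.degree u ≤ 2)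
    (hv : G.degree v ≤ 2) (hvu : G.Adj v u) (hvw : G.Adj v w) (huw : u ≠ w) : G.degree w = Δ := by
  obtain ⟨hub, hul⟩ := h.bigDegree_eq_one_of_adj_low hu hvu hv
  exact h.degree_eq_of_low_path hub (by omega) hv hvu hvw huw

theorem degree_eq_of_isTip (h : IsMinimalCounterexample Δ G) (hu : IsTip G u)
    (hv : G.degree v ≤ 2) (hvu : G.Adj v u) (hvw : G.Adj v w) (huw : u ≠ w) : G.degree w = Δ :=
  h.degree_eq_of_low_path hu.1 (hu.2.trans (by omega)) hv hvu hvw huw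

theorem threadShare_add_threadShare (h : IsMinimalCounterexample Δ G) (hv : G.degree v ≤ 2)
    (hvu : G.Adj v u) (hvw : G.Adj v w) (huw : u ≠ w) :
    threadShare Δ G u w + threadShare Δ G w u = 6 := by
  have hlow := h.two_lt_degree_of_low_path hv hvu hvw huw
  have htip : IsTip G u → ¬ IsTip G w := fun hu hw => by
    have := h.degree_eq_of_isTip hu hv hvu hvw huw
    have := hw.degree_le
    have := h.seven_le
    omega
  have hconn : IsConnector G u → ¬ IsConnector G w := fun hu hw =>
    h.not_low_path_of_bigDegree_le_two hv hvu hvw huw hu.2.le (by have := hu.lowDegree_eq; omega)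
      hw.2.le (by have := hw.lowDegree_eq; omega)
  unfold threadShare
  grind

theorem crampedDegree_pos (h : IsMinimalCounterexample Δ G) (hu : IsConnector G u)
    (hv : G.degree v ≤ 2) (hvu : G.Adj v u) (hvw : G.Adj v w) (huw : u ≠ w) :
    0 < crampedDegree Δ G u := by
  by_contra! hu0
  have hroomy : ∀ r, G.Adj u r → 2 < G.degree r → IsRoomy Δ G r := fun r hur hr => by
    by_contra hnr
    exact (card_pos.2 ⟨r, mem_filter.2 ⟨(G.mem_neighborFinset u r).2 hur, hr, hnr⟩⟩).not_ge hu0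
  obtain ⟨x, hx, y, hy, hxy⟩ := one_lt_card.1 (hu.2.symm ▸ one_lt_two : 1 < bigDegree G u)
  rw [mem_filter, mem_neighborFinset] at hx hy
  exact h.not_isRoomy_of_isRoomy hu hx.1 hx.2 (hroomy x hx.1 hx.2) hy.1 hy.2 hxy hv hvu hvw huw
    (hroomy y hy.1 hy.2)

theorem crampedDegree_eq_two (h : IsMinimalCounterexample Δ G) (hu : IsConnector G u)
    (hv : G.degree v ≤ 2) (hvu : G.Adj v u) (hvw : G.Adj v w) (huw : u ≠ w)
    (hw : G.degree w + 2 ≤ Δ) : crampedDegree Δ G u = 2 := by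
  rw [← hu.2, crampedDegree, bigDegree]
  refine congrArg card (filter_congr fun r hr => and_iff_left_of_imp fun hr2 hroomy => ?_)
  have hur := (G.mem_neighborFinset u r).1 hr
  have := h.le_degree_add_one_of_isRoomy hu hur hr2 hroomy hv hvu hvw huw
  omega

theorem transfer_le_two_of_isTip (h : IsMinimalCounterexample Δ G) (hw : IsTip G w)
    (hw2 : 2 < G.degree w) (hwv : G.Adj w v) (hv : G.degree v ≤ 2) : transfer Δ G w v ≤ 2 := by
  obtain ⟨u, hvu, huw⟩ := h.exists_adj_ne hwv.symm
  have hu : ¬ G.degree u ≤ 2 := fun hu => by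
    have := h.degree_eq_of_low_low_path hu hv hvu hwv.symm huw
    have := hw.degree_le
    have := h.seven_le
    omega
  rw [transfer_eq_threadShare hv hvu hwv.symm huw, threadShare, if_neg hw2.not_ge, if_neg hu,
    if_pos hw]

theorem transfer_of_isConnector (h : IsMinimalCounterexample Δ G) (hw : IsConnector G w)
    (hwv : G.Adj w v) (hv : G.degree v ≤ 2) : transfer Δ G w v = 2 * crampedDegree Δ G w := by
  have hΔ := h.seven_le
  have hw3 := hw.1
  obtain ⟨u, hvu, huw⟩ := h.exists_adj_ne hwv.symm
  have hu : ¬ G.degree u ≤ 2 := fun hu => by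
    have := h.degree_eq_of_low_low_path hu hv hvu hwv.symm huw
    omega
  have hut : ¬ IsTip G u := fun hu => by
    have := h.degree_eq_of_isTip hu hv hvu hwv.symm huw
    omega
  rw [transfer_eq_threadShare hv hvu hwv.symm huw, threadShare, if_neg (by omega), if_neg hu,
    if_neg hw.not_isTip, if_neg hut, if_pos hw]

end IsMinimalCounterexample

theorem transfer_of_four_le_degree (hw : 4 ≤ G.degree w) (hwt : ¬ IsTip G w)
    (hv : G.degree v ≤ 2) (hvu : G.Adj v u) (hvw : G.Adj v w) (huw : u ≠ w) :
    transfer Δ G w v = if G.degree u ≤ 2 then 6 else if IsTip G u then 4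
      else if IsConnector G u then 6 - 2 * (crampedDegree Δ G u : ℤ) else 3 := by
  rw [transfer_eq_threadShare hv hvu hvw huw, threadShare, if_neg (by omega), if_neg hwt,
    if_neg fun hc : IsConnector G w => by have := hc.1; omega]

namespace IsMinimalCounterexample

theorem transfer_le_three (h : IsMinimalCounterexample Δ G) (hw : 4 ≤ G.degree w)
    (hwt : ¬ IsTip G w) (hwΔ : G.degree w + 2 ≤ Δ) (hwv : G.Adj w v) (hv : G.degree v ≤ 2) :
    transfer Δ G w v ≤ 3 := by
  obtain ⟨u, hvu, huw⟩ := h.exists_adj_ne hwv.symm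
  have hu : ¬ G.degree u ≤ 2 := fun hu => by
    have := h.degree_eq_of_low_low_path hu hv hvu hwv.symm huw
    omega
  have hut : ¬ IsTip G u := fun hu => by
    have := h.degree_eq_of_isTip hu hv hvu hwv.symm huw
    omega
  rw [transfer_of_four_le_degree hw hwt hv hvu hwv.symm huw, if_neg hu, if_neg hut]
  split_ifs with hc
  · rw [h.crampedDegree_eq_two hc hv hvu hwv.symm huw hwΔ]
    norm_num
  · exact le_rfl

theorem two_lt_degree_of_isLight (h : IsMinimalCounterexample Δ G) (hw : IsLight G w)
    (hk : pendantDegree G w = 0) (hv : G.degree v ≤ 2) (hvu : G.Adj v u) (hvw : G.Adj v w)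
    (huw : u ≠ w) : 2 < G.degree u := by
  by_contra! hu
  obtain ⟨hub, hul⟩ := h.bigDegree_eq_one_of_adj_low hu hvu hv
  exact h.not_low_path_of_isLight hw hk hub (by omega) hv hvu hvw huw

theorem transfer_le_three_of_isLight (h : IsMinimalCounterexample Δ G) (hw : 4 ≤ G.degree w)
    (hwt : ¬ IsTip G w) (hl : IsLight G w) (hk : pendantDegree G w = 0)
    (hex : ¬ (otherDegree G w = 1 ∧ connectorDegree G w = 1 ∧ G.degree w = Δ)) (hwv : G.Adj w v)
    (hv : G.degree v ≤ 2) : transfer Δ G w v ≤ 3 := by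
  obtain ⟨u, hvu, huw⟩ := h.exists_adj_ne hwv.symm
  have hu := h.two_lt_degree_of_isLight hl hk hv hvu hwv.symm huw
  have hut : ¬ IsTip G u := fun hu =>
    h.not_low_path_of_isLight hl hk hu.1 (hu.2.trans (by omega)) hv hvu hwv.symm huw
  rw [transfer_of_four_le_degree hw hwt hv hvu hwv.symm huw, if_neg hu.not_ge, if_neg hut,
    if_neg fun hc => hex (h.eq_of_isLight_of_low_path hl hk hc hv hvu hwv.symm huw)]

theorem transfer_le_four (h : IsMinimalCounterexample Δ G) (hw : 4 ≤ G.degree w)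
    (hwt : ¬ IsTip G w) (hv : G.degree v ≤ 2) (hvu : G.Adj v u) (hvw : G.Adj v w) (huw : u ≠ w)
    (hu : 2 < G.degree u) : transfer Δ G w v ≤ 4 := by
  rw [transfer_of_four_le_degree hw hwt hv hvu hvw huw, if_neg hu.not_ge]
  split_ifs with hut hc
  · exact le_rfl
  · have := h.crampedDegree_pos hc hv hvu hvw huw
    omega
  · norm_num

theorem sum_low_transfer_le_of_degree_lt (h : IsMinimalCounterexample Δ G) (hw : 4 ≤ G.degree w)
    (hwt : ¬ IsTip G w) (hwΔ : G.degree w < Δ) :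
    ∑ v ∈ G.neighborFinset w with G.degree v ≤ 2, transfer Δ G w v ≤ lowDegree G w * 4 := by
  refine sum_low_le fun v hwv hv => ?_
  obtain ⟨u, hvu, huw⟩ := h.exists_adj_ne hwv.symm
  refine h.transfer_le_four hw hwt hv hvu hwv.symm huw (not_le.1 fun hu => ?_)
  exact hwΔ.ne (h.degree_eq_of_low_low_path hu hv hvu hwv.symm huw)

theorem sum_low_transfer_le (h : IsMinimalCounterexample Δ G) (hw : 4 ≤ G.degree w)
    (hwt : ¬ IsTip G w) :
    ∑ v ∈ G.neighborFinset w with G.degree v ≤ 2, transfer Δ G w v ≤ lowDegree G w * 4 + 2 := by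
  by_cases hlow : ∃ v u, G.Adj w v ∧ G.degree v ≤ 2 ∧ G.Adj v u ∧ u ≠ w ∧ G.degree u ≤ 2
  · obtain ⟨v', u', hwv', hv', hvu', huw', hu'⟩ := hlow
    have hle : ∀ v, G.Adj w v → G.degree v ≤ 2 →
        transfer Δ G w v - (if v = v' then 2 else 0) ≤ 4 := fun v hwv hv => by
      obtain ⟨u, hvu, huw⟩ := h.exists_adj_ne hwv.symm
      by_cases hu : G.degree u ≤ 2
      · rw [if_pos (h.eq_of_low_path_of_low_path hwv hwv' hv hv' hvu hvu' huw huw' hu hu'),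
          transfer_of_four_le_degree hw hwt hv hvu hwv.symm huw, if_pos hu]
        norm_num
      · have := h.transfer_le_four hw hwt hv hvu hwv.symm huw (not_le.1 hu)
        split_ifs <;> omega
    have hsum := sum_low_le hle
    rw [sum_sub_distrib, sum_ite_eq', sub_le_iff_le_add] at hsum
    refine hsum.trans (Int.add_le_add_left ?_ _)
    split_ifs <;> norm_num
  · refine (sum_low_le (t := 4) fun v hwv hv => ?_).trans (by omega)
    obtain ⟨u, hvu, huw⟩ := h.exists_adj_ne hwv.symm
    exact h.transfer_le_four hw hwt hv hvu hwv.symm huw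
      (not_le.1 fun hu => hlow ⟨v, u, hwv, hv, hvu, huw, hu⟩)

end IsMinimalCounterexample

end Threads

section FinalCharge

open Finset SimpleGraph

variable {V : Type*} [Fintype V] {Δ : ℕ} {G : SimpleGraph V} {p q u v w : V}

theorem isRoomy_of_degree_eq_three (hΔ : 5 ≤ Δ) (hw : G.degree w = 3)
    (hc : connectorDegree G w ≠ 0) : IsRoomy Δ G w := by
  have hdeg := bigDegree_add_lowDegree (G := G) w
  rw [hw, bigDegree_eq, add_right_comm (otherDegree G w)] at hdeg
  rw [IsRoomy, nbrWeight_eq, hw]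
  generalize otherDegree G w + pendantDegree G w = m at hdeg ⊢
  have hm : m ≤ 2 := by omega
  interval_cases m <;> omega

theorem lowDegree_of_not_isTip (hw : ¬ IsTip G w) (hb : bigDegree G w = 1) :
    4 ≤ lowDegree G w := by
  by_contra! hl
  exact hw ⟨hb, Nat.le_of_lt_succ hl⟩

namespace IsMinimalCounterexample

theorem le_degree_add_one_of_isPendant (h : IsMinimalCounterexample Δ G) (hq : IsPendant G q)
    (hpq : G.Adj p q) (hp : 2 < G.degree p) : Δ ≤ G.degree p + 1 := by
  have hl := hq.lowDegree_eq
  have := h.lt_degree_add_lowDegree hq.2 (by omega) hpq.symm hp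
  omega

theorem pendantDegree_eq_zero (h : IsMinimalCounterexample Δ G) (hp : 2 < G.degree p)
    (hpΔ : G.degree p + 2 ≤ Δ) : pendantDegree G p = 0 := by
  refine card_eq_zero.2 (filter_eq_empty_iff.2 fun q hpq hq => ?_)
  have := h.le_degree_add_one_of_isPendant hq ((G.mem_neighborFinset p q).1 hpq) hp
  omega

theorem charge_of_degree_le_two (h : IsMinimalCounterexample Δ G) (hv : G.degree v ≤ 2)
    (hvw : G.Adj v w) : charge Δ G v = 0 := by
  obtain ⟨u, hvu, huw⟩ := h.exists_adj_ne hvw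
  have hN : G.neighborFinset v = insert w {u} := by
    rw [← erase_neighborFinset_eq_singleton hv hvu hvw huw,
      insert_erase ((G.mem_neighborFinset v w).2 hvw)]
  have hdeg : G.degree v = 2 := hv.antisymm (h.two_le_degree hvw)
  have := h.threadShare_add_threadShare hv hvu hvw huw
  rw [charge, hN, hdeg, sum_pair huw.symm, sum_pair huw.symm, transfer_of_degree_le_two hv,
    transfer_of_degree_le_two hv, transfer_eq_threadShare hv hvu hvw huw,
    transfer_eq_threadShare hv hvw hvu huw.symm]
  push_cast
  omega

theorem sum_transfer_of_degree_eq_three (h : IsMinimalCounterexample Δ G) (hw : G.degree w = 3) :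
    ∑ q ∈ G.neighborFinset w, transfer Δ G w q =
      ∑ v ∈ G.neighborFinset w with G.degree v ≤ 2, transfer Δ G w v := by
  have hΔ := h.seven_le
  have hconn : (connectorDegree G w : ℤ) * (if IsRoomy Δ G w then 0 else 2) = 0 := by
    by_cases hc : connectorDegree G w = 0
    · rw [hc, Nat.cast_zero, zero_mul]
    · rw [if_pos (isRoomy_of_degree_eq_three (by omega) hw hc), mul_zero]
  rw [sum_transfer (by omega), hconn, h.pendantDegree_eq_zero (by omega) (by omega)]
  ring

theorem charge_nonneg_of_isConnector (h : IsMinimalCounterexample Δ G) (hw : IsConnector G w) :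
    0 ≤ charge Δ G w := by
  have hlow := sum_low_le fun v hwv hv => (h.transfer_of_isConnector hw hwv hv).le
  rw [hw.lowDegree_eq] at hlow
  rw [charge, h.sum_transfer_of_degree_eq_three hw.1, hw.sum_transfer, hw.1]
  push_cast at hlow ⊢
  omega

theorem charge_nonneg_of_bigDegree_eq_three (h : IsMinimalCounterexample Δ G)
    (hw : G.degree w = 3) (hb : bigDegree G w = 3) : 0 ≤ charge Δ G w := by
  have hlow : lowDegree G w = 0 := by
    have := bigDegree_add_lowDegree (G := G) w
    omega
  have hc : ¬ IsConnector G w := fun hc => by have := hc.2; omega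
  have hk : ¬ IsPendant G w := fun hk => by have := hk.2; omega
  rw [charge, h.sum_transfer_of_degree_eq_three hw, sum_transfer_eq_zero (by omega) hc hk, hw,
    card_eq_zero.1 hlow, sum_empty]
  norm_num

theorem charge_nonneg_of_isTip (h : IsMinimalCounterexample Δ G) (hw : IsTip G w)
    (hw2 : 2 < G.degree w) : 0 ≤ charge Δ G w := by
  have hlow := sum_low_le fun v => h.transfer_le_two_of_isTip hw hw2
  have hdeg := bigDegree_add_lowDegree (G := G) w
  obtain ⟨hwb, hwl⟩ := hw
  obtain hw3 | hw4 : G.degree w = 3 ∨ 4 ≤ G.degree w := by omega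
  · rw [charge, h.sum_transfer_of_degree_eq_three hw3, IsPendant.sum_transfer ⟨hw3, hwb⟩]
    omega
  · have hbig : ∀ r, G.Adj w r → G.degree r ≠ 3 := fun r hwr hr => by
      have := h.lt_degree_add_lowDegree hwb (by omega) hwr (by omega)
      have := h.seven_le
      omega
    have hc : connectorDegree G w = 0 := card_eq_zero.2 <| filter_eq_empty_iff.2
      fun r hr hc => hbig r ((G.mem_neighborFinset w r).1 hr) hc.1
    have hk : pendantDegree G w = 0 := card_eq_zero.2 <| filter_eq_empty_iff.2
      fun r hr hk => hbig r ((G.mem_neighborFinset w r).1 hr) hk.1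
    rw [charge_eq_of_four_le_degree hw4, hc, hk, Nat.cast_zero, zero_mul, zero_mul]
    omega

theorem charge_nonneg_of_degree_add_two_le (h : IsMinimalCounterexample Δ G)
    (hw : 4 ≤ G.degree w) (hwt : ¬ IsTip G w) (hwΔ : G.degree w + 2 ≤ Δ) :
    0 ≤ charge Δ G w ∧ (charge Δ G w = 0 →
      (bigDegree G w = 1 ∧ lowDegree G w ≤ 4) ∨ (bigDegree G w = 2 ∧ lowDegree G w ≤ 2)) := by
  have hlow := sum_low_le fun v => h.transfer_le_three hw hwt hwΔ (v := v)
  have hdeg := bigDegree_add_lowDegree (G := G) w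
  have hbig := bigDegree_eq (G := G) w
  have hk := h.pendantDegree_eq_zero (by omega) hwΔ
  obtain ⟨q, hwq⟩ := (G.degree_pos_iff_exists_adj w).1 (by omega)
  have hb := h.bigDegree_pos hwq
  have htip := lowDegree_of_not_isTip hwt
  rw [charge_eq_of_four_le_degree hw]
  split_ifs with hroomy
  · omega
  · have hwt : 2 * Δ + 3 < nbrWeight Δ G w := not_le.1 fun hle => hroomy ⟨hwΔ, hle⟩
    rw [nbrWeight_eq, hk, add_zero] at hwt
    obtain ho | ho := lt_or_ge (otherDegree G w) 3
    · interval_cases otherDegree G w <;> omega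
    · omega

theorem charge_pos_of_isLight (h : IsMinimalCounterexample Δ G) (hw : 4 ≤ G.degree w)
    (hwt : ¬ IsTip G w) (hwΔ : Δ ≤ G.degree w + 1) (hl : IsLight G w) : 0 < charge Δ G w := by
  have hΔ := h.seven_le
  have hdeg := bigDegree_add_lowDegree (G := G) w
  have hbig := bigDegree_eq (G := G) w
  have hk := h.pendantDegree_eq_zero_of_isLight hl (by omega) fun hk => by have := hk.1; omega
  obtain ⟨q, hwq⟩ := (G.degree_pos_iff_exists_adj w).1 (by omega)
  have hb := h.bigDegree_pos hwq
  rw [charge_eq_of_four_le_degree hw]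
  by_cases hex : otherDegree G w = 1 ∧ connectorDegree G w = 1 ∧ G.degree w = Δ
  · have hlow := sum_low_le (f := transfer Δ G w) (t := 4) fun v hwv hv => by
      obtain ⟨u, hvu, huw⟩ := h.exists_adj_ne hwv.symm
      exact h.transfer_le_four hw hwt hv hvu hwv.symm huw
        (h.two_lt_degree_of_isLight hl hk hv hvu hwv.symm huw)
    split_ifs <;> omega
  · have hlow := sum_low_le fun v => h.transfer_le_three_of_isLight hw hwt hl hk hex (v := v)
    split_ifs <;> omega

theorem charge_pos_of_not_isLight (h : IsMinimalCounterexample Δ G) (hw : 4 ≤ G.degree w)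
    (hwt : ¬ IsTip G w) (hwΔ : Δ ≤ G.degree w + 1) (hl : ¬ IsLight G w) : 0 < charge Δ G w := by
  have hΔ := h.seven_le
  have hdeg := bigDegree_add_lowDegree (G := G) w
  have hbig := bigDegree_eq (G := G) w
  have hlow := h.sum_low_transfer_le hw hwt
  have hlow' := h.sum_low_transfer_le_of_degree_lt hw hwt
  have hle := h.degree_le w
  rw [charge_eq_of_four_le_degree hw]
  unfold IsLight at hl
  split_ifs <;> omega

theorem charge_nonneg_of_two_lt_degree (h : IsMinimalCounterexample Δ G) (hw : 2 < G.degree w) :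
    0 ≤ charge Δ G w ∧ (charge Δ G w = 0 → G.degree w = 3 ∨
      (bigDegree G w = 1 ∧ lowDegree G w ≤ 4) ∨ (bigDegree G w = 2 ∧ lowDegree G w ≤ 2)) := by
  have hdeg := bigDegree_add_lowDegree (G := G) w
  obtain ⟨q, hwq⟩ := (G.degree_pos_iff_exists_adj w).1 (by omega)
  have hb := h.bigDegree_pos hwq
  by_cases hwt : IsTip G w
  · exact ⟨h.charge_nonneg_of_isTip hwt hw, fun _ => .inr (.inl ⟨hwt.1, hwt.2.trans (by omega)⟩)⟩
  obtain hw3 | hw4 : G.degree w = 3 ∨ 4 ≤ G.degree w := by omega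
  · refine ⟨?_, fun _ => .inl hw3⟩
    have hb1 := lowDegree_of_not_isTip hwt
    obtain hb2 | hb3 : bigDegree G w = 2 ∨ bigDegree G w = 3 := by omega
    · exact h.charge_nonneg_of_isConnector ⟨hw3, hb2⟩
    · exact h.charge_nonneg_of_bigDegree_eq_three hw3 hb3
  obtain hwΔ | hwΔ : G.degree w + 2 ≤ Δ ∨ Δ ≤ G.degree w + 1 := by omega
  · have := h.charge_nonneg_of_degree_add_two_le hw4 hwt hwΔ
    exact ⟨this.1, fun h0 => .inr (this.2 h0)⟩
  · have hpos : 0 < charge Δ G w := by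
      by_cases hl : IsLight G w
      · exact h.charge_pos_of_isLight hw4 hwt hwΔ hl
      · exact h.charge_pos_of_not_isLight hw4 hwt hwΔ hl
    exact ⟨hpos.le, fun h0 => absurd h0 hpos.ne'⟩

theorem charge_eq_zero (h : IsMinimalCounterexample Δ G) (hwq : G.Adj w q) : charge Δ G w = 0 := by
  have hnonneg : ∀ p ∈ ({p | 0 < G.degree p} : Finset V), 0 ≤ charge Δ G p := fun p hp => by
    obtain ⟨r, hpr⟩ := (G.degree_pos_iff_exists_adj p).1 (mem_filter.1 hp).2
    obtain hp2 | hp2 := le_or_gt (G.degree p) 2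
    · exact (h.charge_of_degree_le_two hp2 hpr).ge
    · exact (h.charge_nonneg_of_two_lt_degree hp2).1
  have hsum := (sum_charge_le h.toAdmissible).antisymm (sum_nonneg hnonneg)
  exact (sum_eq_zero_iff_of_nonneg hnonneg).1 hsum w
    (mem_filter.2 ⟨mem_univ _, (G.degree_pos_iff_exists_adj w).2 ⟨q, hwq⟩⟩)

theorem degree_eq_three_or (h : IsMinimalCounterexample Δ G) (hw : 2 < G.degree w) :
    G.degree w = 3 ∨ (bigDegree G w = 1 ∧ lowDegree G w ≤ 4) ∨
      (bigDegree G w = 2 ∧ lowDegree G w ≤ 2) := by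
  obtain ⟨q, hwq⟩ := (G.degree_pos_iff_exists_adj w).1 (by omega)
  exact (h.charge_nonneg_of_two_lt_degree hw).2 (h.charge_eq_zero hwq)

theorem degree_ne (h : IsMinimalCounterexample Δ G) : G.degree w ≠ Δ := fun hw => by
  have hΔ := h.seven_le
  have := h.degree_eq_three_or (w := w) (by omega)
  have := bigDegree_add_lowDegree (G := G) w
  omega

theorem two_lt_degree (h : IsMinimalCounterexample Δ G) (hvw : G.Adj v w) : 2 < G.degree v := by
  by_contra! hv
  obtain ⟨u, hvu, huw⟩ := h.exists_adj_ne hvw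
  have hend : ∀ {a b}, G.Adj v a → G.Adj v b → a ≠ b → bigDegree G a = 2 ∧ lowDegree G a ≤ 2 := by
    intro a b hva hvb hab
    have ha : 2 < G.degree a := not_le.1 fun ha =>
      h.degree_ne (h.degree_eq_of_low_low_path ha hv hva hvb hab)
    have hone : ¬ (bigDegree G a = 1 ∧ lowDegree G a ≤ 4) := fun ⟨hab1, hal⟩ =>
      h.degree_ne (h.degree_eq_of_low_path hab1 hal hv hva hvb hab)
    have := h.degree_eq_three_or ha
    have := bigDegree_add_lowDegree (G := G) a
    have := h.bigDegree_pos hva.symm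
    have := lowDegree_pos hva.symm hv
    omega
  obtain ⟨hub, hul⟩ := hend hvu hvw huw
  obtain ⟨hwb, hwl⟩ := hend hvw hvu huw.symm
  exact h.not_low_path_of_bigDegree_le_two hv hvu hvw huw hub.le hul hwb.le hwl

theorem degree_eq_three (h : IsMinimalCounterexample Δ G) (hvw : G.Adj v w) : G.degree v = 3 := by
  have hlow : lowDegree G v = 0 := card_eq_zero.2 <| filter_eq_empty_iff.2 fun r hr =>
    (h.two_lt_degree ((G.mem_neighborFinset v r).1 hr).symm).not_ge
  have := h.degree_eq_three_or (h.two_lt_degree hvw)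
  have := bigDegree_add_lowDegree (G := G) v
  have := h.two_lt_degree hvw
  omega

theorem elim (h : IsMinimalCounterexample Δ G) : False := by
  by_cases hG : ∃ v w, G.Adj v w
  · obtain ⟨v, w, hvw⟩ := hG
    refine h.not_has3RegularSubgraph ⟨G, le_rfl, ⟨v, w, hvw⟩, fun a ⟨b, hab⟩ => ?_⟩
    rw [Set.ncard_eq_toFinset_card', ← h.degree_eq_three hab]
    rfl
  · obtain ⟨A, -, hA⟩ := exists_subset_card_eq (s := (univ : Finset (Fin (3 * Δ)))) (n := Δ)
      (by rw [card_univ, Fintype.card_fin]; omega)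
    push Not at hG
    exact h.not_colorable ⟨fun _ => A, le_rfl, fun p q hpq => absurd hpq (hG p q),
      fun p q _ hpq => absurd hpq (hG p q), fun p q _ _ hpq => absurd hpq (hG p q),
      fun _ _ => hA, fun p _ hp => absurd hp (Set.notMem_empty p)⟩

end IsMinimalCounterexample

theorem Admissible.paletteColorable (hΔ : 7 ≤ Δ) (hG : Admissible Δ G) :
    PaletteColorable Δ G G ∅ := by
  induction hn : G.edgeSet.ncard using Nat.strong_induction_on generalizing G with
  | _ n ih =>
    by_contra hcol
    exact IsMinimalCounterexample.elim ⟨hG, hΔ, hcol, fun H hH hlt => ih _ (hn ▸ hlt) hH rfl⟩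

end FinalCharge

section MaximumAverageDegree

open Finset SimpleGraph

variable {V : Type*} [Fintype V] {G : SimpleGraph V}

theorem sum_card_neighborFinset_inter (G : SimpleGraph V) (S : Finset V) :
    ∑ p ∈ S, #(G.neighborFinset p ∩ S) = 2 * {e ∈ G.edgeSet | ∀ v ∈ e, v ∈ S}.ncard := by
  let H : SimpleGraph V := (G.induce (S : Set V)).spanningCoe
  have hadj : ∀ p q, H.Adj p q ↔ G.Adj p q ∧ p ∈ S ∧ q ∈ S := fun p q => by simp [H]
  have hedges : {e ∈ G.edgeSet | ∀ v ∈ e, v ∈ S} = (H.edgeFinset : Set (Sym2 V)) := by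
    ext e
    induction e with | _ a b => simp [hadj]
  have hdeg : ∀ p, H.degree p = if p ∈ S then #(G.neighborFinset p ∩ S) else 0 := fun p => by
    rw [← card_neighborFinset_eq_degree]
    split_ifs with hp
    · congr 1; ext q; simp [hadj, hp]
    · rw [card_eq_zero]; ext q; simp [hadj, hp]
  rw [hedges, Set.ncard_coe_finset, ← H.sum_degrees_eq_twice_card_edges]
  simp only [hdeg, sum_ite_mem, univ_inter]

omit [Fintype V] in
theorem two_mul_ncard_div_card_le_mad [Finite V] {S : Finset V} (hS : S.Nonempty) :
    2 * ({e ∈ G.edgeSet | ∀ v ∈ e, v ∈ S}.ncard : ℝ) / (#S : ℝ) ≤ mad G := by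
  refine le_csSup (Set.Finite.bddAbove ?_) ⟨S, hS, rfl⟩
  refine (Set.finite_range fun A : Finset V =>
    2 * ({e ∈ G.edgeSet | ∀ v ∈ e, v ∈ A}.ncard : ℝ) / (#A : ℝ)).subset ?_
  rintro x ⟨A, -, rfl⟩
  exact ⟨A, rfl⟩

theorem sum_card_neighborFinset_inter_le_mad (S : Finset V) :
    (∑ p ∈ S, #(G.neighborFinset p ∩ S) : ℕ) ≤ mad G * #S := by
  obtain rfl | hS := S.eq_empty_or_nonempty
  · simp
  rw [sum_card_neighborFinset_inter, ← div_le_iff₀ (Nat.cast_pos.2 hS.card_pos)]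
  exact_mod_cast two_mul_ncard_div_card_le_mad hS

end MaximumAverageDegree

/-- If `Δ ≥ 7` and `G` has no 3-regular subgraph, maximum degree at most `Δ` and
maximum average degree at most `3`, then `χ'_s(G) ≤ 3Δ`. -/
theorem strong_chromatic_index_mad_le_three_no_cubic {V : Type*} [Fintype V] (Δ : ℕ)
    (hΔ : 7 ≤ Δ) (G : SimpleGraph V) (hcubic : ¬ Has3RegularSubgraph G)
    (hdeg : G.maxDegree ≤ Δ) (hmad : mad G ≤ 3) :
    strongChromaticIndex G ≤ 3 * Δ := by
  have hadm : Admissible Δ G := by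
    refine ⟨fun p => (G.degree_le_maxDegree p).trans hdeg, fun S => ?_, hcubic⟩
    have hS := (sum_card_neighborFinset_inter_le_mad S).trans
      (mul_le_mul_of_nonneg_right hmad (Nat.cast_nonneg S.card))
    exact_mod_cast hS
  exact Nat.sInf_le ((hadm.paletteColorable hΔ).hasStrongColoring (by omega))

end StrongEC
end

section
/- Let Δ ≥ 4 be an integer and let K'_Δ(4) be the graph obtained from the complete graph on vertex set {v₁, v₂, v₃, v₄} by subdividing the edge v₃v₄ with a new vertex u and then attaching Δ − 3 new pendant vertices of degree 1 to each of v₁, v₂, v₃. Then K'_Δ(4) has maximum degree Δ, Mad(K'_Δ(4)) = 14/5, and χ'_s(K'_Δ(4)) = 3Δ − 2. -/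
open scoped Classical

namespace StrongEC

/-- The auxiliary relation for `K'_Δ(4)`.  The five left vertices are
`v₁ = 0, v₂ = 1, v₃ = 2, v₄ = 3` and the subdivision vertex `u = 4`; the edge `v₃v₄` of
`K₄` is subdivided by `u`, and each of `v₁, v₂, v₃` gets `Δ - 3` pendant vertices. -/
def kpRel (Δ : ℕ) :
    (Fin 5 ⊕ Fin 3 × Fin (Δ - 3)) → (Fin 5 ⊕ Fin 3 × Fin (Δ - 3)) → Prop
  | Sum.inl a, Sum.inl b =>
      s(a, b) ∈ ({s(0, 1), s(0, 2), s(0, 3), s(1, 2), s(1, 3), s(2, 4), s(3, 4)} :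
        Finset (Sym2 (Fin 5)))
  | Sum.inl a, Sum.inr p => a.val = p.1.val
  | _, _ => False

/-- The graph `K'_Δ(4)`: `K₄` with the edge `v₃v₄` subdivided by a new vertex `u`, and
`Δ - 3` pendant vertices attached to each of `v₁, v₂, v₃`. -/
def KP (Δ : ℕ) : SimpleGraph (Fin 5 ⊕ Fin 3 × Fin (Δ - 3)) :=
  SimpleGraph.fromRel (kpRel Δ)

/-! Hanging pendant edges on a graph `H` with `mad H ≥ 2` does not change the maximum average
degree, since each new vertex brings at most one new edge. If moreover every edge of `H` is within
distance one of every root, the roots form a clique, and the edges of `H` conflict pairwise, then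
all edges of the extended graph conflict pairwise, so its strong chromatic index is its number of
edges. The graph `K'_Δ(4)` is such an extension of the subdivided `K₄`, whose required properties
are finite checks. -/

variable {V W P : Type*}

section Conflict

variable {G : SimpleGraph V} {H : SimpleGraph W} {e e' : Sym2 V} {k : ℕ}

theorem conflict_iff :
    Conflict G e e' ↔ e ≠ e' ∧ ∃ v ∈ e, ∃ w ∈ e', v = w ∨ G.Adj v w := by
  refine and_congr_right fun _ ↦ ⟨?_, ?_⟩
  · rintro (⟨v, hv, hv'⟩ | ⟨f, hf, ⟨v, hv, hvf⟩, w, hw, hwf⟩)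
    · exact ⟨v, hv, v, hv', Or.inl rfl⟩
    · refine ⟨v, hv, w, hw, or_iff_not_imp_left.2 fun hvw ↦ ?_⟩
      rwa [(Sym2.mem_and_mem_iff hvw).1 ⟨hvf, hwf⟩] at hf
  · rintro ⟨v, hv, w, hw, rfl | hvw⟩
    · exact Or.inl ⟨v, hv, hw⟩
    · exact Or.inr ⟨s(v, w), hvw, ⟨v, hv, Sym2.mem_mk_left v w⟩, w, hw, Sym2.mem_mk_right v w⟩

theorem Conflict.symm (h : Conflict G e e') : Conflict G e' e :=
  ⟨h.1.symm, h.2.imp (fun ⟨v, hv, hv'⟩ ↦ ⟨v, hv', hv⟩) fun ⟨f, hf, hef, hef'⟩ ↦ ⟨f, hf, hef', hef⟩⟩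

instance (G : SimpleGraph V) : Std.Symm (Conflict G) :=
  ⟨fun _ _ ↦ Conflict.symm⟩

theorem Conflict.map (φ : G.Copy H) (h : Conflict G e e') :
    Conflict H (e.map φ) (e'.map φ) := by
  obtain ⟨hne, v, hv, w, hw, hvw⟩ := conflict_iff.1 h
  exact conflict_iff.2 ⟨(Sym2.map.injective φ.injective).ne hne,
    φ v, Sym2.mem_map.2 ⟨v, hv, rfl⟩, φ w, Sym2.mem_map.2 ⟨w, hw, rfl⟩,
    hvw.imp (congrArg φ) φ.toHom.map_adj⟩

theorem hasStrongColoring_ncard_edgeSet (hfin : G.edgeSet.Finite) (hne : G.edgeSet.Nonempty) :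
    HasStrongColoring G G.edgeSet.ncard := by
  have : NeZero G.edgeSet.ncard := ⟨(Set.ncard_pos hfin).2 hne |>.ne'⟩
  have hcard : G.edgeSet.encard ≤ (Set.univ : Set (Fin G.edgeSet.ncard)).encard := by
    simp [hfin.cast_ncard_eq]
  obtain ⟨C, -, hC⟩ := hfin.exists_injOn_of_encard_le hcard
  exact ⟨C, fun e he e' he' h ↦ hC.ne he he' h.1⟩

theorem HasStrongColoring.ncard_edgeSet_le (h : HasStrongColoring G k)
    (hG : G.edgeSet.Pairwise (Conflict G)) : G.edgeSet.ncard ≤ k := by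
  obtain ⟨C, hC⟩ := h
  have hinj : G.edgeSet.InjOn C := fun e he e' he' heq ↦
    by_contra fun hne ↦ hC e he e' he' (hG he he' hne) heq
  simpa using Set.ncard_le_ncard_of_injOn C (fun e _ ↦ Set.mem_univ (C e)) hinj

theorem strongChromaticIndex_eq_ncard_edgeSet (hfin : G.edgeSet.Finite)
    (hne : G.edgeSet.Nonempty) (hG : G.edgeSet.Pairwise (Conflict G)) :
    strongChromaticIndex G = G.edgeSet.ncard :=
  IsLeast.csInf_eq
    ⟨hasStrongColoring_ncard_edgeSet hfin hne, fun _ h ↦ HasStrongColoring.ncard_edgeSet_le h hG⟩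

end Conflict

section Mad

/-- The edges of `G` with both ends in `A`: the edge set of the induced subgraph `G[A]`, kept as a
set of pairs of vertices of `G` in order to match `mad`. -/
def edgesWithin (G : SimpleGraph V) (A : Finset V) : Set (Sym2 V) :=
  {e ∈ G.edgeSet | ∀ v ∈ e, v ∈ A}

theorem finite_edgesWithin (G : SimpleGraph V) (A : Finset V) : (edgesWithin G A).Finite :=
  A.sym2.finite_toSet.subset fun _ he ↦ Finset.mem_sym2_iff.2 he.2

theorem edgesWithin_empty (G : SimpleGraph V) : edgesWithin G ∅ = ∅ :=
  Set.eq_empty_of_forall_notMem fun e he ↦ absurd (he.2 _ e.out_fst_mem) (Finset.notMem_empty _)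

theorem mad_nonneg (G : SimpleGraph V) : 0 ≤ mad G :=
  Real.sSup_nonneg <| by
    rintro _ ⟨A, -, rfl⟩
    positivity

theorem two_mul_ncard_edgesWithin_le [Finite V] (G : SimpleGraph V) (A : Finset V) :
    2 * ((edgesWithin G A).ncard : ℝ) ≤ mad G * A.card := by
  obtain rfl | hA := A.eq_empty_or_nonempty
  · simp [edgesWithin_empty]
  have hbdd : BddAbove {x : ℝ | ∃ B : Finset V, B.Nonempty ∧
      x = 2 * ((edgesWithin G B).ncard : ℝ) / (B.card : ℝ)} := by
    refine (Set.finite_range fun B : Finset V ↦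
      2 * ((edgesWithin G B).ncard : ℝ) / (B.card : ℝ)).bddAbove.mono ?_
    rintro _ ⟨B, -, rfl⟩
    exact Set.mem_range_self B
  have hpos : (0 : ℝ) < A.card := mod_cast hA.card_pos
  exact (div_le_iff₀ hpos).1 (le_csSup hbdd ⟨A, hA, rfl⟩)

theorem mad_le {G : SimpleGraph V} {c : ℝ} (hc : 0 ≤ c)
    (h : ∀ A : Finset V, 2 * ((edgesWithin G A).ncard : ℝ) ≤ c * A.card) : mad G ≤ c := by
  refine Real.sSup_le ?_ hc
  rintro _ ⟨A, hA, rfl⟩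
  have hpos : (0 : ℝ) < A.card := mod_cast hA.card_pos
  exact (div_le_iff₀ hpos).2 (h A)

theorem mad_le_of_copy [Finite W] {G : SimpleGraph V} {H : SimpleGraph W} (φ : G.Copy H) :
    mad G ≤ mad H := by
  refine mad_le (mad_nonneg H) fun A ↦ ?_
  have hmaps : ∀ e ∈ edgesWithin G A, e.map φ ∈ edgesWithin H (A.map φ.toEmbedding) := by
    refine fun e he ↦ ⟨φ.toHom.map_mem_edgeSet he.1, fun w hw ↦ ?_⟩
    obtain ⟨v, hv, rfl⟩ := Sym2.mem_map.1 hw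
    exact Finset.mem_map_of_mem φ.toEmbedding (he.2 v hv)
  have hle : (edgesWithin G A).ncard ≤ (edgesWithin H (A.map φ.toEmbedding)).ncard :=
    Set.ncard_le_ncard_of_injOn _ hmaps (Sym2.map.injective φ.injective).injOn
      (finite_edgesWithin _ _)
  calc 2 * ((edgesWithin G A).ncard : ℝ)
      ≤ 2 * ((edgesWithin H (A.map φ.toEmbedding)).ncard : ℝ) := by gcongr
    _ ≤ mad H * A.card := by
      simpa using two_mul_ncard_edgesWithin_le H (A.map φ.toEmbedding)

end Mad

section AttachPendants

/-- The graph obtained from `H` by adding the elements of `P` as new vertices of degree one, the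
new vertex `p` being joined to its root `f p`. -/
def attachPendants (H : SimpleGraph W) (f : P → W) : SimpleGraph (W ⊕ P) where
  Adj
    | .inl v, .inl w => H.Adj v w
    | .inl v, .inr p => v = f p
    | .inr p, .inl v => v = f p
    | .inr _, .inr _ => False
  symm := ⟨by rintro (v | p) (w | q) h; exacts [H.adj_symm h, h, h, h]⟩
  loopless := ⟨by rintro (v | p) h; exacts [H.irrefl h, h]⟩

/-- The edge of `attachPendants H f` joining the new vertex `p` to its root. -/
def pendantEdge (f : P → W) (p : P) : Sym2 (W ⊕ P) :=
  s(.inl (f p), .inr p)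

/-- The inclusion of `H` into `attachPendants H f`. -/
def attachPendantsInl (H : SimpleGraph W) (f : P → W) : H.Copy (attachPendants H f) :=
  ⟨⟨.inl, id⟩, Sum.inl_injective⟩

variable {H : SimpleGraph W} {f : P → W}

@[simp]
theorem attachPendants_adj_inl_inl {v w : W} :
    (attachPendants H f).Adj (.inl v) (.inl w) ↔ H.Adj v w :=
  Iff.rfl

@[simp]
theorem attachPendants_adj_inl_inr {v : W} {p : P} :
    (attachPendants H f).Adj (.inl v) (.inr p) ↔ v = f p :=
  Iff.rfl

@[simp]
theorem attachPendants_adj_inr_inl {v : W} {p : P} :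
    (attachPendants H f).Adj (.inr p) (.inl v) ↔ v = f p :=
  Iff.rfl

@[simp]
theorem not_attachPendants_adj_inr_inr {p q : P} :
    ¬(attachPendants H f).Adj (.inr p) (.inr q) :=
  id

theorem pendantEdge_injective (f : P → W) : Function.Injective (pendantEdge f) := by
  intro p q h
  simp_all [pendantEdge]

theorem map_inl_ne_pendantEdge (e : Sym2 W) (p : P) : e.map .inl ≠ pendantEdge f p := by
  intro h
  have hp : .inr p ∈ e.map (.inl : W → W ⊕ P) := h ▸ Sym2.mem_mk_right _ _
  simp at hp

theorem edgeSet_attachPendants (H : SimpleGraph W) (f : P → W) :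
    (attachPendants H f).edgeSet = Sym2.map .inl '' H.edgeSet ∪ Set.range (pendantEdge f) := by
  ext e
  constructor
  · induction e with | _ x y
    rcases x with v | p <;> rcases y with w | q <;> intro h
    · exact Or.inl ⟨s(v, w), h, rfl⟩
    · obtain rfl : v = f q := h
      exact Or.inr ⟨q, rfl⟩
    · obtain rfl : w = f p := h
      exact Or.inr ⟨p, Sym2.eq_swap⟩
    · exact h.elim
  · rintro (⟨e, he, rfl⟩ | ⟨p, rfl⟩)
    · exact (attachPendantsInl H f).toHom.map_mem_edgeSet he
    · exact (rfl : f p = f p)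

theorem ncard_edgeSet_attachPendants [Finite W] [Finite P] (H : SimpleGraph W) (f : P → W) :
    (attachPendants H f).edgeSet.ncard = H.edgeSet.ncard + Nat.card P := by
  have hdisj : Disjoint (Sym2.map .inl '' H.edgeSet) (Set.range (pendantEdge f)) := by
    rw [Set.disjoint_left]
    rintro _ ⟨e, -, rfl⟩ ⟨p, hp⟩
    exact map_inl_ne_pendantEdge e p hp.symm
  rw [edgeSet_attachPendants, Set.ncard_union_eq hdisj,
    Set.ncard_image_of_injective _ (Sym2.map.injective Sum.inl_injective),
    Set.ncard_range_of_injective (pendantEdge_injective f)]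

theorem degree_attachPendants_inl [Fintype P] [DecidableEq W] (v : W)
    [Fintype (H.neighborSet v)] [Fintype ((attachPendants H f).neighborSet (.inl v))] :
    (attachPendants H f).degree (.inl v) = H.degree v + Finset.card {p | f p = v} := by
  have hnbr : (attachPendants H f).neighborFinset (.inl v) =
      (H.neighborFinset v).disjSum {p | f p = v} := by
    ext (w | p) <;> simp [eq_comm]
  rw [← SimpleGraph.card_neighborFinset_eq_degree, hnbr, Finset.card_disjSum,
    SimpleGraph.card_neighborFinset_eq_degree]

theorem degree_attachPendants_inr (p : P)
    [Fintype ((attachPendants H f).neighborSet (.inr p))] :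
    (attachPendants H f).degree (.inr p) = 1 := by
  have hnbr : (attachPendants H f).neighborFinset (.inr p) = {.inl (f p)} := by
    ext (w | q) <;> simp
  rw [← SimpleGraph.card_neighborFinset_eq_degree, hnbr, Finset.card_singleton]

theorem edgesWithin_attachPendants_subset (H : SimpleGraph W) (f : P → W)
    (A : Finset (W ⊕ P)) :
    edgesWithin (attachPendants H f) A ⊆
      Sym2.map .inl '' edgesWithin H A.toLeft ∪ pendantEdge f '' A.toRight := by
  rintro _ ⟨he, hA⟩
  rw [edgeSet_attachPendants] at he
  obtain ⟨e, he, rfl⟩ | ⟨p, rfl⟩ := he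
  · have hleft : ∀ v ∈ e, v ∈ A.toLeft := fun v hv ↦
      Finset.mem_toLeft.2 <| hA _ <| Sym2.mem_map.2 ⟨v, hv, rfl⟩
    exact Or.inl ⟨e, ⟨he, hleft⟩, rfl⟩
  · exact Or.inr ⟨p, Finset.mem_toRight.2 <| hA _ <| Sym2.mem_mk_right _ _, rfl⟩

theorem ncard_edgesWithin_attachPendants_le (H : SimpleGraph W) (f : P → W)
    (A : Finset (W ⊕ P)) :
    (edgesWithin (attachPendants H f) A).ncard ≤
      (edgesWithin H A.toLeft).ncard + A.toRight.card := by
  have hfin := ((finite_edgesWithin H A.toLeft).image (Sym2.map (.inl : W → W ⊕ P))).union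
    (A.toRight.finite_toSet.image (pendantEdge f))
  refine (Set.ncard_le_ncard (edgesWithin_attachPendants_subset H f A) hfin).trans <|
    (Set.ncard_union_le _ _).trans_eq ?_
  rw [Set.ncard_image_of_injective _ (Sym2.map.injective Sum.inl_injective),
    Set.ncard_image_of_injective _ (pendantEdge_injective f), Set.ncard_coe_finset]

theorem mad_attachPendants [Finite W] [Finite P] (f : P → W) (hH : 2 ≤ mad H) :
    mad (attachPendants H f) = mad H := by
  refine le_antisymm (mad_le (mad_nonneg H) fun A ↦ ?_) (mad_le_of_copy (attachPendantsInl H f))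
  calc 2 * ((edgesWithin (attachPendants H f) A).ncard : ℝ)
      ≤ 2 * ((edgesWithin H A.toLeft).ncard + A.toRight.card) := by
        gcongr
        exact_mod_cast ncard_edgesWithin_attachPendants_le H f A
    _ = 2 * (edgesWithin H A.toLeft).ncard + 2 * A.toRight.card := mul_add _ _ _
    _ ≤ mad H * A.toLeft.card + mad H * A.toRight.card := by
        exact add_le_add (two_mul_ncard_edgesWithin_le H A.toLeft) (by gcongr)
    _ = mad H * A.card := by
        rw [← A.card_toLeft_add_card_toRight]
        push_cast
        ring

theorem pairwise_conflict_attachPendants (hH : H.edgeSet.Pairwise (Conflict H))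
    (hroot : ∀ e ∈ H.edgeSet, ∀ p, ∃ v ∈ e, v = f p ∨ H.Adj v (f p))
    (hclique : H.IsClique (Set.range f)) :
    (attachPendants H f).edgeSet.Pairwise (Conflict (attachPendants H f)) := by
  rw [edgeSet_attachPendants, Set.pairwise_union_of_symm]
  refine ⟨?_, ?_, ?_⟩
  · rintro _ ⟨e, he, rfl⟩ _ ⟨e', he', rfl⟩ hne
    exact (hH he he' fun h ↦ hne (h ▸ rfl)).map (attachPendantsInl H f)
  · rintro _ ⟨p, rfl⟩ _ ⟨q, rfl⟩ hne
    exact conflict_iff.2 ⟨hne, _, Sym2.mem_mk_left _ _, _, Sym2.mem_mk_left _ _,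
      or_iff_not_imp_left.2 fun h ↦
        hclique ⟨p, rfl⟩ ⟨q, rfl⟩ fun hpq ↦ h (congrArg Sum.inl hpq)⟩
  · rintro _ ⟨e, he, rfl⟩ _ ⟨p, rfl⟩ hne
    obtain ⟨v, hv, hvp⟩ := hroot e he p
    exact conflict_iff.2 ⟨hne, .inl v, Sym2.mem_map.2 ⟨v, hv, rfl⟩, .inl (f p),
      Sym2.mem_mk_left _ _, hvp.imp (congrArg Sum.inl) id⟩

end AttachPendants

section SubdividedK4

/-- The edges of `subdividedK4`, as a finset so that its properties are decidable. -/
def subdividedK4Edges : Finset (Sym2 (Fin 5)) :=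
  {s(0, 1), s(0, 2), s(0, 3), s(1, 2), s(1, 3), s(2, 4), s(3, 4)}

/-- The graph `K₄` with one edge subdivided, with vertices `v₁, v₂, v₃, v₄, u` numbered from `0`
to `4` as in `kpRel`. -/
def subdividedK4 : SimpleGraph (Fin 5) :=
  SimpleGraph.fromEdgeSet subdividedK4Edges

instance : DecidableRel subdividedK4.Adj := fun a b ↦
  decidable_of_iff (s(a, b) ∈ subdividedK4Edges ∧ a ≠ b) Iff.rfl

theorem edgeSet_subdividedK4 : subdividedK4.edgeSet = subdividedK4Edges := by
  have h : ∀ e ∈ subdividedK4Edges, ¬e.IsDiag := by decide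
  rw [subdividedK4, SimpleGraph.edgeSet_fromEdgeSet, sdiff_eq_left, Set.disjoint_left]
  exact h

theorem pairwise_conflict_subdividedK4 :
    subdividedK4.edgeSet.Pairwise (Conflict subdividedK4) := by
  have h : ∀ e ∈ subdividedK4Edges, ∀ e' ∈ subdividedK4Edges,
      ∃ v ∈ e, ∃ w ∈ e', v = w ∨ subdividedK4.Adj v w := by decide
  rw [edgeSet_subdividedK4]
  exact fun e he e' he' hne ↦ conflict_iff.2 ⟨hne, h e he e' he'⟩

theorem mad_subdividedK4 : mad subdividedK4 = 14 / 5 := by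
  have hedges (A : Finset (Fin 5)) :
      (edgesWithin subdividedK4 A).ncard = (subdividedK4Edges.filter (· ∈ A.sym2)).card := by
    rw [← Set.ncard_coe_finset]
    congr 1
    ext e
    simp [edgesWithin, edgeSet_subdividedK4]
  apply le_antisymm
  · have hdensity : ∀ A : Finset (Fin 5),
        5 * (subdividedK4Edges.filter (· ∈ A.sym2)).card ≤ 7 * A.card := by decide
    refine mad_le (by norm_num) fun A ↦ ?_
    have hA : (5 * (edgesWithin subdividedK4 A).ncard : ℝ) ≤ 7 * A.card :=
      mod_cast hedges A ▸ hdensity A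
    linarith
  · have huniv : (edgesWithin subdividedK4 Finset.univ).ncard = 7 := by
      rw [hedges]
      decide
    have h := two_mul_ncard_edgesWithin_le subdividedK4 Finset.univ
    rw [huniv, Finset.card_univ, Fintype.card_fin] at h
    push_cast at h
    linarith

end SubdividedK4

section KP

/-- The vertex `v₁`, `v₂` or `v₃` to which a pendant vertex of `K'_Δ(4)` is attached. -/
def root {n : ℕ} (p : Fin 3 × Fin n) : Fin 5 :=
  p.1.castLE (by decide)

theorem KP_eq_attachPendants (Δ : ℕ) : KP Δ = attachPendants subdividedK4 root := by
  ext x y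
  rcases x with a | p <;> rcases y with b | q
  · change _ ∧ (s(a, b) ∈ subdividedK4Edges ∨ s(b, a) ∈ subdividedK4Edges) ↔
      s(a, b) ∈ subdividedK4Edges ∧ a ≠ b
    rw [Sym2.eq_swap (a := b), or_self, and_comm, Sum.inl_injective.ne_iff]
  all_goals simp [KP, kpRel, root, Fin.ext_iff]

theorem card_root_fiber_le (n : ℕ) (v : Fin 5) :
    Finset.card {p : Fin 3 × Fin n | root p = v} ≤ n := by
  have hinj : Set.InjOn Prod.snd {p : Fin 3 × Fin n | root p = v} := by
    intro p hp q hq hpq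
    have hfst : root p = root q := hp.trans hq.symm
    exact Prod.ext (Fin.castLE_injective _ hfst) hpq
  simpa using Finset.card_le_card_of_injOn Prod.snd (t := (Finset.univ : Finset (Fin n)))
    (fun _ _ ↦ Finset.mem_univ _) (by simpa using hinj)

theorem card_root_fiber_zero (n : ℕ) :
    Finset.card {p : Fin 3 × Fin n | root p = 0} = n := by
  have hfiber : ({p : Fin 3 × Fin n | root p = 0} : Finset _) = {0} ×ˢ Finset.univ := by
    ext ⟨i, j⟩
    have hi : root (i, j) = 0 ↔ i = 0 := (Fin.castLE_injective _).eq_iff' rfl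
    simp only [Finset.mem_filter_univ, Finset.mem_product, Finset.mem_singleton, Finset.mem_univ,
      and_true, hi]
  simp [hfiber]

theorem maxDegree_KP (Δ : ℕ) : (KP Δ).maxDegree = 3 + (Δ - 3) := by
  rw [KP_eq_attachPendants]
  have hdegree : ∀ v, subdividedK4.degree v ≤ 3 := by decide
  have hdegree_zero : subdividedK4.degree 0 = 3 := by decide
  apply le_antisymm
  · refine SimpleGraph.maxDegree_le_of_forall_degree_le _ _ ?_
    rintro (v | p)
    · rw [degree_attachPendants_inl]
      exact add_le_add (hdegree v) (card_root_fiber_le _ v)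
    · rw [degree_attachPendants_inr]
      omega
  · calc 3 + (Δ - 3) = (attachPendants subdividedK4 root).degree (.inl 0) := by
          rw [degree_attachPendants_inl, hdegree_zero, card_root_fiber_zero]
      _ ≤ _ := SimpleGraph.degree_le_maxDegree _ _

theorem mad_KP (Δ : ℕ) : mad (KP Δ) = 14 / 5 := by
  rw [KP_eq_attachPendants, mad_attachPendants _ (by norm_num [mad_subdividedK4]),
    mad_subdividedK4]

theorem ncard_edgeSet_KP (Δ : ℕ) : (KP Δ).edgeSet.ncard = 7 + 3 * (Δ - 3) := by
  have hcard : subdividedK4Edges.card = 7 := by decide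
  rw [KP_eq_attachPendants, ncard_edgeSet_attachPendants, edgeSet_subdividedK4,
    Set.ncard_coe_finset, hcard]
  simp

theorem pairwise_conflict_KP (Δ : ℕ) : (KP Δ).edgeSet.Pairwise (Conflict (KP Δ)) := by
  have hroot : ∀ e ∈ subdividedK4Edges, ∀ i : Fin 3,
      ∃ v ∈ e, v = i.castLE (by decide) ∨ subdividedK4.Adj v (i.castLE (by decide)) := by decide
  have hclique : ∀ i j : Fin 3, i ≠ j →
      subdividedK4.Adj (i.castLE (by decide)) (j.castLE (by decide)) := by decide
  rw [KP_eq_attachPendants]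
  refine pairwise_conflict_attachPendants pairwise_conflict_subdividedK4 ?_ ?_
  · rw [edgeSet_subdividedK4]
    exact fun e he p ↦ hroot e he p.1
  · rintro _ ⟨p, rfl⟩ _ ⟨q, rfl⟩ hne
    exact hclique p.1 q.1 fun h ↦ hne (congrArg (Fin.castLE _) h)

theorem strongChromaticIndex_KP (Δ : ℕ) : strongChromaticIndex (KP Δ) = 7 + 3 * (Δ - 3) := by
  have hne : (KP Δ).edgeSet.Nonempty :=
    Set.nonempty_of_ncard_ne_zero (by rw [ncard_edgeSet_KP]; omega)
  rw [strongChromaticIndex_eq_ncard_edgeSet (Set.toFinite _) hne (pairwise_conflict_KP Δ),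
    ncard_edgeSet_KP]

end KP

/-- For `Δ ≥ 4`, the graph `K'_Δ(4)` has maximum degree `Δ`, maximum average degree
`14/5`, and strong chromatic index `3Δ - 2`. -/
theorem KP_properties (Δ : ℕ) (hΔ : 4 ≤ Δ) :
    (KP Δ).maxDegree = Δ ∧ mad (KP Δ) = 14 / 5 ∧
      strongChromaticIndex (KP Δ) = 3 * Δ - 2 := by
  refine ⟨?_, mad_KP Δ, ?_⟩
  · rw [maxDegree_KP]
    omega
  · rw [strongChromaticIndex_KP]
    omega

end StrongEC
end
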